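/- There exists a family of total Boolean functions f (one for each input size, with input size growing to infinity) such that R(f) = Ω̃(Q(f)^{2.5}), i.e., the bounded-error randomized query complexity of f is at least the 2.5-th power of its bounded-error quantum query complexity, up to factors polylogarithmic in the input size. -/

import Mathlib

open scoped BigOperators ENNReal

namespace QC

/-! ### Inputs and partial functions -/

/-- An input assigns to each index `i` a symbol from the alphabet `Fin (α i)`. -/
abbrev Input (ι : Type) (α : ι → ℕ) := ∀ i : ι, Fin (α i)

/-- A (possibly partial) Boolean-valued query function; `none` means the input
is outside the promise/domain. -/
abbrev PartialFn (ι : Type) (α : ι → ℕ) := Input ι α → Option Bool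

/-- A total function has every input in its domain. -/
def TotalFn {ι : Type} {α : ι → ℕ} (f : PartialFn ι α) : Prop := ∀ x, f x ≠ none

/-- Classical truth value of a proposition, as a `Bool`. -/
noncomputable def ofProp (P : Prop) : Bool := @decide P (Classical.propDecidable P)

/-! ### Decision trees and classical query complexity -/

/-- Decision trees over index set `ι` with alphabets `α` and leaf labels `L`. -/
inductive DTree (ι : Type) (α : ι → ℕ) (L : Type) : Type
  | leaf : L → DTree ι α L
  | node : (i : ι) → (Fin (α i) → DTree ι α L) → DTree ι α L

namespace DTree

variable {ι : Type} {α : ι → ℕ} {L : Type}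

/-- Evaluate a decision tree on an input. -/
def eval : DTree ι α L → Input ι α → L
  | leaf b, _ => b
  | node i child, x => eval (child (x i)) x

/-- The number of queries the tree makes on a given input. -/
def cost : DTree ι α L → Input ι α → ℕ
  | leaf _, _ => 0
  | node i child, x => cost (child (x i)) x + 1

/-- The depth (worst-case number of queries) of a decision tree. -/
def depth : DTree ι α L → ℕ
  | leaf _ => 0
  | node _ child => (Finset.univ.sup fun a => depth (child a)) + 1

end DTree

variable {ι : Type} {α : ι → ℕ}

/-- Deterministic query complexity `D(f)`. -/
noncomputable def Dq (f : PartialFn ι α) : ℕ :=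
  sInf {d | ∃ T : DTree ι α (Option Bool), T.depth ≤ d ∧
    ∀ x b, f x = some b → T.eval x = some b}

/-- Bounded-error randomized query complexity `R(f)` (worst-case queries,
success probability at least 2/3 on every domain input). -/
noncomputable def Rq (f : PartialFn ι α) : ℕ :=
  sInf {d | ∃ μ : PMF (DTree ι α (Option Bool)),
    (∀ T ∈ μ.support, T.depth ≤ d) ∧
    ∀ x b, f x = some b → 2/3 ≤ μ.toOuterMeasure {T | T.eval x = some b}}

/-- Zero-error randomized query complexity `R₀(f)` (worst-case queries): the
algorithm never errs, and outputs `none` ("don't know") with probability at most 1/2. -/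
noncomputable def R0q (f : PartialFn ι α) : ℕ :=
  sInf {d | ∃ μ : PMF (DTree ι α (Option Bool)),
    (∀ T ∈ μ.support, T.depth ≤ d) ∧
    (∀ T ∈ μ.support, ∀ x b, f x = some b → T.eval x = some b ∨ T.eval x = none) ∧
    ∀ x b, f x = some b → μ.toOuterMeasure {T | T.eval x = none} ≤ 1/2}

/-- Zero-error randomized query complexity, measured by the worst-case *expected*
number of queries over domain inputs (value in `ℝ≥0∞`). -/
noncomputable def R0expq (f : PartialFn ι α) : ℝ≥0∞ :=
  sInf {c | ∃ μ : PMF (DTree ι α (Option Bool)),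
    (∀ T ∈ μ.support, ∀ x b, f x = some b → T.eval x = some b ∨ T.eval x = none) ∧
    (∀ x b, f x = some b → μ.toOuterMeasure {T | T.eval x = none} ≤ 1/2) ∧
    (∀ x b, f x = some b → ∑' T, μ T * (T.cost x : ℝ≥0∞) ≤ c)}

/-- One-sided-error randomized query complexity `R₁(f)`: accept every 1-input with
probability at least 2/3, and never accept a 0-input. -/
noncomputable def R1q (f : PartialFn ι α) : ℕ :=
  sInf {d | ∃ μ : PMF (DTree ι α (Option Bool)),
    (∀ T ∈ μ.support, T.depth ≤ d) ∧
    (∀ x, f x = some true → 2/3 ≤ μ.toOuterMeasure {T | T.eval x = some true}) ∧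
    (∀ x, f x = some false → ∀ T ∈ μ.support, T.eval x ≠ some true)}

/-! ### Quantum query complexity -/

/-- The index set of the state space of a quantum query algorithm:
a query register `Σ i, Fin (α i)` together with a workspace register `Fin W`. -/
abbrev QIdx (ι : Type) (α : ι → ℕ) (W : ℕ) := (Σ i : ι, Fin (α i)) × Fin W

variable [Fintype ι] [DecidableEq ι]

/-- The standard query oracle for input `x`: the permutation matrix sending the basis
vector `|i,a⟩|w⟩` to `|i, a + x i⟩|w⟩` (addition modulo `α i`). -/
noncomputable def oracleMatrix (W : ℕ) (x : Input ι α) :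
    Matrix (QIdx ι α W) (QIdx ι α W) ℂ :=
  Matrix.of fun j j' =>
    if j.2 = j'.2 ∧ j.1 = ⟨j'.1.1, j'.1.2 + x j'.1.1⟩ then 1 else 0

/-- The product `U_T · O · U_{T-1} · O ⋯ O · U_0` of unitaries interleaved with oracle
calls, defining a `T`-query quantum algorithm. -/
noncomputable def qProd {τ : Type} [Fintype τ] (U : ℕ → Matrix τ τ ℂ) (Ox : Matrix τ τ ℂ) :
    ℕ → Matrix τ τ ℂ
  | 0 => U 0
  | t + 1 => U (t + 1) * Ox * qProd U Ox t

/-- A quantum query algorithm: a number `T` of queries, a workspace size `W`,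
unitaries `U 0, …, U T`, a unit initial state, and a measurement assigning to each
basis state an output in `Option Bool` (`none` = "don't know"). -/
structure QAlg (ι : Type) [Fintype ι] [DecidableEq ι] (α : ι → ℕ) where
  T : ℕ
  W : ℕ
  U : ℕ → Matrix (QIdx ι α W) (QIdx ι α W) ℂ
  unitary : ∀ t, U t ∈ Matrix.unitaryGroup (QIdx ι α W) ℂ
  init : QIdx ι α W → ℂ
  init_norm : ∑ j, ‖init j‖ ^ 2 = 1
  out : QIdx ι α W → Option Bool

/-- The final state of a quantum algorithm on input `x`. -/
noncomputable def QAlg.finalState (A : QAlg ι α) (x : Input ι α) : QIdx ι α A.W → ℂ :=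
  (qProd A.U (oracleMatrix A.W x) A.T).mulVec A.init

/-- The probability that the algorithm outputs `v` on input `x`. -/
noncomputable def QAlg.outProb (A : QAlg ι α) (x : Input ι α) (v : Option Bool) : ℝ :=
  ∑ j, if A.out j = v then ‖A.finalState x j‖ ^ 2 else 0

/-- Bounded-error quantum query complexity `Q(f)`. -/
noncomputable def Qq (f : PartialFn ι α) : ℕ :=
  sInf {d | ∃ A : QAlg ι α, A.T ≤ d ∧
    ∀ x b, f x = some b → (2 : ℝ)/3 ≤ A.outProb x (some b)}

/-- Exact quantum query complexity `Q_E(f)`. -/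
noncomputable def QEq (f : PartialFn ι α) : ℕ :=
  sInf {d | ∃ A : QAlg ι α, A.T ≤ d ∧
    ∀ x b, f x = some b → A.outProb x (some b) = 1}

/-- One-sided-error quantum query complexity `Q₁(f)`. -/
noncomputable def Q1q (f : PartialFn ι α) : ℕ :=
  sInf {d | ∃ A : QAlg ι α, A.T ≤ d ∧
    (∀ x, f x = some true → (2 : ℝ)/3 ≤ A.outProb x (some true)) ∧
    (∀ x, f x = some false → A.outProb x (some true) = 0)}

/-- Zero-error quantum query complexity `Q₀(f)`: never wrong, outputs `none`
with probability at most 1/2. -/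
noncomputable def Q0q (f : PartialFn ι α) : ℕ :=
  sInf {d | ∃ A : QAlg ι α, A.T ≤ d ∧
    ∀ x b, f x = some b → A.outProb x (some !b) = 0 ∧ A.outProb x none ≤ 1/2}

/-! ### Certificate complexity -/

/-- A partial assignment `ρ` is consistent with an input `x`. -/
def Consistent (ρ : ∀ i : ι, Option (Fin (α i))) (x : Input ι α) : Prop :=
  ∀ i v, ρ i = some v → x i = v

/-- The number of fixed positions of a partial assignment. -/
noncomputable def certSize (ρ : ∀ i : ι, Option (Fin (α i))) : ℕ :=
  Nat.card {i // (ρ i).isSome}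

/-- The certificate complexity of `f` at input `x`: the least size of a partial
assignment consistent with `x` forcing the value `f x` on all domain inputs. -/
noncomputable def CxAt (f : PartialFn ι α) (x : Input ι α) : ℕ :=
  sInf {s | ∃ ρ, Consistent ρ x ∧ (∀ y, Consistent ρ y → f y = none ∨ f y = f x) ∧
    certSize ρ ≤ s}

/-- Certificate complexity `C(f)`. -/
noncomputable def Cq (f : PartialFn ι α) : ℕ :=
  sSup {s | ∃ x, f x ≠ none ∧ s = CxAt f x}

/-- One-certificate complexity `C¹(f)`. -/
noncomputable def C1q (f : PartialFn ι α) : ℕ :=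
  sSup {s | ∃ x, f x = some true ∧ s = CxAt f x}

/-! ### Polynomial degree -/

/-- Exact polynomial degree `deg(f)`: least degree of a real polynomial agreeing
with `f` (as a 0/1 function of the numerical values of the input symbols) on its domain. -/
noncomputable def degq (f : PartialFn ι α) : ℕ :=
  sInf {d | ∃ p : MvPolynomial ι ℝ, p.totalDegree ≤ d ∧
    ∀ x b, f x = some b →
      MvPolynomial.eval (fun i => ((x i : ℕ) : ℝ)) p = if b then 1 else 0}

/-- Approximate polynomial degree `adeg(f)`: least degree of a real polynomial
approximating `f` pointwise to error 1/3 on its domain. -/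
noncomputable def adegq (f : PartialFn ι α) : ℕ :=
  sInf {d | ∃ p : MvPolynomial ι ℝ, p.totalDegree ≤ d ∧
    ∀ x b, f x = some b →
      |MvPolynomial.eval (fun i => ((x i : ℕ) : ℝ)) p - if b then 1 else 0| ≤ 1/3}

end QC
/-! ### Certifying functions and cheat sheets -/

namespace QC

variable {ι : Type} {α : ι → ℕ}

/-- `φ` is a certifying function for the partial function `f`: it accepts `(x, y)`
only when `x` is in the domain of `f` and the first bit of `y` equals `f x`; every
domain input has some accepted certificate `y`; and the all-zeros `y` is never accepted. -/
def IsCertifying {k : ℕ} (hk : 0 < k) (f : PartialFn ι α)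
    (φ : Input ι α → (Fin k → Fin 2) → Bool) : Prop :=
  (∀ x y, f x = none → φ x y = false) ∧
  (∀ x y b, f x = some b → y ⟨0, hk⟩ ≠ (if b then 1 else 0) → φ x y = false) ∧
  (∀ x b, f x = some b → ∃ y, φ x y = true) ∧
  (∀ x, φ x (fun _ => 0) = false)

/-- The index set of the input to a certifying function, viewed as a query function:
the original input together with `k` certificate bits. -/
abbrev CertIdx (ι : Type) (k : ℕ) := ι ⊕ Fin k

/-- Alphabets for `CertIdx`. -/
def certAlphabet (α : ι → ℕ) (k : ℕ) : CertIdx ι k → ℕ := Sum.elim α fun _ => 2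

/-- A certifying function viewed as a total query function on input ⊕ certificate bits. -/
def certFn {k : ℕ} (φ : Input ι α → (Fin k → Fin 2) → Bool) :
    PartialFn (CertIdx ι k) (certAlphabet α k) :=
  fun z => some (φ (fun i => z (Sum.inl i)) (fun q => z (Sum.inr q)))

/-- The index set of the input to the cheat sheet version of a function: `c` copies of
the original input, followed by `2^c` cells each holding `c` certificate strings of `k` bits. -/
abbrev CSIdx (ι : Type) (c k : ℕ) := (Fin c × ι) ⊕ (Fin (2 ^ c) × Fin c × Fin k)

/-- Alphabets for `CSIdx`. -/
def csAlphabet (α : ι → ℕ) (c k : ℕ) : CSIdx ι c k → ℕ :=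
  Sum.elim (fun p => α p.2) fun _ => 2

/-- The `i`-th copy of the original input inside a cheat sheet input. -/
def csX {c k : ℕ} (z : Input (CSIdx ι c k) (csAlphabet α c k)) (i : Fin c) : Input ι α :=
  fun p => z (Sum.inl (i, p))

/-- The `i`-th certificate string in the `ℓ`-th cheat sheet cell. -/
def csY {c k : ℕ} (z : Input (CSIdx ι c k) (csAlphabet α c k)) (ℓ : Fin (2 ^ c))
    (i : Fin c) : Fin k → Fin 2 :=
  fun q => z (Sum.inr (ℓ, i, q))

/-- The number in `[2^c]` whose binary representation is the bit string `b`. -/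
def binToFin (c : ℕ) (b : Fin c → Bool) : Fin (2 ^ c) :=
  ⟨(∑ i, if b i then 2 ^ (i : ℕ) else 0) % 2 ^ c, Nat.mod_lt _ (by positivity)⟩

/-- The defining condition of the cheat sheet function: all `c` copies lie in the
domain of `f`, and the cell addressed by their `f`-values holds certificates
accepted by `φ` for each copy. -/
def CSCond {c k : ℕ} (f : PartialFn ι α) (φ : Input ι α → (Fin k → Fin 2) → Bool)
    (z : Input (CSIdx ι c k) (csAlphabet α c k)) : Prop :=
  ∃ bvec : Fin c → Bool, (∀ i, f (csX z i) = some (bvec i)) ∧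
    ∀ i, φ (csX z i) (csY z (binToFin c bvec) i) = true

/-- The cheat sheet version of `f` with respect to the certifying function `φ`,
with `c` copies of `f`. It is a total function. -/
noncomputable def cheatSheet (c : ℕ) {k : ℕ} (f : PartialFn ι α)
    (φ : Input ι α → (Fin k → Fin 2) → Bool) :
    PartialFn (CSIdx ι c k) (csAlphabet α c k) :=
  fun z => some (ofProp (CSCond f φ z))

/-! ### OR / AND compositions -/

/-- The `OR` function on `m` bits (alphabet `Fin 2`). -/
def orFn (m : ℕ) (z : Fin m → Fin 2) : Fin 2 := if ∃ j, z j = 1 then 1 else 0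

/-- The `AND` function on `m` bits (alphabet `Fin 2`). -/
def andFn (m : ℕ) (z : Fin m → Fin 2) : Fin 2 := if ∀ j, z j = 1 then 1 else 0

/-- The composition `f ∘ OR_m`. -/
def composeOr {n : ℕ} (f : PartialFn (Fin n) fun _ => 2) (m : ℕ) :
    PartialFn (Fin n × Fin m) (fun _ => 2) :=
  fun z => f fun i => orFn m fun j => z (i, j)

/-- The composition `f ∘ AND_m ∘ OR_m`. -/
def composeAndOr {n : ℕ} (f : PartialFn (Fin n) fun _ => 2) (m : ℕ) :
    PartialFn (Fin n × Fin m × Fin m) (fun _ => 2) :=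
  fun z => f fun i => andFn m fun j => orFn m fun l => z (i, j, l)

/-! ### k-SUM, Block k-sum, BKK and its recursive composition -/

/-- The `k`-SUM function on `n` numbers from `[q]`: is there a set of `k` of the
input numbers summing to `0` modulo `q`? -/
noncomputable def kSUMfn (n q k : ℕ) : PartialFn (Fin n) (fun _ => q) :=
  fun x => some (ofProp (∃ S : Finset (Fin n), S.card = k ∧
    (∑ i ∈ S, (x i : ℕ)) % q = 0))

/-- Number of ones in a block of bits. -/
def onesCount {B : ℕ} (z : Fin B → Fin 2) : ℕ := (Finset.univ.filter fun j => z j = 1).card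

/-- The number encoded in binary by a block of bits. -/
def blockVal {B : ℕ} (z : Fin B → Fin 2) : ℕ := ∑ j, if z j = 1 then 2 ^ (j : ℕ) else 0

/-- A block is balanced if it has an equal number of 0s and 1s. -/
def isBalanced {B : ℕ} (z : Fin B → Fin 2) : Prop := 2 * onesCount z = B

/-- Block `k`-sum on `nb` blocks of `B` bits each: value 1 iff there are `k` balanced
blocks whose encoded numbers sum to 0 (mod `2^B`) and every other block has at least
as many 1s as 0s. -/
noncomputable def blockKSumBool (nb B k : ℕ) (z : Fin nb × Fin B → Fin 2) : Bool :=
  ofProp (∃ S : Finset (Fin nb), S.card = k ∧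
    (∀ i ∈ S, isBalanced fun j => z (i, j)) ∧
    (∑ i ∈ S, blockVal fun j => z (i, j)) % 2 ^ B = 0 ∧
    ∀ i ∉ S, B ≤ 2 * onesCount fun j => z (i, j))

/-- The Boolean version of `k`-SUM on `m` numbers of `w` bits each (mod `2^w`). -/
noncomputable def kSumBool (m w k : ℕ) (z : Fin m × Fin w → Fin 2) : Bool :=
  ofProp (∃ S : Finset (Fin m), S.card = k ∧
    (∑ i ∈ S, blockVal fun j => z (i, j)) % 2 ^ w = 0)

/-- Block size of the outer Block `k`-sum in `BKK` on (roughly) `n` outer bits. -/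
def bkkB (n k : ℕ) : ℕ := 10 * k * Nat.log 2 n
/-- Number of blocks of the outer Block `k`-sum in `BKK`. -/
def bkkNB (n k : ℕ) : ℕ := n / bkkB n k
/-- Bits per number of the inner Boolean `k`-SUM in `BKK`. -/
def bkkW (n k : ℕ) : ℕ := k * Nat.log 2 n
/-- Number of numbers of the inner Boolean `k`-SUM in `BKK`. -/
def bkkM (n k : ℕ) : ℕ := n / bkkW n k

/-- The index set of the inputs of `BKK_{n²,k}` (one inner `k`-SUM input bit for
each outer Block `k`-sum input bit; roughly `n²` bits in total). -/
abbrev BKKIdx (n k : ℕ) := (Fin (bkkNB n k) × Fin (bkkB n k)) × (Fin (bkkM n k) × Fin (bkkW n k))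

/-- `BKK_{n²,k}`: Block `k`-sum composed with the Boolean version of `k`-SUM. -/
noncomputable def bkkBool (n k : ℕ) (z : BKKIdx n k → Fin 2) : Bool :=
  blockKSumBool (bkkNB n k) (bkkB n k) k fun ob =>
    if kSumBool (bkkM n k) (bkkW n k) k (fun p => z (ob, p)) then 1 else 0

/-- `BKK_{n²,k}` as a total query function. -/
noncomputable def BKKfn (n k : ℕ) : PartialFn (BKKIdx n k) (fun _ => 2) :=
  fun z => some (bkkBool n k z)

/-- The `d`-fold self-composition of a total Boolean function `g`: a depth-`d` tree
each of whose internal nodes is a copy of `g`; input bits are indexed by root-to-leaf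
paths `Fin d → I`. -/
noncomputable def iterFn {I : Type} (g : (I → Fin 2) → Bool) :
    (d : ℕ) → ((Fin d → I) → Fin 2) → Bool
  | 0, z => decide (z (fun i => i.elim0) = 1)
  | d + 1, z => g fun a => if iterFn g d (fun v => z (Fin.cons a v)) then 1 else 0

/-- The recursion depth used for `RecBKK`: `d = (4/25)·log n / log log n`. -/
def recD (n : ℕ) : ℕ := 4 * Nat.log 2 n / (25 * Nat.log 2 (Nat.log 2 n))

/-- The index set of the inputs of `RecBKK`. -/
abbrev RecIdx (n : ℕ) := Fin (recD n) → BKKIdx n (Nat.log 2 n)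

/-- `RecBKK`: the `recD n`-fold self-composition of `BKK` with `k = log n`. -/
noncomputable def RecBKKfn (n : ℕ) : PartialFn (RecIdx n) (fun _ => 2) :=
  fun z => some (iterFn (bkkBool n (Nat.log 2 n)) (recD n) z)

/-- The nominal input size `N = n^{2d}` of `RecBKK`. -/
def recN (n : ℕ) : ℕ := n ^ (2 * recD n)

end QC

/-!
Take `3k` tables `(ℤ/2)^k → (ℤ/2)^k`, each either injective or periodic, and call the set of the
periodic ones their pattern. Hide every bit of every table in a `2^k × 2^k` And-Or matrix, and add
a cheat sheet with one cell per pattern: the function accepts if some cell certifies that the tables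
follow its pattern, and `k` further bits have even parity.

A quantum algorithm infers the pattern by Simon's algorithm, where each entry costs `Õ(2^k)`, and
then checks the cell of this pattern, reading its claims and verifying them against the matrices by
Grover search, in `Õ(2^k)` queries. To combine the subroutines without error reduction, the
algorithm is given as a Gram-type decomposition of a kernel that is close to `1` on all pairs of a
`0`-input and a `1`-input. The parity bits force `Q(f)` to tend to infinity.

A randomized algorithm learns a table bit only by finding the critical position of its matrix, which
each query does with average probability `O(4^(-k))`. So with `o(2^(5k/2))` queries it sees only
`o(2^(k/2))` table entries. By the birthday bound these rarely contain both elements of a pair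
identified by a random period, and then swapping permutation values turns injective tables into
periodic ones that look the same. Hence the algorithm learns too little about the pattern to find
its cell among the `2^(3k)` cells.
-/

namespace QC

open Matrix

/-! ### Phase-oracle algorithms -/

section PhaseOracle

variable {ι S : Type}

/-- The basis states of a bit-query algorithm: a queried position, an answer bit, and a workspace
state from an arbitrary finite type `S` instead of the `Fin W` of `QIdx`. -/
abbrev Reg (ι S : Type) := (ι × Fin 2) × S

/-- The sign that the phase oracle of `x` gives to a basis state of the query register. -/
def phaseSign (x : ι → Fin 2) (q : ι × Fin 2) : ℝ :=
  if q.2 = 1 ∧ x q.1 = 1 then -1 else 1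

lemma phaseSign_mul_self (x : ι → Fin 2) (q : ι × Fin 2) :
    phaseSign x q * phaseSign x q = 1 := by
  unfold phaseSign
  split_ifs <;> norm_num

variable [Fintype ι] [DecidableEq ι] [Fintype S] [DecidableEq S]

lemma diagonal_mem_orthogonalGroup {E : Type*} [Fintype E] [DecidableEq E] {d : E → ℝ}
    (hd : ∀ j, d j * d j = 1) : diagonal d ∈ orthogonalGroup E ℝ := by
  simp only [mem_orthogonalGroup_iff, diagonal_transpose, diagonal_mul_diagonal, hd, diagonal_one]

/-- The phase oracle of `x`, which marks the basis states whose queried bit is `1` and whose answer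
bit is `1` by a sign. -/
def phaseOracle (S : Type) [Fintype S] [DecidableEq S] (x : ι → Fin 2) :
    orthogonalGroup (Reg ι S) ℝ :=
  ⟨diagonal fun j => phaseSign x j.1,
    diagonal_mem_orthogonalGroup fun j => phaseSign_mul_self x j.1⟩

lemma phaseOracle_mulVec (x : ι → Fin 2) (ψ : Reg ι S → ℝ) (j : Reg ι S) :
    ((phaseOracle S x).1 *ᵥ ψ) j = phaseSign x j.1 * ψ j :=
  mulVec_diagonal _ _ _

/-- The state after `t` steps of the phase-oracle algorithm with steps `M` and initial state `ψ`. -/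
noncomputable def phaseState (M : ℕ → orthogonalGroup (Reg ι S) ℝ) (ψ : Reg ι S → ℝ)
    (x : ι → Fin 2) : ℕ → Reg ι S → ℝ
  | 0 => ψ
  | t + 1 => (M t).1 *ᵥ ((phaseOracle S x).1 *ᵥ phaseState M ψ x t)

lemma dotProduct_orthogonal_mulVec {E : Type*} [Fintype E] [DecidableEq E]
    (U : orthogonalGroup E ℝ) (v w : E → ℝ) : (U.1 *ᵥ v) ⬝ᵥ (U.1 *ᵥ w) = v ⬝ᵥ w := by
  rw [dotProduct_mulVec, vecMul_mulVec, ← mulVec_transpose, transpose_mul, transpose_transpose,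
    (mem_orthogonalGroup_iff' _ _).mp U.2, one_mulVec]

lemma phaseState_dotProduct_self (M : ℕ → orthogonalGroup (Reg ι S) ℝ) (ψ : Reg ι S → ℝ)
    (x : ι → Fin 2) (t : ℕ) : phaseState M ψ x t ⬝ᵥ phaseState M ψ x t = ψ ⬝ᵥ ψ := by
  induction t with
  | zero => rfl
  | succ t ih => rw [phaseState, dotProduct_orthogonal_mulVec, dotProduct_orthogonal_mulVec, ih]

end PhaseOracle

section Hadamard

variable {ι S : Type} [DecidableEq ι] [DecidableEq S]

/-- The bit-flip oracle of the query model, over the reals. -/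
def flipOracle (S : Type) [DecidableEq S] (x : ι → Fin 2) : Matrix (Reg ι S) (Reg ι S) ℝ :=
  of fun j j' => if j.2 = j'.2 ∧ j.1 = (j'.1.1, j'.1.2 + x j'.1.1) then 1 else 0

/-- The Hadamard transform of the answer bit. -/
noncomputable def hadamardAnswer (ι S : Type) [DecidableEq ι] [DecidableEq S] :
    Matrix (Reg ι S) (Reg ι S) ℝ :=
  of fun j j' => if j.1.1 = j'.1.1 ∧ j.2 = j'.2 then
    (if j.1.2 = 1 ∧ j'.1.2 = 1 then -1 else 1) * (√2)⁻¹ else 0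

lemma hadamardAnswer_transpose : (hadamardAnswer ι S)ᵀ = hadamardAnswer ι S := by
  ext j j'
  simp only [hadamardAnswer, transpose_apply, of_apply, eq_comm (a := j.1.1),
    eq_comm (a := j.2), and_comm (a := j.1.2 = 1)]

lemma sqrt_two_inv_mul_self : (√2 : ℝ)⁻¹ * (√2)⁻¹ = 1 / 2 := by
  rw [← mul_inv, Real.mul_self_sqrt zero_le_two, one_div]

variable [Fintype ι] [Fintype S]

lemma hadamardAnswer_mulVec (ψ : Reg ι S → ℝ) (i : ι) (a : Fin 2) (s : S) :
    (hadamardAnswer ι S *ᵥ ψ) ((i, a), s) =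
      (√2)⁻¹ * (ψ ((i, 0), s) + (if a = 1 then -1 else 1) * ψ ((i, 1), s)) := by
  simp only [hadamardAnswer, mulVec, dotProduct, of_apply, Fintype.sum_prod_type,
    Fin.sum_univ_two, ite_and, ite_mul, zero_mul]
  simp [Finset.sum_add_distrib]
  split_ifs <;> ring

lemma flipOracle_mulVec (x : ι → Fin 2) (ψ : Reg ι S → ℝ) (i : ι) (a : Fin 2) (s : S) :
    (flipOracle S x *ᵥ ψ) ((i, a), s) = ψ ((i, a + x i), s) := by
  have add_flip : ∀ a b c : Fin 2, a = c + b ↔ c = a + b := by decide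
  have entry : ∀ j : Reg ι S, (s = j.2 ∧ (i, a) = (j.1.1, j.1.2 + x j.1.1)) ↔
      j = ((i, a + x i), s) := by
    rintro ⟨⟨i', a'⟩, s'⟩
    simp only [Prod.mk.injEq, add_flip a]
    constructor
    · rintro ⟨rfl, rfl, rfl⟩
      exact ⟨⟨rfl, rfl⟩, rfl⟩
    · rintro ⟨⟨rfl, rfl⟩, rfl⟩
      exact ⟨rfl, rfl, rfl⟩
  simp only [flipOracle, mulVec, dotProduct, of_apply, entry]
  simp

lemma hadamardAnswer_mulVec_mulVec (ψ : Reg ι S → ℝ) :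
    hadamardAnswer ι S *ᵥ (hadamardAnswer ι S *ᵥ ψ) = ψ := by
  ext ⟨⟨i, a⟩, s⟩
  simp only [hadamardAnswer_mulVec]
  fin_cases a
  · simp
    linear_combination (2 * ψ ((i, 0), s)) * sqrt_two_inv_mul_self
  · simp
    linear_combination (2 * ψ ((i, 1), s)) * sqrt_two_inv_mul_self

lemma hadamardAnswer_mem_orthogonalGroup :
    hadamardAnswer ι S ∈ orthogonalGroup (Reg ι S) ℝ := by
  rw [mem_orthogonalGroup_iff, hadamardAnswer_transpose]
  refine Matrix.ext_of_mulVec_single fun j => ?_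
  rw [← mulVec_mulVec, hadamardAnswer_mulVec_mulVec, one_mulVec]

lemma flipOracle_mulVec_hadamardAnswer (x : ι → Fin 2) (ψ : Reg ι S → ℝ) :
    flipOracle S x *ᵥ (hadamardAnswer ι S *ᵥ ψ) =
      hadamardAnswer ι S *ᵥ ((phaseOracle S x).1 *ᵥ ψ) := by
  ext ⟨⟨i, a⟩, s⟩
  simp only [hadamardAnswer_mulVec, flipOracle_mulVec, phaseOracle_mulVec, phaseSign]
  generalize x i = b
  fin_cases a <;> fin_cases b <;> simp

lemma sum_sq_hadamardAnswer_mulVec (ψ : Reg ι S → ℝ) (s : S) :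
    ∑ q, (hadamardAnswer ι S *ᵥ ψ) (q, s) ^ 2 = ∑ q, ψ (q, s) ^ 2 := by
  simp only [Fintype.sum_prod_type, Fin.sum_univ_two, hadamardAnswer_mulVec]
  refine Finset.sum_congr rfl fun i _ => ?_
  simp
  linear_combination (2 * ψ ((i, 0), s) ^ 2 + 2 * ψ ((i, 1), s) ^ 2) * sqrt_two_inv_mul_self

end Hadamard

section QueryModel

variable {ι S : Type} [Fintype S]

/-- The basis of the query model with `Fintype.card S` workspace states as the basis `Reg ι S`. -/
noncomputable def qIdxEquiv (ι S : Type) [Fintype S] :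
    QIdx ι (fun _ => 2) (Fintype.card S) ≃ Reg ι S :=
  (Equiv.sigmaEquivProd ι (Fin 2)).prodCongr (Fintype.equivFin S).symm

/-- A real vector as a complex state of the query model. -/
noncomputable def toQVec (ψ : Reg ι S → ℝ) : QIdx ι (fun _ => 2) (Fintype.card S) → ℂ :=
  fun j => ψ (qIdxEquiv ι S j)

lemma norm_sq_toQVec (ψ : Reg ι S → ℝ) (j : QIdx ι (fun _ => 2) (Fintype.card S)) :
    ‖toQVec ψ j‖ ^ 2 = ψ (qIdxEquiv ι S j) ^ 2 := by
  rw [toQVec, Complex.norm_real, Real.norm_eq_abs, sq_abs]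

/-- A real matrix as a complex matrix of the query model. -/
noncomputable def toQ (M : Matrix (Reg ι S) (Reg ι S) ℝ) :
    Matrix (QIdx ι (fun _ => 2) (Fintype.card S)) (QIdx ι (fun _ => 2) (Fintype.card S)) ℂ :=
  (M.submatrix (qIdxEquiv ι S) (qIdxEquiv ι S)).map Complex.ofReal

lemma oracleMatrix_eq_toQ [DecidableEq ι] [DecidableEq S] (x : Input ι fun _ => 2) :
    oracleMatrix (Fintype.card S) x = toQ (flipOracle S x) := by
  ext ⟨⟨i, a⟩, w⟩ ⟨⟨i', a'⟩, w'⟩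
  simp only [oracleMatrix, toQ, flipOracle, of_apply, map_apply, submatrix_apply,
    qIdxEquiv, Equiv.prodCongr_apply, Prod.map, Equiv.sigmaEquivProd_apply,
    EmbeddingLike.apply_eq_iff_eq]
  by_cases h : i = i'
  · subst h
    simp only [Sigma.mk.injEq, heq_eq_eq, true_and, Prod.mk.injEq]
    split_ifs <;> simp
  · simp [h]

variable [Fintype ι]

lemma toQ_mulVec (M : Matrix (Reg ι S) (Reg ι S) ℝ) (ψ : Reg ι S → ℝ) :
    toQ M *ᵥ toQVec ψ = toQVec (M *ᵥ ψ) := by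
  ext j
  simp only [toQ, toQVec, mulVec, dotProduct, map_apply, submatrix_apply, Complex.ofReal_sum,
    Complex.ofReal_mul]
  exact (qIdxEquiv ι S).sum_comp fun j' => (M (qIdxEquiv ι S j) j' : ℂ) * (ψ j' : ℂ)

lemma toQ_mem_unitaryGroup [DecidableEq ι] [DecidableEq S] (U : orthogonalGroup (Reg ι S) ℝ) :
    toQ U.1 ∈ unitaryGroup (QIdx ι (fun _ => 2) (Fintype.card S)) ℂ := by
  have star_toQ : star (toQ U.1) = toQ U.1ᵀ := by
    ext j j'
    simp [toQ]
  have toQ_mul : toQ (U.1 * U.1ᵀ) = toQ U.1 * toQ U.1ᵀ := by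
    simp only [toQ, ← submatrix_mul_equiv U.1 U.1ᵀ _ (qIdxEquiv ι S)]
    exact Matrix.map_mul (f := Complex.ofRealHom)
  rw [mem_unitaryGroup_iff, star_toQ, ← toQ_mul, (mem_orthogonalGroup_iff _ _).mp U.2, toQ,
    submatrix_one_equiv, Matrix.map_one _ Complex.ofReal_zero Complex.ofReal_one]

variable [DecidableEq ι]

/-- A bounded-error quantum algorithm computes `f` with `d` queries. -/
def IsQuantumComputable {α : ι → ℕ} (f : PartialFn ι α) (d : ℕ) : Prop :=
  ∃ A : QAlg ι α, A.T ≤ d ∧ ∀ x b, f x = some b → (2 : ℝ) / 3 ≤ A.outProb x (some b)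

variable [DecidableEq S]

/-- The unitaries of the bit-flip algorithm that simulates the phase-oracle steps `M`: the flip
oracle is the phase oracle conjugated by the Hadamard transform. -/
noncomputable def phaseUnitary (M : ℕ → orthogonalGroup (Reg ι S) ℝ) :
    ℕ → orthogonalGroup (Reg ι S) ℝ
  | 0 => ⟨hadamardAnswer ι S, hadamardAnswer_mem_orthogonalGroup⟩
  | t + 1 => ⟨hadamardAnswer ι S, hadamardAnswer_mem_orthogonalGroup⟩ * M t *
      ⟨hadamardAnswer ι S, hadamardAnswer_mem_orthogonalGroup⟩

/-- A phase-oracle algorithm with real orthogonal steps as a quantum query algorithm. -/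
noncomputable def phaseQAlg (T : ℕ) (M : ℕ → orthogonalGroup (Reg ι S) ℝ) (ψ : Reg ι S → ℝ)
    (hψ : ψ ⬝ᵥ ψ = 1) (out : S → Bool) : QAlg ι fun _ => 2 where
  T := T
  W := Fintype.card S
  U t := toQ (phaseUnitary M t).1
  unitary t := toQ_mem_unitaryGroup _
  init := toQVec ψ
  init_norm := by
    simp only [norm_sq_toQVec, ← hψ, dotProduct, ← pow_two]
    exact (qIdxEquiv ι S).sum_comp fun j => ψ j ^ 2
  out j := some (out (qIdxEquiv ι S j).2)

lemma qProd_phaseUnitary_mulVec (M : ℕ → orthogonalGroup (Reg ι S) ℝ) (ψ : Reg ι S → ℝ)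
    (x : ι → Fin 2) (t : ℕ) :
    qProd (fun t => toQ (phaseUnitary M t).1) (oracleMatrix (Fintype.card S) x) t *ᵥ toQVec ψ =
      toQVec (hadamardAnswer ι S *ᵥ phaseState M ψ x t) := by
  induction t with
  | zero => exact toQ_mulVec _ _
  | succ t ih =>
    rw [qProd, ← mulVec_mulVec, ← mulVec_mulVec, ih, oracleMatrix_eq_toQ, toQ_mulVec, toQ_mulVec,
      flipOracle_mulVec_hadamardAnswer, phaseState, phaseUnitary]
    simp only [Submonoid.coe_mul, ← mulVec_mulVec, hadamardAnswer_mulVec_mulVec]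

lemma outProb_phaseQAlg {T : ℕ} {M : ℕ → orthogonalGroup (Reg ι S) ℝ} {ψ : Reg ι S → ℝ}
    (hψ : ψ ⬝ᵥ ψ = 1) (out : S → Bool) (x : ι → Fin 2) (b : Bool) :
    (phaseQAlg T M ψ hψ out).outProb x (some b) =
      ∑ s, if out s = b then ∑ q, phaseState M ψ x T (q, s) ^ 2 else 0 := by
  have finalState : (phaseQAlg T M ψ hψ out).finalState x =
      toQVec (hadamardAnswer ι S *ᵥ phaseState M ψ x T) := qProd_phaseUnitary_mulVec M ψ x T
  calc (phaseQAlg T M ψ hψ out).outProb x (some b)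
      = ∑ j, if out (qIdxEquiv ι S j).2 = b then
          (hadamardAnswer ι S *ᵥ phaseState M ψ x T) (qIdxEquiv ι S j) ^ 2 else 0 := by
        simp only [QAlg.outProb, finalState]
        exact Fintype.sum_congr _ _ fun j => by
          simp only [phaseQAlg, Option.some.injEq]
          exact if_congr Iff.rfl (norm_sq_toQVec _ j) rfl
    _ = ∑ j : Reg ι S, if out j.2 = b then
          (hadamardAnswer ι S *ᵥ phaseState M ψ x T) j ^ 2 else 0 :=
        (qIdxEquiv ι S).sum_comp fun j => if out j.2 = b then
          (hadamardAnswer ι S *ᵥ phaseState M ψ x T) j ^ 2 else 0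
    _ = ∑ s, if out s = b then ∑ q, phaseState M ψ x T (q, s) ^ 2 else 0 := by
        rw [Fintype.sum_prod_type_right]
        refine Finset.sum_congr rfl fun s _ => ?_
        split_ifs
        · exact sum_sq_hadamardAnswer_mulVec _ _
        · exact Finset.sum_const_zero

lemma outProb_phaseQAlg_true_add_false {T : ℕ} {M : ℕ → orthogonalGroup (Reg ι S) ℝ}
    {ψ : Reg ι S → ℝ} (hψ : ψ ⬝ᵥ ψ = 1) (out : S → Bool) (x : ι → Fin 2) :
    (phaseQAlg T M ψ hψ out).outProb x (some true) +
      (phaseQAlg T M ψ hψ out).outProb x (some false) = 1 := by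
  have hnorm := (phaseState_dotProduct_self M ψ x T).trans hψ
  rw [dotProduct, Fintype.sum_prod_type_right] at hnorm
  rw [outProb_phaseQAlg, outProb_phaseQAlg, ← Finset.sum_add_distrib, ← hnorm]
  refine Finset.sum_congr rfl fun s _ => ?_
  cases out s <;> simp [pow_two]

end QueryModel

/-! ### Averages over the iterates of an isometry -/

section BirkhoffAverage

open RealInnerProductSpace

variable {V : Type*} [NormedAddCommGroup V]

lemma norm_iterate_linearIsometry [NormedSpace ℝ V] (f : V →ₗᵢ[ℝ] V) (t : ℕ) (v : V) :
    ‖f^[t] v‖ = ‖v‖ := by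
  induction t with
  | zero => rfl
  | succ t ih => rw [Function.iterate_succ_apply', f.norm_map, ih]

lemma norm_birkhoffAverage_le [NormedSpace ℝ V] (f : V →ₗᵢ[ℝ] V) (n : ℕ) (v : V) :
    ‖birkhoffAverage ℝ f id n v‖ ≤ ‖v‖ :=
  calc ‖birkhoffAverage ℝ f id n v‖ ≤ (n : ℝ)⁻¹ * ∑ t ∈ Finset.range n, ‖f^[t] v‖ := by
        rw [birkhoffAverage, birkhoffSum, norm_smul, norm_inv, Real.norm_natCast]
        gcongr
        exact norm_sum_le _ _
    _ = (n : ℝ)⁻¹ * n * ‖v‖ := by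
        simp only [norm_iterate_linearIsometry, Finset.sum_const, Finset.card_range,
          nsmul_eq_mul, mul_assoc]
    _ ≤ ‖v‖ := mul_le_of_le_one_left (norm_nonneg v) inv_mul_le_one

lemma norm_birkhoffAverage_coboundary_add_le [NormedSpace ℝ V] (f : V →ₗᵢ[ℝ] V) (n : ℕ)
    (w a : V) : ‖birkhoffAverage ℝ f id n (f w - w + a)‖ ≤ 2 * ‖w‖ / n + ‖a‖ := by
  have hsplit : birkhoffAverage ℝ f id n (f w - w + a) =
      birkhoffAverage ℝ f id n (f w) - birkhoffAverage ℝ f id n w +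
        birkhoffAverage ℝ f id n a := by
    simp only [birkhoffAverage, birkhoffSum, iterate_map_add, iterate_map_sub, id,
      Finset.sum_add_distrib, Finset.sum_sub_distrib, smul_add, smul_sub]
  have htelescope := dist_birkhoffAverage_apply_birkhoffAverage ℝ f id n w
  have hiterate : dist (f^[n] w) w ≤ 2 * ‖w‖ := by
    have := dist_le_norm_add_norm (f^[n] w) w
    rwa [norm_iterate_linearIsometry, ← two_mul] at this
  rw [hsplit]
  refine (norm_add_le _ _).trans (add_le_add ?_ (norm_birkhoffAverage_le f n a))
  rw [← dist_eq_norm, htelescope]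
  exact div_le_div_of_nonneg_right hiterate n.cast_nonneg

variable [InnerProductSpace ℝ V]

lemma inner_birkhoffAverage_of_isFixedPt (f : V →ₗᵢ[ℝ] V) {n : ℕ} (hn : n ≠ 0) {φ : V}
    (hφ : Function.IsFixedPt f φ) (v : V) : ⟪birkhoffAverage ℝ f id n v, φ⟫ = ⟪v, φ⟫ := by
  have hiterate : ∀ t, ⟪f^[t] v, φ⟫ = ⟪v, φ⟫ := by
    intro t
    induction t with
    | zero => rfl
    | succ t ih => rw [Function.iterate_succ_apply', ← ih, ← f.inner_map_map (f^[t] v), hφ.eq]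
  simp only [birkhoffAverage, birkhoffSum, id, real_inner_smul_left, sum_inner, hiterate,
    Finset.sum_const, Finset.card_range, nsmul_eq_mul]
  exact inv_mul_cancel_left₀ (Nat.cast_ne_zero.mpr hn) _

lemma inner_sq_le_norm_sq_birkhoffAverage_mul (f : V →ₗᵢ[ℝ] V) {n : ℕ} (hn : n ≠ 0) {φ : V}
    (hφ : Function.IsFixedPt f φ) (v : V) :
    ⟪v, φ⟫ ^ 2 ≤ ‖birkhoffAverage ℝ f id n v‖ ^ 2 * ‖φ‖ ^ 2 := by
  rw [← inner_birkhoffAverage_of_isFixedPt f hn hφ, ← mul_pow, ← sq_abs]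
  exact pow_le_pow_left₀ (abs_nonneg _) (abs_real_inner_le_norm _ _) 2

end BirkhoffAverage

section OrthogonalIsometry

variable {E : Type*} [Fintype E] [DecidableEq E]

/-- An orthogonal matrix as an isometry of Euclidean space. -/
noncomputable def orthogonalIsometry (U : orthogonalGroup E ℝ) :
    EuclideanSpace ℝ E →ₗᵢ[ℝ] EuclideanSpace ℝ E :=
  (toEuclideanLin U.1).isometryOfInner fun v w => by
    simpa [toLpLin_apply, PiLp.inner_apply, dotProduct] using
      dotProduct_orthogonal_mulVec U w.ofLp v.ofLp

lemma orthogonalIsometry_apply (U : orthogonalGroup E ℝ) (v : EuclideanSpace ℝ E) :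
    orthogonalIsometry U v = WithLp.toLp 2 (U.1 *ᵥ v.ofLp) :=
  rfl

lemma iterate_orthogonalIsometry (U : orthogonalGroup E ℝ) (t : ℕ) (v : E → ℝ) :
    (orthogonalIsometry U)^[t] (WithLp.toLp 2 v) = WithLp.toLp 2 ((U ^ t).1 *ᵥ v) := by
  induction t with
  | zero => rw [Function.iterate_zero_apply, pow_zero, OneMemClass.coe_one, one_mulVec]
  | succ t ih =>
    rw [Function.iterate_succ_apply', ih, orthogonalIsometry_apply, pow_succ', Submonoid.coe_mul,
      mulVec_mulVec]

lemma birkhoffAverage_orthogonalIsometry_apply (U : orthogonalGroup E ℝ) (T : ℕ) (e : E → ℝ)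
    (j : E) : birkhoffAverage ℝ (orthogonalIsometry U) id T (WithLp.toLp 2 e) j =
      (T : ℝ)⁻¹ * ∑ t : Fin T, ((U ^ (t : ℕ)).1 *ᵥ e) j := by
  simp only [birkhoffAverage, birkhoffSum, id, iterate_orthogonalIsometry, PiLp.smul_apply,
    smul_eq_mul, WithLp.ofLp_sum, Finset.sum_apply, Finset.sum_range]

/-- The orthogonal matrix of a linear isometry of Euclidean space. -/
noncomputable def isometryMatrix (L : EuclideanSpace ℝ E ≃ₗᵢ[ℝ] EuclideanSpace ℝ E) :
    orthogonalGroup E ℝ :=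
  ⟨toEuclideanLin.symm L, by
    rw [toEuclideanLin_eq_toLin_orthonormal]
    exact L.toMatrix_mem_unitaryGroup _ _⟩

lemma isometryMatrix_mulVec (L : EuclideanSpace ℝ E ≃ₗᵢ[ℝ] EuclideanSpace ℝ E) (v : E → ℝ) :
    (isometryMatrix L).1 *ᵥ v = (L (WithLp.toLp 2 v)).ofLp := by
  exact congrArg (fun g => (g (WithLp.toLp 2 v)).ofLp) (toEuclideanLin.apply_symm_apply _)

lemma exists_orthogonalGroup_row_eq (j : E) {u : E → ℝ} (hu : u ⬝ᵥ u = 1) :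
    ∃ U : orthogonalGroup E ℝ, U.1.row j = u := by
  have hnorm : ‖(WithLp.toLp 2 u : EuclideanSpace ℝ E)‖ = ‖EuclideanSpace.single j (1 : ℝ)‖ := by
    rw [PiLp.norm_single, norm_one, EuclideanSpace.norm_eq, Real.sqrt_eq_one]
    simpa [dotProduct, ← pow_two] using hu
  let U := isometryMatrix
    (ℝ ∙ ((WithLp.toLp 2 u : EuclideanSpace ℝ E) - EuclideanSpace.single j (1 : ℝ)))ᗮ.reflection
  have hU : U.1 *ᵥ u = Pi.single j 1 := by
    rw [isometryMatrix_mulVec, Submodule.reflection_sub hnorm]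
    rfl
  refine ⟨U, ?_⟩
  rw [← single_one_vecMul, ← mulVec_transpose, ← hU, mulVec_mulVec,
    (mem_orthogonalGroup_iff' _ _).mp U.2, one_mulVec]

end OrthogonalIsometry

/-! ### Averaging with a clock register -/

section Clock

variable {ι Y C : Type} [Fintype ι] [DecidableEq ι] [Fintype Y] [DecidableEq Y]
  [Fintype C] [DecidableEq C]

/-- The operation that applies `A t` to the other registers when the clock register, the last
component of the workspace, is in state `t`. -/
def controlled (A : C → orthogonalGroup (Reg ι Y) ℝ) : orthogonalGroup (Reg ι (Y × C)) ℝ :=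
  ⟨(blockDiagonal fun t => (A t).1).submatrix (Equiv.prodAssoc _ _ _).symm
      (Equiv.prodAssoc _ _ _).symm, by
    have hA : (fun t => (A t).1 * (A t).1ᵀ) = 1 :=
      funext fun t => (mem_orthogonalGroup_iff _ _).mp (A t).2
    rw [mem_orthogonalGroup_iff, transpose_submatrix, submatrix_mul_equiv,
      blockDiagonal_transpose, ← blockDiagonal_mul, hA, blockDiagonal_one, submatrix_one_equiv]⟩

variable (ι Y) in
/-- The operation that applies `S` to the clock register only. -/
def onClock (S : orthogonalGroup C ℝ) : orthogonalGroup (Reg ι (Y × C)) ℝ :=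
  ⟨(kroneckerMap (· * ·) (1 : Matrix (Reg ι Y) (Reg ι Y) ℝ) S.1).submatrix
      (Equiv.prodAssoc _ _ _).symm (Equiv.prodAssoc _ _ _).symm, by
    rw [mem_orthogonalGroup_iff, transpose_submatrix, submatrix_mul_equiv,
      ← kroneckerMap_transpose, ← mul_kronecker_mul, (mem_orthogonalGroup_iff _ _).mp S.2,
      transpose_one, mul_one, one_kronecker_one, submatrix_one_equiv]⟩

lemma controlled_mulVec (A : C → orthogonalGroup (Reg ι Y) ℝ) (ψ : Reg ι (Y × C) → ℝ)
    (q : ι × Fin 2) (y : Y) (t : C) :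
    ((controlled A).1 *ᵥ ψ) (q, (y, t)) = ((A t).1 *ᵥ fun p => ψ (p.1, (p.2, t))) (q, y) := by
  simp only [controlled, mulVec, dotProduct, submatrix_apply, Equiv.prodAssoc_symm_apply,
    blockDiagonal_apply, Fintype.sum_prod_type, ite_mul, zero_mul, Finset.sum_ite_eq,
    Finset.mem_univ, if_true]

lemma onClock_mulVec (S : orthogonalGroup C ℝ) (ψ : Reg ι (Y × C) → ℝ) (q : ι × Fin 2) (y : Y)
    (t : C) : ((onClock ι Y S).1 *ᵥ ψ) (q, (y, t)) = ∑ t', S.1 t t' * ψ (q, (y, t')) := by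
  have expand : ((onClock ι Y S).1 *ᵥ ψ) (q, (y, t)) = ∑ p : Reg ι Y,
      ∑ t', (1 : Matrix (Reg ι Y) (Reg ι Y) ℝ) (q, y) p * S.1 t t' * ψ (p.1, (p.2, t')) := by
    simp only [onClock, mulVec, dotProduct, submatrix_apply, Equiv.prodAssoc_symm_apply,
      kroneckerMap_apply, Fintype.sum_prod_type]
  rw [expand, Fintype.sum_eq_single (q, y) fun p hp => by simp [one_apply_ne hp.symm]]
  simp only [one_apply_eq, one_mul]

end Clock

section ClockState

variable {ι Y : Type} {T : ℕ}

/-- The state `e` tensored with the uniform superposition of `T` clock values. -/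
noncomputable def clockState (T : ℕ) (e : Reg ι Y → ℝ) : Reg ι (Y × Fin T) → ℝ :=
  fun j => (√(T : ℝ))⁻¹ * e (j.1, j.2.1)

lemma sqrt_natCast_inv_mul_self (T : ℕ) : (√(T : ℝ))⁻¹ * (√(T : ℝ))⁻¹ = (T : ℝ)⁻¹ := by
  rw [← mul_inv, Real.mul_self_sqrt T.cast_nonneg]

variable [Fintype ι] [Fintype Y]

lemma clockState_dotProduct_self (hT : T ≠ 0) (e : Reg ι Y → ℝ) :
    clockState T e ⬝ᵥ clockState T e = e ⬝ᵥ e := by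
  have hT' : (T : ℝ) ≠ 0 := Nat.cast_ne_zero.mpr hT
  simp only [dotProduct, clockState, Fintype.sum_prod_type, Finset.sum_const, Finset.card_univ,
    Fintype.card_fin, nsmul_eq_mul, mul_mul_mul_comm _ (e _), sqrt_natCast_inv_mul_self,
    mul_inv_cancel_left₀ hT']

end ClockState

section ClockWalk

variable {ι Y : Type} [Fintype ι] [DecidableEq ι] [Fintype Y] [DecidableEq Y] {T : ℕ}

/-- The steps of a walk with step `B` in superposition over a clock of `T` values: branch `t` stays
idle for the first `T - t` steps, so that after `T` steps it has walked `t` times. At time `T` the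
clock register is mixed by `S`. -/
def clockWalk (B : orthogonalGroup (Reg ι Y) ℝ) (S : orthogonalGroup (Fin T) ℝ) (r : ℕ) :
    orthogonalGroup (Reg ι (Y × Fin T)) ℝ :=
  if r = T then onClock ι Y S else controlled fun t : Fin T => if T ≤ r + t then B else 1

lemma phaseState_clockWalk (B : orthogonalGroup (Reg ι Y) ℝ) (S : orthogonalGroup (Fin T) ℝ)
    {e : Reg ι Y → ℝ} (x : ι → Fin 2) (he : (phaseOracle Y x).1 *ᵥ e = e) {r : ℕ} (hr : r ≤ T)
    (t : Fin T) : (fun p : Reg ι Y => phaseState (clockWalk B S) (clockState T e) x r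
      (p.1, (p.2, t))) =
      (√(T : ℝ))⁻¹ • (((B * phaseOracle Y x) ^ (r + t - T)).1 *ᵥ e) := by
  induction r with
  | zero =>
    rw [Nat.sub_eq_zero_of_le (by omega), pow_zero, OneMemClass.coe_one, one_mulVec]
    rfl
  | succ r ih =>
    have oracle : (fun p : Reg ι Y => ((phaseOracle (Y × Fin T) x).1 *ᵥ
        phaseState (clockWalk B S) (clockState T e) x r) (p.1, (p.2, t))) =
        (phaseOracle Y x).1 *ᵥ fun p => phaseState (clockWalk B S) (clockState T e) x r
          (p.1, (p.2, t)) := by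
      ext p
      rw [phaseOracle_mulVec, phaseOracle_mulVec]
    ext p
    rw [phaseState, clockWalk, if_neg (by omega), controlled_mulVec, oracle, ih (by omega),
      mulVec_smul, mulVec_smul]
    refine congrArg ((√(T : ℝ))⁻¹ * ·) (congrFun ?_ p)
    split_ifs with h
    · rw [mulVec_mulVec, mulVec_mulVec, ← Submonoid.coe_mul, ← Submonoid.coe_mul, ← pow_succ',
        show r + t - T + 1 = r + 1 + t - T by omega]
    · rw [Nat.sub_eq_zero_of_le (by omega), Nat.sub_eq_zero_of_le (by omega), pow_zero,
        OneMemClass.coe_one, one_mulVec, one_mulVec, he]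

lemma phaseState_clockWalk_final (B : orthogonalGroup (Reg ι Y) ℝ)
    {S : orthogonalGroup (Fin T) ℝ} {t₀ : Fin T} (hS : S.1.row t₀ = fun _ => (√(T : ℝ))⁻¹)
    {e : Reg ι Y → ℝ} (x : ι → Fin 2) (he : (phaseOracle Y x).1 *ᵥ e = e) (q : ι × Fin 2)
    (y : Y) : phaseState (clockWalk B S) (clockState T e) x (T + 1) (q, (y, t₀)) =
      phaseSign x q * birkhoffAverage ℝ (orthogonalIsometry (B * phaseOracle Y x)) id T
        (WithLp.toLp 2 e) (q, y) := by
  have branch : ∀ t : Fin T, phaseState (clockWalk B S) (clockState T e) x T (q, (y, t)) =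
      (√(T : ℝ))⁻¹ * (((B * phaseOracle Y x) ^ (t : ℕ)).1 *ᵥ e) (q, y) := fun t => by
    have := congrFun (phaseState_clockWalk B S x he le_rfl t) (q, y)
    rwa [Nat.add_sub_cancel_left] at this
  rw [phaseState, clockWalk, if_pos rfl, onClock_mulVec,
    birkhoffAverage_orthogonalIsometry_apply, Finset.mul_sum, Finset.mul_sum]
  refine Finset.sum_congr rfl fun t _ => ?_
  rw [show S.1 t₀ t = _ from congrFun hS t, phaseOracle_mulVec, branch, ← sqrt_natCast_inv_mul_self]
  ring

theorem isQuantumComputable_of_norm_birkhoffAverage {f : PartialFn ι fun _ => 2} (hT : T ≠ 0)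
    (B : orthogonalGroup (Reg ι Y) ℝ) {e : Reg ι Y → ℝ} (he : e ⬝ᵥ e = 1)
    (hfix : ∀ x, (phaseOracle Y x).1 *ᵥ e = e)
    (htrue : ∀ x, f x = some true → 2 / 3 ≤ ‖birkhoffAverage ℝ
      (orthogonalIsometry (B * phaseOracle Y x)) id T (WithLp.toLp 2 e)‖ ^ 2)
    (hfalse : ∀ x, f x = some false → ‖birkhoffAverage ℝ
      (orthogonalIsometry (B * phaseOracle Y x)) id T (WithLp.toLp 2 e)‖ ^ 2 ≤ 1 / 3) :
    IsQuantumComputable f (T + 1) := by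
  let t₀ : Fin T := ⟨0, Nat.pos_of_ne_zero hT⟩
  obtain ⟨S, hS⟩ : ∃ S : orthogonalGroup (Fin T) ℝ, S.1.row t₀ = fun _ => (√(T : ℝ))⁻¹ :=
    exists_orthogonalGroup_row_eq t₀ (by simp [dotProduct, sqrt_natCast_inv_mul_self, hT])
  let A := phaseQAlg (T + 1) (clockWalk B S) (clockState T e)
    ((clockState_dotProduct_self hT e).trans he) fun s => decide (s.2 = t₀)
  have haccept : ∀ x, A.outProb x (some true) = ‖birkhoffAverage ℝ
      (orthogonalIsometry (B * phaseOracle Y x)) id T (WithLp.toLp 2 e)‖ ^ 2 := by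
    intro x
    rw [outProb_phaseQAlg, EuclideanSpace.real_norm_sq_eq, Fintype.sum_prod_type]
    simp only [decide_eq_true_eq, Finset.sum_ite_eq', Finset.mem_univ, if_true,
      phaseState_clockWalk_final B hS x (hfix x), mul_pow, pow_two (phaseSign x _),
      phaseSign_mul_self, one_mul]
    rw [Fintype.sum_prod_type_right]
  refine ⟨A, le_rfl, fun x b hb => ?_⟩
  cases b with
  | true => exact (htrue x hb).trans_eq (haccept x).symm
  | false =>
    have hsum : A.outProb x (some true) + A.outProb x (some false) = 1 :=
      outProb_phaseQAlg_true_add_false _ _ x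
    linarith [hfalse x hb, haccept x]

end ClockWalk

/-! ### Kernels of small filtered norm give quantum algorithms -/

/-- The kernel `K` has filtered `γ₂`-norm at most `W`: it is a Gram-type kernel whose vectors are
split over the input coordinates, where coordinate `i` contributes only to pairs of inputs that
differ at `i`. -/
def FilteredGammaLe {ι : Type} [Fintype ι] (K : (ι → Fin 2) → (ι → Fin 2) → ℝ) (W : ℝ) : Prop :=
  ∃ (D : Type) (_ : Fintype D) (u v : (ι → Fin 2) → ι → D → ℝ),
    (∀ z z', K z z' = ∑ i, ∑ d, if z i = z' i then 0 else u z i d * v z' i d) ∧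
    (∀ z, ∑ i, ∑ d, u z i d ^ 2 ≤ W) ∧ ∀ z, ∑ i, ∑ d, v z i d ^ 2 ≤ W

section Witness

variable {ι D O : Type}

/-- The workspace of the witness algorithm: a guess of the queried bit together with an index of
the factorization, or an index from `O` that is used without a query. -/
abbrev WitnessSpace (D O : Type) := (Fin 2 × D) ⊕ O

/-- The sign of the guess; together with the phase oracle it tests whether the guess is right. -/
def guessSign (ι D O : Type) : Reg ι (WitnessSpace D O) → ℝ
  | (_, .inl (c, _)) => if c = 1 then -1 else 1
  | (_, .inr _) => 1

lemma guessSign_mul_self (j : Reg ι (WitnessSpace D O)) :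
    guessSign ι D O j * guessSign ι D O j = 1 := by
  obtain ⟨q, (⟨c, d⟩ | o)⟩ := j <;> simp only [guessSign]
  · split_ifs <;> norm_num
  · norm_num

variable [DecidableEq ι]

/-- The vector with amplitudes `g i c d` on the queries to `i` with guess `c`, and `h o` on the
basis states without a query. -/
def witnessState (i₀ : ι) (g : ι → Fin 2 → D → ℝ) (h : O → ℝ) : Reg ι (WitnessSpace D O) → ℝ
  | (q, .inl (c, d)) => if q.2 = 1 then g q.1 c d else 0
  | (q, .inr o) => if q = (i₀, 0) then h o else 0

variable [Fintype ι] [Fintype D] [Fintype O]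

lemma witnessState_dotProduct (i₀ : ι) (g g' : ι → Fin 2 → D → ℝ) (h h' : O → ℝ) :
    witnessState i₀ g h ⬝ᵥ witnessState i₀ g' h' =
      ∑ i, ∑ d, ∑ c, g i c d * g' i c d + h ⬝ᵥ h' := by
  rw [dotProduct, Fintype.sum_prod_type_right, Fintype.sum_sum_type, Fintype.sum_prod_type]
  congr 1
  · simp only [witnessState, Fintype.sum_prod_type (α₁ := ι), ite_mul_ite, mul_zero,
      Finset.sum_ite_eq', Finset.mem_univ, if_true]
    rw [Finset.sum_comm_cycle]
    exact Finset.sum_congr rfl fun i _ => Finset.sum_comm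
  · simp [witnessState, dotProduct]

variable [DecidableEq D] [DecidableEq O]

lemma guessSign_phaseOracle_mulVec_witnessState (x : ι → Fin 2) (i₀ : ι)
    (g : ι → Fin 2 → D → ℝ) (h : O → ℝ) :
    diagonal (guessSign ι D O) *ᵥ ((phaseOracle _ x).1 *ᵥ witnessState i₀ g h) =
      witnessState i₀ (fun i c d => if c = x i then g i c d else -g i c d) h := by
  ext ⟨⟨i, a⟩, (⟨c, d⟩ | o)⟩ <;> rw [mulVec_diagonal, phaseOracle_mulVec] <;>
    simp only [guessSign, phaseSign, witnessState]
  · generalize x i = z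
    fin_cases a <;> fin_cases c <;> fin_cases z <;> simp
  · fin_cases a <;> simp

lemma phaseOracle_mulVec_witnessState_zero (x : ι → Fin 2) (i₀ : ι) (h : O → ℝ) :
    (phaseOracle _ x).1 *ᵥ witnessState i₀ (0 : ι → Fin 2 → D → ℝ) h = witnessState i₀ 0 h := by
  ext ⟨⟨i, a⟩, (⟨c, d⟩ | o)⟩ <;> rw [phaseOracle_mulVec] <;> simp only [phaseSign, witnessState]
  · simp
  · fin_cases a <;> simp

/-- The step of the witness algorithm between two oracle calls: test the guess, then reflect through
the subspace `P`. -/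
noncomputable def witnessStep (P : Submodule ℝ (EuclideanSpace ℝ (Reg ι (WitnessSpace D O)))) :
    orthogonalGroup (Reg ι (WitnessSpace D O)) ℝ :=
  isometryMatrix P.reflection *
    ⟨diagonal (guessSign ι D O), diagonal_mem_orthogonalGroup guessSign_mul_self⟩

lemma witnessStep_phaseOracle_witnessState
    (P : Submodule ℝ (EuclideanSpace ℝ (Reg ι (WitnessSpace D O)))) (x : ι → Fin 2) (i₀ : ι)
    (g : ι → Fin 2 → D → ℝ) (h : O → ℝ) :
    orthogonalIsometry (witnessStep P * phaseOracle _ x) (WithLp.toLp 2 (witnessState i₀ g h)) =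
      P.reflection (WithLp.toLp 2
        (witnessState i₀ (fun i c d => if c = x i then g i c d else -g i c d) h)) := by
  rw [orthogonalIsometry_apply, Submonoid.coe_mul, witnessStep, Submonoid.coe_mul,
    ← mulVec_mulVec, ← mulVec_mulVec, guessSign_phaseOracle_mulVec_witnessState,
    isometryMatrix_mulVec]

end Witness

section WitnessAlgorithm

variable {ι D E : Type} [DecidableEq ι]

/-- The fixed vector of a `1`-input `y`, with the vectors `v y` on the correct guesses. -/
noncomputable def posWitness (i₀ : ι) (κ : ℝ) (v : (ι → Fin 2) → ι → D → ℝ)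
    (b : (ι → Fin 2) → E → ℝ) (y : ι → Fin 2) : Reg ι (WitnessSpace D (Option E)) → ℝ :=
  witnessState i₀ (fun i c d => if c = y i then κ * v y i d else 0) fun o => o.elim 1 (b y)

/-- The reflected vector of a `0`-input `x`, with the vectors `u x` on the wrong guesses. -/
noncomputable def negWitness (i₀ : ι) (κ : ℝ) (u : (ι → Fin 2) → ι → D → ℝ)
    (a : (ι → Fin 2) → E → ℝ) (x : ι → Fin 2) : Reg ι (WitnessSpace D (Option E)) → ℝ :=
  witnessState i₀ (fun i c d => if c = x i then 0 else -(κ⁻¹ * u x i d)) fun o => o.elim 1 (-a x)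

/-- The start state of the witness algorithm. -/
def witnessStart (D E : Type) (i₀ : ι) : Reg ι (WitnessSpace D (Option E)) → ℝ :=
  witnessState i₀ 0 fun o => o.elim 1 0

/-- The part of the start state that the reflected vector of a `0`-input `x` does not explain. -/
def witnessError (D : Type) (i₀ : ι) (a : (ι → Fin 2) → E → ℝ) (x : ι → Fin 2) :
    Reg ι (WitnessSpace D (Option E)) → ℝ :=
  witnessState i₀ 0 fun o => o.elim 0 (a x)

variable [Fintype ι] [Fintype D] [Fintype E]

lemma posWitness_dotProduct_self (i₀ : ι) (κ : ℝ) (v : (ι → Fin 2) → ι → D → ℝ)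
    (b : (ι → Fin 2) → E → ℝ) (y : ι → Fin 2) :
    posWitness i₀ κ v b y ⬝ᵥ posWitness i₀ κ v b y =
      κ ^ 2 * ∑ i, ∑ d, v y i d ^ 2 + (1 + ∑ e, b y e ^ 2) := by
  rw [posWitness, witnessState_dotProduct]
  simp [dotProduct, Fintype.sum_option, Finset.mul_sum, ← pow_two, mul_pow]

lemma negWitness_dotProduct_self (i₀ : ι) (κ : ℝ) (u : (ι → Fin 2) → ι → D → ℝ)
    (a : (ι → Fin 2) → E → ℝ) (x : ι → Fin 2) :
    negWitness i₀ κ u a x ⬝ᵥ negWitness i₀ κ u a x =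
      κ⁻¹ ^ 2 * ∑ i, ∑ d, u x i d ^ 2 + (1 + ∑ e, a x e ^ 2) := by
  have hguess : ∀ (z : Fin 2) (r : ℝ),
      ∑ c, (if c = z then 0 else r) * (if c = z then 0 else r) = r ^ 2 := by
    intro z r
    fin_cases z <;> simp [pow_two]
  rw [negWitness, witnessState_dotProduct]
  simp only [hguess, neg_sq, mul_pow, ← Finset.mul_sum]
  simp [dotProduct, Fintype.sum_option, ← pow_two]

lemma negWitness_dotProduct_posWitness (i₀ : ι) {κ : ℝ} (hκ : κ ≠ 0)
    (u v : (ι → Fin 2) → ι → D → ℝ) (a b : (ι → Fin 2) → E → ℝ) (x y : ι → Fin 2) :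
    negWitness i₀ κ u a x ⬝ᵥ posWitness i₀ κ v b y =
      1 - (∑ i, ∑ d, (if x i = y i then 0 else u x i d * v y i d) + ∑ e, a x e * b y e) := by
  have hguess : ∀ (z z' : Fin 2) (r r' : ℝ),
      ∑ c, (if c = z then 0 else -(κ⁻¹ * r)) * (if c = z' then κ * r' else 0) =
        -if z = z' then 0 else r * r' := by
    intro z z' r r'
    fin_cases z <;> fin_cases z' <;> simp [mul_mul_mul_comm _ r, hκ]
  rw [negWitness, posWitness, witnessState_dotProduct]
  simp only [hguess, Finset.sum_neg_distrib]
  simp [dotProduct, Fintype.sum_option]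
  ring

lemma witnessStart_dotProduct_self (i₀ : ι) :
    witnessStart D E i₀ ⬝ᵥ witnessStart D E i₀ = 1 := by
  rw [witnessStart, witnessState_dotProduct]
  simp [dotProduct, Fintype.sum_option]

lemma witnessStart_dotProduct_posWitness (i₀ : ι) (κ : ℝ) (v : (ι → Fin 2) → ι → D → ℝ)
    (b : (ι → Fin 2) → E → ℝ) (y : ι → Fin 2) :
    witnessStart D E i₀ ⬝ᵥ posWitness i₀ κ v b y = 1 := by
  rw [witnessStart, posWitness, witnessState_dotProduct]
  simp [dotProduct, Fintype.sum_option]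

lemma witnessError_dotProduct_self (i₀ : ι) (a : (ι → Fin 2) → E → ℝ) (x : ι → Fin 2) :
    witnessError D i₀ a x ⬝ᵥ witnessError D i₀ a x = ∑ e, a x e ^ 2 := by
  rw [witnessError, witnessState_dotProduct]
  simp [dotProduct, Fintype.sum_option, pow_two]

variable [DecidableEq D] [DecidableEq E]

variable {P : Submodule ℝ (EuclideanSpace ℝ (Reg ι (WitnessSpace D (Option E))))} {i₀ : ι} {κ : ℝ}

lemma isFixedPt_posWitness {v : (ι → Fin 2) → ι → D → ℝ} {b : (ι → Fin 2) → E → ℝ}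
    {y : ι → Fin 2} (hy : WithLp.toLp 2 (posWitness i₀ κ v b y) ∈ P) :
    Function.IsFixedPt (orthogonalIsometry (witnessStep P * phaseOracle _ y))
      (WithLp.toLp 2 (posWitness i₀ κ v b y)) := by
  have hguess : (fun i c d => if c = y i then (if c = y i then κ * v y i d else 0)
      else -(if c = y i then κ * v y i d else 0)) =
      fun i c d => if c = y i then κ * v y i d else 0 := by
    ext i c d
    split_ifs <;> simp
  rw [Function.IsFixedPt, posWitness, witnessStep_phaseOracle_witnessState, hguess]
  exact Submodule.reflection_mem_subspace_eq_self hy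

lemma exists_coboundary_witnessStart {u : (ι → Fin 2) → ι → D → ℝ} {a : (ι → Fin 2) → E → ℝ}
    {x : ι → Fin 2} (hx : WithLp.toLp 2 (negWitness i₀ κ u a x) ∈ Pᗮ) :
    ∃ w, 2 * ‖w‖ = ‖WithLp.toLp 2 (negWitness i₀ κ u a x)‖ ∧
      WithLp.toLp 2 (witnessStart D E i₀) =
        orthogonalIsometry (witnessStep P * phaseOracle _ x) w - w +
          WithLp.toLp 2 (witnessError D i₀ a x) := by
  let w : EuclideanSpace ℝ (Reg ι (WitnessSpace D (Option E))) := WithLp.toLp 2 <|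
    witnessState i₀ (fun i c d => if c = x i then 0 else κ⁻¹ * u x i d) fun o => o.elim 1 (-a x)
  have hflip : orthogonalIsometry (witnessStep P * phaseOracle _ x) w =
      -WithLp.toLp 2 (negWitness i₀ κ u a x) := by
    rw [witnessStep_phaseOracle_witnessState,
      ← Submodule.reflection_mem_subspace_orthogonalComplement_eq_neg hx, negWitness]
    congr! 5
    split_ifs <;> rfl
  refine ⟨(-1 / 2 : ℝ) • w, ?_, ?_⟩
  · rw [norm_smul, ← (orthogonalIsometry _).norm_map w, hflip, norm_neg]
    norm_num
    ring
  · rw [map_smul, hflip]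
    ext ⟨q, (⟨c, d⟩ | (_ | e))⟩ <;>
      simp only [w, witnessStart, witnessError, negWitness, witnessState, PiLp.add_apply,
        PiLp.sub_apply, PiLp.smul_apply, PiLp.neg_apply, smul_eq_mul, Pi.zero_apply, Option.elim,
        Pi.neg_apply] <;>
      split_ifs <;> ring

lemma two_thirds_le_norm_sq_birkhoffAverage_witnessStart {W : ℝ} (hW : 1 ≤ W) {T : ℕ} (hT : T ≠ 0)
    (hκ : κ ^ 2 = (10 * W)⁻¹) {v : (ι → Fin 2) → ι → D → ℝ} {b : (ι → Fin 2) → E → ℝ}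
    {y : ι → Fin 2} (hv : ∑ i, ∑ d, v y i d ^ 2 ≤ W) (hb : ∑ e, b y e ^ 2 ≤ 1 / 10)
    (hy : WithLp.toLp 2 (posWitness i₀ κ v b y) ∈ P) :
    2 / 3 ≤ ‖birkhoffAverage ℝ (orthogonalIsometry (witnessStep P * phaseOracle _ y)) id T
      (WithLp.toLp 2 (witnessStart D E i₀))‖ ^ 2 := by
  have hoverlap := inner_sq_le_norm_sq_birkhoffAverage_mul _ hT (isFixedPt_posWitness hy)
    (WithLp.toLp 2 (witnessStart D E i₀))
  have hnorm : ‖WithLp.toLp 2 (posWitness i₀ κ v b y)‖ ^ 2 ≤ 12 / 10 := by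
    have hquery : (10 * W)⁻¹ * ∑ i, ∑ d, v y i d ^ 2 ≤ 1 / 10 := by
      rw [inv_mul_le_iff₀ (by positivity)]
      linarith
    rw [← real_inner_self_eq_norm_sq, EuclideanSpace.inner_toLp_toLp, star_trivial,
      posWitness_dotProduct_self, hκ]
    linarith
  rw [EuclideanSpace.inner_toLp_toLp, star_trivial, dotProduct_comm,
    witnessStart_dotProduct_posWitness, one_pow] at hoverlap
  nlinarith [sq_nonneg ‖birkhoffAverage ℝ (orthogonalIsometry (witnessStep P * phaseOracle _ y)) id
    T (WithLp.toLp 2 (witnessStart D E i₀))‖]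

lemma norm_sq_birkhoffAverage_witnessStart_le_one_third {W : ℝ} (hW : 1 ≤ W) {T : ℕ}
    (hT : 100 * W ≤ T) (hκ : κ⁻¹ ^ 2 = 10 * W) {u : (ι → Fin 2) → ι → D → ℝ}
    {a : (ι → Fin 2) → E → ℝ} {x : ι → Fin 2} (hu : ∑ i, ∑ d, u x i d ^ 2 ≤ W)
    (ha : ∑ e, a x e ^ 2 ≤ 1 / 100) (hx : WithLp.toLp 2 (negWitness i₀ κ u a x) ∈ Pᗮ) :
    ‖birkhoffAverage ℝ (orthogonalIsometry (witnessStep P * phaseOracle _ x)) id T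
      (WithLp.toLp 2 (witnessStart D E i₀))‖ ^ 2 ≤ 1 / 3 := by
  obtain ⟨w, hw, hstart⟩ := exists_coboundary_witnessStart hx
  have hwitness : ‖WithLp.toLp 2 (negWitness i₀ κ u a x)‖ ≤ 4 * W := by
    refine abs_le_of_sq_le_sq' ?_ (by positivity) |>.2
    rw [← real_inner_self_eq_norm_sq, EuclideanSpace.inner_toLp_toLp, star_trivial,
      negWitness_dotProduct_self, hκ]
    nlinarith
  have herror : ‖WithLp.toLp 2 (witnessError D i₀ a x)‖ ≤ 1 / 10 := by
    refine abs_le_of_sq_le_sq' ?_ (by positivity) |>.2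
    rw [← real_inner_self_eq_norm_sq, EuclideanSpace.inner_toLp_toLp, star_trivial,
      witnessError_dotProduct_self]
    exact ha.trans_eq (by norm_num)
  have haverage : ‖birkhoffAverage ℝ (orthogonalIsometry (witnessStep P * phaseOracle _ x)) id T
      (WithLp.toLp 2 (witnessStart D E i₀))‖ ≤ 1 / 25 + 1 / 10 := by
    rw [hstart]
    refine (norm_birkhoffAverage_coboundary_add_le _ T w _).trans (add_le_add ?_ herror)
    rw [hw, div_le_iff₀ (by linarith)]
    linarith
  refine (pow_le_pow_left₀ (norm_nonneg _) haverage 2).trans (by norm_num)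

end WitnessAlgorithm

theorem isQuantumComputable_of_filteredGammaLe {ι : Type} [Fintype ι] [DecidableEq ι] [Nonempty ι]
    {f : PartialFn ι fun _ => 2} {K : (ι → Fin 2) → (ι → Fin 2) → ℝ} {W : ℝ} (hW : 1 ≤ W)
    (hK : FilteredGammaLe K W) {E : Type} [Fintype E] {a b : (ι → Fin 2) → E → ℝ}
    (hab : ∀ x y, f x = some false → f y = some true → K x y + ∑ e, a x e * b y e = 1)
    (ha : ∀ x, ∑ e, a x e ^ 2 ≤ 1 / 100) (hb : ∀ y, ∑ e, b y e ^ 2 ≤ 1 / 10) :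
    IsQuantumComputable f (⌈100 * W⌉₊ + 1) := by
  classical
  obtain ⟨D, _, u, v, hKuv, hu, hv⟩ := hK
  let i₀ : ι := Classical.arbitrary ι
  let κ : ℝ := (√(10 * W))⁻¹
  have hκ : κ ^ 2 = (10 * W)⁻¹ := by rw [inv_pow, Real.sq_sqrt (by positivity)]
  have hκ0 : κ ≠ 0 := by positivity
  have hT : 100 * W ≤ ⌈100 * W⌉₊ := Nat.le_ceil _
  have hT0 : ⌈100 * W⌉₊ ≠ 0 := (Nat.ceil_pos.mpr (by positivity)).ne'
  let P : Submodule ℝ (EuclideanSpace ℝ (Reg ι (WitnessSpace D (Option E)))) :=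
    Submodule.span ℝ ((fun y => WithLp.toLp 2 (posWitness i₀ κ v b y)) '' {y | f y = some true})
  have horth : ∀ x, f x = some false → WithLp.toLp 2 (negWitness i₀ κ u a x) ∈ Pᗮ := by
    intro x hx
    refine Submodule.isOrtho_span.mpr ?_ (Submodule.mem_span_singleton_self _)
    rintro _ rfl _ ⟨y, hy, rfl⟩
    rw [EuclideanSpace.inner_toLp_toLp, star_trivial, dotProduct_comm,
      negWitness_dotProduct_posWitness i₀ hκ0, ← hKuv, hab x y hx hy, sub_self]
  refine isQuantumComputable_of_norm_birkhoffAverage hT0 (witnessStep P)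
    (witnessStart_dotProduct_self i₀) (fun x => phaseOracle_mulVec_witnessState_zero x i₀ _)
    (fun y hy => ?_) fun x hx => ?_
  · exact two_thirds_le_norm_sq_birkhoffAverage_witnessStart hW hT0 hκ (hv y) (hb y)
      (Submodule.subset_span ⟨y, hy, rfl⟩)
  · exact norm_sq_birkhoffAverage_witnessStart_le_one_third hW hT
      (by rw [inv_pow, hκ, inv_inv]) (hu x) (ha x) (horth x hx)

/-! ### Closure properties of the filtered norm -/

section GammaTwo

variable {X α : Type*}

/-- The kernel `g` has `γ₂`-norm at most `A`: it is a Gram-type kernel with vectors of squared norm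
at most `A`. -/
def GammaTwoLe (g : X → X → ℝ) (A : ℝ) : Prop :=
  ∃ (D : Type) (_ : Fintype D) (a b : X → D → ℝ),
    (∀ z z', g z z' = ∑ d, a z d * b z' d) ∧
    (∀ z, ∑ d, a z d ^ 2 ≤ A) ∧ ∀ z, ∑ d, b z d ^ 2 ≤ A

open Classical in
/-- The indicator kernel of `h z ≠ h z'`; its filtered norm measures how many quantum queries
it takes to compute the quantity `h`. -/
noncomputable def neKernel (h : X → α) (z z' : X) : ℝ :=
  if h z = h z' then 0 else 1

lemma neKernel_congr {β : Type*} {h : X → α} {h' : X → β}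
    (H : ∀ z z', h z = h z' ↔ h' z = h' z') : neKernel h = neKernel h' := by
  classical
  ext z z'
  exact if_congr (H z z') rfl rfl

lemma gammaTwoLe_one_sub_neKernel {α : Type} [Finite α] (h : X → α) :
    GammaTwoLe (fun z z' => 1 - neKernel h z z') 1 := by
  classical
  have := Fintype.ofFinite α
  refine ⟨α, inferInstance, fun z d => if h z = d then 1 else 0,
    fun z d => if h z = d then 1 else 0, fun z z' => ?_, fun z => ?_, fun z => ?_⟩
  · by_cases h1 : h z = h z' <;> simp [neKernel, h1]
  · simp
  · simp

lemma gammaTwoLe_neKernel_prop (P : X → Prop) : GammaTwoLe (neKernel P) 1 := by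
  classical
  refine ⟨Bool, inferInstance, fun z d => if decide (P z) = d then 1 else 0,
    fun z d => if decide (P z) = d then 0 else 1, fun z z' => ?_, fun z => ?_, fun z => ?_⟩
  · simp only [neKernel, Fintype.sum_bool, eq_iff_iff]
    by_cases h1 : P z <;> by_cases h2 : P z' <;> simp [h1, h2]
  · by_cases h1 : P z <;> simp [h1]
  · by_cases h1 : P z <;> simp [h1]

end GammaTwo

section SearchWeight

variable {X E : Type*} [Fintype E] {P : E → X → Prop}

open Classical in
/-- The weights of the search for a failing index: on an input without one every index has weight
`|E|^(-1/4)`, otherwise the failing index chosen by `w` has weight `|E|^(1/4)`. The flag keeps the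
two kinds of inputs apart. -/
noncomputable def searchWeight (P : E → X → Prop) (w : X → E) (e : E)
    (z : X) (flag : Bool) : ℝ :=
  if ∀ e, P e z then (if flag then (√√(Fintype.card E))⁻¹ else 0)
  else if flag then 0 else if e = w z then √√(Fintype.card E) else 0

lemma sum_sq_searchWeight (w : X → E) (z : X) :
    ∑ e, (searchWeight P w e z true ^ 2 + searchWeight P w e z false ^ 2) =
      √(Fintype.card E) := by
  classical
  have hsq : √√(Fintype.card E) ^ 2 = √(Fintype.card E) := Real.sq_sqrt (Real.sqrt_nonneg _)
  by_cases h : ∀ e, P e z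
  · have hinv : Fintype.card E * (√√(Fintype.card E))⁻¹ ^ 2 = √(Fintype.card E) := by
      rw [inv_pow, hsq, ← div_eq_mul_inv, Real.div_sqrt]
    simp [searchWeight, h, hinv, -inv_pow]
  · simp [searchWeight, h, hsq, ite_pow]

lemma sum_searchWeight_mul_neKernel [Nonempty E] {w : X → E}
    (hw : ∀ z, ¬ (∀ e, P e z) → ¬ P (w z) z) (z z' : X) :
    ∑ e, (searchWeight P w e z true * searchWeight P w e z' false +
      searchWeight P w e z false * searchWeight P w e z' true) * neKernel (P e) z z' =
      neKernel (fun z => ∀ e, P e z) z z' := by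
  classical
  have hpos : √√(Fintype.card E : ℝ) ≠ 0 := by positivity
  by_cases h : ∀ e, P e z <;> by_cases h' : ∀ e, P e z'
  · simp [searchWeight, neKernel, h, h']
  · rw [Finset.sum_eq_single (w z') (fun e _ he => by simp [searchWeight, h, h', he]) (by simp)]
    simp [searchWeight, neKernel, h, h', hw z' h', hpos]
  · rw [Finset.sum_eq_single (w z) (fun e _ he => by simp [searchWeight, h, h', he]) (by simp)]
    simp [searchWeight, neKernel, h, h', hw z h, hpos]
  · simp [searchWeight, neKernel, h, h']

end SearchWeight

namespace FilteredGammaLe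

variable {ι : Type} [Fintype ι] {K K' : (ι → Fin 2) → (ι → Fin 2) → ℝ} {W W' A : ℝ}

lemma mono (h : FilteredGammaLe K W) (hW : W ≤ W') : FilteredGammaLe K W' := by
  obtain ⟨D, hD, u, v, hK, hu, hv⟩ := h
  exact ⟨D, hD, u, v, hK, fun z => (hu z).trans hW, fun z => (hv z).trans hW⟩

lemma nonneg (h : FilteredGammaLe K W) : 0 ≤ W := by
  obtain ⟨D, hD, u, -, -, hu, -⟩ := h
  exact (Finset.sum_nonneg fun i _ => Finset.sum_nonneg fun d _ => sq_nonneg _).trans (hu 0)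

lemma zero : FilteredGammaLe (fun _ _ : ι → Fin 2 => 0) 0 :=
  ⟨Empty, inferInstance, fun _ _ _ => 0, fun _ _ _ => 0, by simp, by simp, by simp⟩

lemma add (h : FilteredGammaLe K W) (h' : FilteredGammaLe K' W') :
    FilteredGammaLe (fun z z' => K z z' + K' z z') (W + W') := by
  obtain ⟨D, hD, u, v, hK, hu, hv⟩ := h
  obtain ⟨D', hD', u', v', hK', hu', hv'⟩ := h'
  refine ⟨D ⊕ D', inferInstance, fun z i => Sum.elim (u z i) (u' z i),
    fun z i => Sum.elim (v z i) (v' z i), fun z z' => ?_, fun z => ?_, fun z => ?_⟩ <;>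
    simp only [Fintype.sum_sum_type, Sum.elim_inl, Sum.elim_inr, Finset.sum_add_distrib]
  · rw [hK, hK']
  · exact add_le_add (hu z) (hu' z)
  · exact add_le_add (hv z) (hv' z)

lemma sum_sq_tensor_le {X E D : Type*} [Fintype E] [Fintype D] {D' : E → Type*}
    [∀ e, Fintype (D' e)] {c : E → X → D → ℝ} {w : ∀ e, X → ι → D' e → ℝ} (hW : 0 ≤ W)
    (hc : ∀ z, ∑ e, ∑ d, c e z d ^ 2 ≤ A) (hw : ∀ e z, ∑ i, ∑ d, w e z i d ^ 2 ≤ W) (z : X) :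
    ∑ i, ∑ p : Σ e, D × D' e, (c p.1 z p.2.1 * w p.1 z i p.2.2) ^ 2 ≤ A * W :=
  calc ∑ i, ∑ p : Σ e, D × D' e, (c p.1 z p.2.1 * w p.1 z i p.2.2) ^ 2
      = ∑ e, ∑ d, c e z d ^ 2 * ∑ i, ∑ d', w e z i d' ^ 2 := by
        simp only [Fintype.sum_sigma, Fintype.sum_prod_type, mul_pow, Finset.mul_sum]
        rw [Finset.sum_comm]
        exact Finset.sum_congr rfl fun e _ => Finset.sum_comm
    _ ≤ ∑ e, ∑ d, c e z d ^ 2 * W := by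
        gcongr with e _ d _
        exact hw e z
    _ = (∑ e, ∑ d, c e z d ^ 2) * W := by simp only [Finset.sum_mul]
    _ ≤ A * W := by gcongr; exact hc z

lemma sum_mul {E D : Type} [Fintype E] [Fintype D] {K : E → (ι → Fin 2) → (ι → Fin 2) → ℝ}
    (h : ∀ e, FilteredGammaLe (K e) W) (hW : 0 ≤ W) {a b : E → (ι → Fin 2) → D → ℝ}
    (ha : ∀ z, ∑ e, ∑ d, a e z d ^ 2 ≤ A) (hb : ∀ z, ∑ e, ∑ d, b e z d ^ 2 ≤ A) :
    FilteredGammaLe (fun z z' => ∑ e, (∑ d, a e z d * b e z' d) * K e z z') (A * W) := by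
  choose D' hD' u v hK hu hv using h
  refine ⟨Σ e, D × D' e, inferInstance, fun z i p => a p.1 z p.2.1 * u p.1 z i p.2.2,
    fun z i p => b p.1 z p.2.1 * v p.1 z i p.2.2, fun z z' => ?_,
    sum_sq_tensor_le hW ha hu, sum_sq_tensor_le hW hb hv⟩
  simp only [Fintype.sum_sigma, Fintype.sum_prod_type, hK, Finset.mul_sum, Finset.sum_mul]
  conv_rhs => rw [Finset.sum_comm]
  refine Finset.sum_congr rfl fun e _ => Finset.sum_congr rfl fun i _ => ?_
  rw [Finset.sum_comm]
  refine Finset.sum_congr rfl fun d _ => Finset.sum_congr rfl fun d' _ => ?_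
  split_ifs
  · exact mul_zero _
  · ring

lemma gammaTwo_mul {g : (ι → Fin 2) → (ι → Fin 2) → ℝ} (hK : FilteredGammaLe K W)
    (hg : GammaTwoLe g A) : FilteredGammaLe (fun z z' => g z z' * K z z') (A * W) := by
  obtain ⟨D, hD, a, b, h, ha, hb⟩ := hg
  have := sum_mul (E := Unit) (K := fun _ => K) (a := fun _ => a) (b := fun _ => b) (fun _ => hK)
    hK.nonneg (by simpa using ha) (by simpa using hb)
  simpa [h] using this

lemma one_sub_prod {E : Type*} {s : Finset E} {g : E → (ι → Fin 2) → (ι → Fin 2) → ℝ}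
    (h : ∀ e, FilteredGammaLe (fun z z' => 1 - g e z z') W) (hg : ∀ e, GammaTwoLe (g e) 1) :
    FilteredGammaLe (fun z z' => 1 - ∏ e ∈ s, g e z z') (s.card * W) := by
  classical
  induction s using Finset.induction_on with
  | empty => simpa using zero
  | insert e s he ih =>
    convert (h e).add (ih.gammaTwo_mul (hg e)) using 1
    · ext z z'
      rw [Finset.prod_insert he]
      ring
    · rw [Finset.card_insert_of_notMem he]
      push_cast
      ring

lemma comap {ι' : Type} [Fintype ι'] (h : FilteredGammaLe K W) (e : ι → ι') :
    FilteredGammaLe (fun z z' : ι' → Fin 2 => K (z ∘ e) (z' ∘ e)) W := by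
  classical
  obtain ⟨D, hD, u, v, hK, hu, hv⟩ := h
  have hnorm : ∀ w : (ι → Fin 2) → ι → D → ℝ, (∀ z, ∑ i, ∑ d, w z i d ^ 2 ≤ W) →
      ∀ z : ι' → Fin 2, ∑ j, ∑ p : ι × D, (if j = e p.1 then w (z ∘ e) p.1 p.2 else 0) ^ 2 ≤ W := by
    intro w hw z
    rw [Finset.sum_comm]
    simpa [ite_pow, Fintype.sum_prod_type] using hw (z ∘ e)
  refine ⟨ι × D, inferInstance, fun z j p => if j = e p.1 then u (z ∘ e) p.1 p.2 else 0,
    fun z j p => if j = e p.1 then v (z ∘ e) p.1 p.2 else 0, fun z z' => ?_, hnorm u hu,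
    hnorm v hv⟩
  beta_reduce
  rw [Finset.sum_comm, hK, Fintype.sum_prod_type]
  refine Finset.sum_congr rfl fun i _ => Finset.sum_congr rfl fun d _ => ?_
  rw [Finset.sum_eq_single (e i) (fun j _ hj => by simp [hj]) (by simp)]
  simp

lemma neKernel_apply (i : ι) : FilteredGammaLe (neKernel fun z : ι → Fin 2 => z i) 1 := by
  classical
  refine ⟨Unit, inferInstance, fun _ j _ => if j = i then 1 else 0,
    fun _ j _ => if j = i then 1 else 0, fun z z' => ?_, fun z => ?_, fun z => ?_⟩
  · simp only [Finset.univ_unique, Finset.sum_singleton, mul_ite, mul_one, mul_zero, neKernel]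
    rw [Finset.sum_eq_single i (fun j _ hj => by simp [hj]) (by simp)]
    simp
  · simp
  · simp

variable {α : Type*} {h : (ι → Fin 2) → α}

lemma neKernel_of_determined (hh : FilteredGammaLe (neKernel h) W) {P : (ι → Fin 2) → Prop}
    (hP : ∀ z z', h z = h z' → (P z ↔ P z')) : FilteredGammaLe (neKernel P) W := by
  convert hh.gammaTwo_mul (gammaTwoLe_neKernel_prop P) using 1
  · ext z z'
    by_cases h1 : h z = h z'
    · simp [neKernel, h1, hP z z' h1]
    · simp [neKernel, h1]
  · exact (one_mul W).symm

lemma neKernel_pi {E α : Type} [Fintype E] [Finite α] {h : E → (ι → Fin 2) → α}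
    (hh : ∀ e, FilteredGammaLe (neKernel (h e)) W) :
    FilteredGammaLe (neKernel fun z e => h e z) (Fintype.card E * W) := by
  classical
  have hprod := one_sub_prod (s := Finset.univ) (g := fun e z z' => 1 - neKernel (h e) z z')
    (W := W) (by simpa using hh) fun e => gammaTwoLe_one_sub_neKernel (h e)
  rw [Finset.card_univ] at hprod
  convert hprod using 1
  ext z z'
  simp only [neKernel, funext_iff]
  split_ifs with h1
  · simp [h1]
  · obtain ⟨e, he⟩ := not_forall.mp h1
    rw [Finset.prod_eq_zero (Finset.mem_univ e) (by simp [he]), sub_zero]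

lemma neKernel_prod {α : Type} [Finite α] {h : (ι → Fin 2) → α} {β : Type*}
    {g : α → (ι → Fin 2) → β} (hh : FilteredGammaLe (neKernel h) W)
    (hg : ∀ a, FilteredGammaLe (neKernel (g a)) W') (hW' : 0 ≤ W') :
    FilteredGammaLe (neKernel fun z => (h z, g (h z) z)) (W + W') := by
  classical
  have := Fintype.ofFinite α
  have hchoice := sum_mul (D := Unit) (A := 1) hg hW'
    (a := fun a z _ => if h z = a then 1 else 0) (b := fun a z _ => if h z = a then 1 else 0)
    (by simp) (by simp)
  convert hh.add hchoice using 1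
  · ext z z'
    simp only [Finset.univ_unique, Finset.sum_const, Finset.card_singleton, one_smul, ite_mul,
      one_mul, zero_mul, Finset.sum_ite_eq, Finset.mem_univ, if_true]
    by_cases h1 : h z = h z'
    · simp [neKernel, h1]
    · simp [neKernel, h1, Ne.symm h1]
  · rw [one_mul]

lemma neKernel_and {P R : (ι → Fin 2) → Prop} (hP : FilteredGammaLe (neKernel P) W)
    (hR : FilteredGammaLe (neKernel R) W') :
    FilteredGammaLe (neKernel fun z => P z ∧ R z) (W + W') := by
  refine (hP.neKernel_prod (fun _ => hR) hR.nonneg).neKernel_of_determined fun z z' hz => ?_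
  simp only [Prod.mk.injEq, eq_iff_iff] at hz
  rw [hz.1, hz.2]

section Quantifiers

variable {E : Type} [Fintype E] [Nonempty E] {P : E → (ι → Fin 2) → Prop}

lemma neKernel_forall (hP : ∀ e, FilteredGammaLe (neKernel (P e)) W) :
    FilteredGammaLe (neKernel fun z => ∀ e, P e z) (√(Fintype.card E) * W) := by
  obtain ⟨w, hw⟩ : ∃ w : (ι → Fin 2) → E, ∀ z, ¬ (∀ e, P e z) → ¬ P (w z) z := by
    refine ⟨fun z => Classical.epsilon fun e => ¬ P e z, fun z hz => ?_⟩
    exact Classical.epsilon_spec (not_forall.mp hz)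
  have hsum := sum_mul hP (hP (Classical.arbitrary E)).nonneg (D := Bool) (A := √(Fintype.card E))
    (a := searchWeight P w) (b := fun e z flag => searchWeight P w e z !flag)
    (fun z => by simpa using (sum_sq_searchWeight w z).le)
    (fun z => by simpa [add_comm] using (sum_sq_searchWeight w z).le)
  simpa only [Fintype.sum_bool, Bool.not_true, Bool.not_false,
    sum_searchWeight_mul_neKernel hw] using hsum

lemma neKernel_exists (hP : ∀ e, FilteredGammaLe (neKernel (P e)) W) :
    FilteredGammaLe (neKernel fun z => ∃ e, P e z) (√(Fintype.card E) * W) := by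
  have hnot : ∀ Q : (ι → Fin 2) → Prop, neKernel (fun z => ¬ Q z) = neKernel Q := fun Q =>
    neKernel_congr fun z z' => by rw [eq_iff_iff, eq_iff_iff, not_iff_not]
  have h := neKernel_forall (P := fun e z => ¬ P e z) (W := W) fun e => (hnot (P e)).symm ▸ hP e
  rw [← hnot]
  simpa only [not_exists] using h

end Quantifiers

end FilteredGammaLe

/-! ### Fourier sampling of tables -/

/-- The group `(ℤ/2)^k` of bit vectors of length `k`. -/
abbrev Vec (k : ℕ) := Fin k → Fin 2

lemma card_vec (k : ℕ) : Fintype.card (Vec k) = 2 ^ k := by simp [Vec]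

section Fourier

variable {k : ℕ}

lemma vec_add_self (y : Vec k) : y + y = 0 := by
  ext h
  simp only [Pi.add_apply, Pi.zero_apply]
  generalize y h = b
  revert b; decide

lemma vec_add_eq_zero_iff {y y' : Vec k} : y + y' = 0 ↔ y = y' := by
  rw [← add_left_inj y', add_assoc, vec_add_self, add_zero, zero_add]

/-- The real character `y ↦ (-1)^⟨η, y⟩` of the group of bit vectors with frequency `η`. -/
def walshChar (η y : Vec k) : ℝ := ∏ h, if η h = 1 ∧ y h = 1 then -1 else 1

lemma walshChar_add (η y y' : Vec k) :
    walshChar η (y + y') = walshChar η y * walshChar η y' := by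
  simp only [walshChar, ← Finset.prod_mul_distrib, Pi.add_apply]
  have bit : ∀ a b c : Fin 2, (if a = 1 ∧ b + c = 1 then (-1 : ℝ) else 1) =
      (if a = 1 ∧ b = 1 then -1 else 1) * if a = 1 ∧ c = 1 then -1 else 1 := by
    intro a b c
    fin_cases a <;> fin_cases b <;> fin_cases c <;> simp
  exact Finset.prod_congr rfl fun h _ => bit _ _ _

lemma walshChar_mul_self (η y : Vec k) : walshChar η y * walshChar η y = 1 := by
  rw [← walshChar_add, vec_add_self]
  simp [walshChar]

lemma sum_walshChar (s : Vec k) : ∑ η : Vec k, walshChar η s = if s = 0 then 2 ^ k else 0 := by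
  have hprod : ∑ η : Vec k, walshChar η s =
      ∏ h : Fin k, ∑ b : Fin 2, if b = 1 ∧ s h = 1 then (-1 : ℝ) else 1 := by
    rw [Finset.prod_univ_sum]
    simp [walshChar, Fintype.piFinset_univ]
  rw [hprod]
  split_ifs with hs
  · subst hs
    simp
  · obtain ⟨h, hh⟩ := Function.ne_iff.mp hs
    refine Finset.prod_eq_zero (Finset.mem_univ h) ?_
    simp [Fin.eq_one_of_ne_zero (s h) hh]

lemma sum_walshChar_mul_walshChar (y y' : Vec k) :
    ∑ η : Vec k, walshChar η y * walshChar η y' = if y = y' then 2 ^ k else 0 := by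
  simp only [← walshChar_add, sum_walshChar, vec_add_eq_zero_iff]

/-- The amplitude of the outcome `(η, a)` when Fourier sampling the table `x`: the uniform
superposition of the pairs `(y, x y)` is Hadamard-transformed in its first register. -/
noncomputable def sampleAmp (x : Vec k → Vec k) (p : Vec k × Vec k) : ℝ :=
  (2 ^ k)⁻¹ * ∑ y, if x y = p.2 then walshChar p.1 y else 0

/- Parseval in the first register. -/
lemma sum_sampleAmp_mul_sampleAmp (x x' : Vec k → Vec k) :
    ∑ p, sampleAmp x p * sampleAmp x' p = (2 ^ k)⁻¹ * ∑ y, if x y = x' y then 1 else 0 := by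
  have hexpand : ∀ p : Vec k × Vec k, sampleAmp x p * sampleAmp x' p =
      (2 ^ k)⁻¹ * ((2 ^ k)⁻¹ * ∑ y, ∑ y', (walshChar p.1 y * walshChar p.1 y') *
        ((if x y = p.2 then 1 else 0) * (if x' y' = p.2 then 1 else 0))) := by
    intro p
    simp only [sampleAmp]
    rw [mul_mul_mul_comm, mul_assoc, Finset.sum_mul_sum]
    congr! 4 with y _ y' _
    split_ifs <;> simp
  simp only [hexpand, ← Finset.mul_sum]
  congr 1
  calc (2 ^ k : ℝ)⁻¹ * ∑ p : Vec k × Vec k, ∑ y, ∑ y', (walshChar p.1 y * walshChar p.1 y') *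
        ((if x y = p.2 then 1 else 0) * (if x' y' = p.2 then 1 else 0))
      = (2 ^ k : ℝ)⁻¹ * ∑ y, ∑ y', (∑ η : Vec k, walshChar η y * walshChar η y') *
        ∑ a, ((if x y = a then 1 else 0) * (if x' y' = a then 1 else 0)) := by
        congr 1
        rw [Finset.sum_comm]
        refine Finset.sum_congr rfl fun y _ => ?_
        rw [Finset.sum_comm]
        refine Finset.sum_congr rfl fun y' _ => ?_
        rw [Fintype.sum_prod_type, Finset.sum_mul_sum]
    _ = ∑ y, if x y = x' y then 1 else 0 := by
        rw [Finset.mul_sum]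
        refine Finset.sum_congr rfl fun y _ => ?_
        rw [Finset.sum_eq_single y]
        · simp [sum_walshChar_mul_walshChar, eq_comm]
        · intro y' _ hy
          rw [sum_walshChar_mul_walshChar, if_neg hy.symm, zero_mul]
        · simp

lemma sum_sampleAmp_sq (x : Vec k → Vec k) : ∑ p, sampleAmp x p ^ 2 = 1 := by
  simp only [pow_two, sum_sampleAmp_mul_sampleAmp]
  simp

lemma walshChar_eq_one_of_sampleAmp_ne_zero {x : Vec k → Vec k} {s : Vec k}
    (hs : ∀ y, x (y + s) = x y) {p : Vec k × Vec k} (hp : sampleAmp x p ≠ 0) :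
    walshChar p.1 s = 1 := by
  have hshift : ∑ y, (if x y = p.2 then walshChar p.1 y else 0) =
      ∑ y, (if x (y + s) = p.2 then walshChar p.1 (y + s) else 0) :=
    (Equiv.sum_comp (Equiv.addRight s) fun y => if x y = p.2 then walshChar p.1 y else 0).symm
  have hinv : walshChar p.1 s * sampleAmp x p = sampleAmp x p := by
    conv_rhs => rw [sampleAmp, hshift]
    simp only [sampleAmp, hs, walshChar_add, Finset.mul_sum]
    refine Finset.sum_congr rfl fun y _ => ?_
    split_ifs
    · ring
    · simp
  exact mul_eq_right₀ hp |>.mp hinv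

lemma sum_sampleAmp_sq_snd_of_injective {x : Vec k → Vec k} (hx : Function.Injective x)
    (η : Vec k) : ∑ a, sampleAmp x (η, a) ^ 2 = (2 ^ k : ℝ)⁻¹ := by
  have hsq : ∀ y, sampleAmp x (η, x y) ^ 2 = (2 ^ k : ℝ)⁻¹ ^ 2 := by
    intro y
    simp only [sampleAmp, hx.eq_iff, Finset.sum_ite_eq', Finset.mem_univ, if_true, mul_pow]
    rw [pow_two (walshChar η y), walshChar_mul_self, mul_one]
  rw [← (Finite.injective_iff_bijective.mp hx).sum_comp fun a => sampleAmp x (η, a) ^ 2]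
  simp only [hsq, Finset.sum_const, Finset.card_univ, card_vec, nsmul_eq_mul]
  push_cast
  field_simp

lemma ite_walshChar_eq_one (η s : Vec k) [Decidable (walshChar η s = 1)] :
    (if walshChar η s = 1 then (1 : ℝ) else 0) = (1 + walshChar η s) / 2 := by
  rcases mul_self_eq_one_iff.mp (walshChar_mul_self η s) with h | h
  · simp [h]
  · norm_num [h]

open Classical in
lemma sum_sampleAmp_sq_of_injective {x : Vec k → Vec k} (hx : Function.Injective x) {s : Vec k}
    (hs : s ≠ 0) : (∑ p, if walshChar p.1 s = 1 then sampleAmp x p ^ 2 else 0) = 1 / 2 := by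
  calc (∑ p : Vec k × Vec k, if walshChar p.1 s = 1 then sampleAmp x p ^ 2 else 0)
      = ∑ η : Vec k, (if walshChar η s = 1 then (1 : ℝ) else 0) * (2 ^ k : ℝ)⁻¹ := by
        rw [Fintype.sum_prod_type]
        refine Finset.sum_congr rfl fun η _ => ?_
        split_ifs
        · rw [sum_sampleAmp_sq_snd_of_injective hx, one_mul]
        · simp
    _ = 1 / 2 := by
        rw [← Finset.sum_mul]
        simp only [ite_walshChar_eq_one, ← Finset.sum_div, Finset.sum_add_distrib, sum_walshChar,
          if_neg hs, Finset.sum_const, Finset.card_univ, card_vec, nsmul_eq_mul]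
        push_cast
        field_simp
        ring

end Fourier

section Simon

variable {k : ℕ} {I J : Type} [Fintype I] [Fintype J]

/-- The Simon promise with answers `ℓ`: the table `t i` is periodic if `ℓ i`, and injective
otherwise. -/
def FollowsPattern {I : Type} (ℓ : I → Bool) (t : I → Vec k → Vec k) : Prop :=
  ∀ i, if ℓ i then ∃ s, s ≠ 0 ∧ ∀ y, t i (y + s) = t i y else Function.Injective (t i)

/-- The joint amplitude of independent Fourier samples of the tables `t i`, one for each
`j : J`. -/
noncomputable def jointAmp (t : I → Vec k → Vec k) (κ : I × J → Vec k × Vec k) : ℝ :=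
  ∏ e, sampleAmp (t e.1) (κ e)

open Classical in
/-- The pattern inferred from the samples by Simon's algorithm: `i` is declared periodic if some
`s ≠ 0` is orthogonal to all frequencies sampled from the table `i`. -/
noncomputable def inferredPattern {I J : Type} (κ : I × J → Vec k × Vec k) (i : I) : Bool :=
  decide (∃ s, s ≠ 0 ∧ ∀ j, walshChar (κ (i, j)).1 s = 1)

lemma exists_orthogonal_of_inferredPattern_ne {t : I → Vec k → Vec k} {ℓ : I → Bool}
    (ht : FollowsPattern ℓ t) {κ : I × J → Vec k × Vec k} (hκ : jointAmp t κ ≠ 0)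
    (hne : inferredPattern κ ≠ ℓ) :
    ∃ i s, ℓ i = false ∧ s ≠ 0 ∧ ∀ j, walshChar (κ (i, j)).1 s = 1 := by
  obtain ⟨i, hi⟩ := Function.ne_iff.mp hne
  have hti := ht i
  cases hℓ : ℓ i with
  | true =>
    rw [hℓ] at hi hti
    obtain ⟨s, hs, hper⟩ := hti
    refine absurd ?_ hi
    simp only [inferredPattern, decide_eq_true_eq]
    exact ⟨s, hs, fun j => walshChar_eq_one_of_sampleAmp_ne_zero hper
      (Finset.prod_ne_zero_iff.mp hκ (i, j) (Finset.mem_univ _))⟩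
  | false =>
    rw [hℓ] at hi
    simp only [inferredPattern, Bool.not_eq_false, decide_eq_true_eq] at hi
    obtain ⟨s, hs, hj⟩ := hi
    exact ⟨i, s, hℓ, hs, hj⟩

variable [DecidableEq I] [DecidableEq J]

lemma sum_jointAmp_mul (t t' : I → Vec k → Vec k) :
    ∑ κ : I × J → Vec k × Vec k, jointAmp t κ * jointAmp t' κ =
      ∏ e : I × J, ∑ p, sampleAmp (t e.1) p * sampleAmp (t' e.1) p := by
  rw [Finset.prod_univ_sum]
  simp [jointAmp, Finset.prod_mul_distrib, Fintype.piFinset_univ]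

lemma sum_jointAmp_sq (t : I → Vec k → Vec k) :
    ∑ κ : I × J → Vec k × Vec k, jointAmp t κ ^ 2 = 1 := by
  have h := sum_jointAmp_mul (J := J) t t
  simpa only [← pow_two, sum_sampleAmp_sq, Finset.prod_const_one] using h

open Classical in
lemma sum_jointAmp_sq_orthogonal {t : I → Vec k → Vec k} {i : I}
    (hi : Function.Injective (t i)) {s : Vec k} (hs : s ≠ 0) :
    (∑ κ : I × J → Vec k × Vec k,
      if ∀ j, walshChar (κ (i, j)).1 s = 1 then jointAmp t κ ^ 2 else 0) =
        (1 / 2) ^ Fintype.card J := by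
  have hfactor : ∀ κ : I × J → Vec k × Vec k,
      (if ∀ j, walshChar (κ (i, j)).1 s = 1 then jointAmp t κ ^ 2 else 0) =
      ∏ e, if e.1 = i ∧ walshChar (κ e).1 s ≠ 1 then 0 else sampleAmp (t e.1) (κ e) ^ 2 := by
    intro κ
    split_ifs with h
    · rw [jointAmp, ← Finset.prod_pow]
      refine Finset.prod_congr rfl fun e _ => (if_neg ?_).symm
      rintro ⟨rfl, hne⟩
      exact hne (h e.2)
    · push Not at h
      obtain ⟨j, hj⟩ := h
      exact (Finset.prod_eq_zero (Finset.mem_univ (i, j)) (by simp [hj])).symm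
  have hsample : ∀ e : I × J, (∑ p : Vec k × Vec k,
      if e.1 = i ∧ walshChar p.1 s ≠ 1 then 0 else sampleAmp (t e.1) p ^ 2) =
        if e.1 = i then 1 / 2 else 1 := by
    intro e
    by_cases he : e.1 = i
    · simp only [he, true_and, if_true, ← sum_sampleAmp_sq_of_injective hi hs]
      refine Finset.sum_congr rfl fun p _ => ?_
      by_cases hc : walshChar p.1 s = 1 <;> simp [hc]
    · simp [he, sum_sampleAmp_sq]
  have hswap := Finset.prod_univ_sum
    (fun _ : I × J => (Finset.univ : Finset (Vec k × Vec k)))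
    (fun e p => if e.1 = i ∧ walshChar p.1 s ≠ 1 then 0 else sampleAmp (t e.1) p ^ 2)
  rw [Fintype.piFinset_univ] at hswap
  simp only [hfactor]
  rw [← hswap]
  simp only [hsample]
  rw [Fintype.prod_prod_type]
  simp [Finset.prod_ite_eq']

open Classical in
lemma sum_jointAmp_sq_inferredPattern_ne {t : I → Vec k → Vec k} {ℓ : I → Bool}
    (ht : FollowsPattern ℓ t) :
    (∑ κ : I × J → Vec k × Vec k, if inferredPattern κ = ℓ then 0 else jointAmp t κ ^ 2) ≤
      Fintype.card I * (2 ^ k * (1 / 2) ^ Fintype.card J) := by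
  let Bad (q : I × Vec k) (κ : I × J → Vec k × Vec k) : Prop :=
    ℓ q.1 = false ∧ q.2 ≠ 0 ∧ ∀ j, walshChar (κ (q.1, j)).1 q.2 = 1
  have hnonneg : ∀ q κ, 0 ≤ if Bad q κ then jointAmp t κ ^ 2 else 0 := by
    intro q κ
    split_ifs <;> positivity
  have hunion : ∀ κ, (if inferredPattern κ = ℓ then 0 else jointAmp t κ ^ 2) ≤
      ∑ q, if Bad q κ then jointAmp t κ ^ 2 else 0 := by
    intro κ
    by_cases h : inferredPattern κ = ℓ ∨ jointAmp t κ = 0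
    · rw [show (if inferredPattern κ = ℓ then 0 else jointAmp t κ ^ 2) = 0 by aesop]
      exact Finset.sum_nonneg fun q _ => hnonneg q κ
    · push Not at h
      obtain ⟨i, s, hbad⟩ := exists_orthogonal_of_inferredPattern_ne ht h.2 h.1
      rw [if_neg h.1]
      calc jointAmp t κ ^ 2 = if Bad (i, s) κ then jointAmp t κ ^ 2 else 0 := (if_pos hbad).symm
        _ ≤ _ := Finset.single_le_sum (f := fun q => if Bad q κ then jointAmp t κ ^ 2 else 0)
          (fun q _ => hnonneg q κ) (Finset.mem_univ (i, s))
  have hbad : ∀ q, ∑ κ, (if Bad q κ then jointAmp t κ ^ 2 else 0) ≤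
      (1 / 2) ^ Fintype.card J := by
    intro q
    by_cases h : ℓ q.1 = false ∧ q.2 ≠ 0
    · have hinj := ht q.1
      rw [h.1] at hinj
      rw [← sum_jointAmp_sq_orthogonal hinj h.2]
      simp [Bad, h.1, h.2]
    · rw [Finset.sum_eq_zero fun κ _ => if_neg fun hB => h ⟨hB.1, hB.2.1⟩]
      positivity
  calc _ ≤ ∑ κ, ∑ q, (if Bad q κ then jointAmp t κ ^ 2 else 0) :=
        Finset.sum_le_sum fun κ _ => hunion κ
    _ = ∑ q, ∑ κ, (if Bad q κ then jointAmp t κ ^ 2 else 0) := Finset.sum_comm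
    _ ≤ ∑ _q : I × Vec k, (1 / 2 : ℝ) ^ Fintype.card J := Finset.sum_le_sum fun q _ => hbad q
    _ = Fintype.card I * (2 ^ k * (1 / 2) ^ Fintype.card J) := by
        simp [mul_assoc]

end Simon

/-! ### The separating function and its quantum upper bound -/

/-- The labels of the And-Or gadgets: one for each bit of each entry of each of the `3 * k`
tables. -/
abbrev Gadget (k : ℕ) := Fin (3 * k) × Vec k × Fin k

/-- The query positions: the And-Or matrices of the gadgets; the cells of the cheat sheet, indexed
by patterns, each holding for every gadget a claimed value, a row pointer and one column pointer
per row; and `k` parity bits. -/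
abbrev Position (k : ℕ) := (Gadget k × Vec k × Vec k) ⊕
  ((Fin (3 * k) → Bool) × Gadget k × Option (Option (Vec k) × Fin k)) ⊕ Fin k

section Function

variable {k : ℕ}

open Classical in
/-- The value of the And-Or gadget `g`. -/
noncomputable def andOr (z : Position k → Fin 2) (g : Gadget k) : Fin 2 :=
  if ∀ j, ∃ l, z (.inl (g, j, l)) = 1 then 1 else 0

/-- The tables encoded by the gadgets. -/
noncomputable def table (z : Position k → Fin 2) (i : Fin (3 * k)) (y : Vec k) : Vec k :=
  fun β => andOr z (i, y, β)

/-- The tables claimed in the cell `ℓ`. -/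
def claimedTable (z : Position k → Fin 2) (ℓ : Fin (3 * k) → Bool) (i : Fin (3 * k)) (y : Vec k) :
    Vec k :=
  fun β => z (.inr (.inl (ℓ, (i, y, β), none)))

/-- The pointers of the cell `ℓ` into the gadget `g`: the row pointer `o = none`, and the column
pointers `o = some j` for the rows `j`. -/
def pointer (z : Position k → Fin 2) (ℓ : Fin (3 * k) → Bool) (g : Gadget k)
    (o : Option (Vec k)) : Vec k :=
  fun β => z (.inr (.inl (ℓ, g, some (o, β))))

/-- The cell `ℓ` passes the test `(g, j)`: if it claims `1` for `g`, then its column pointer for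
row `j` points to a `1`, and if it claims `0`, then column `j` of the row it points to is `0`. -/
def PassesTest (z : Position k → Fin 2) (ℓ : Fin (3 * k) → Bool) (g : Gadget k) (j : Vec k) :
    Prop :=
  if z (.inr (.inl (ℓ, g, none))) = 1 then z (.inl (g, j, pointer z ℓ g (some j))) = 1
  else z (.inl (g, pointer z ℓ g none, j)) = 0

/-- The parity bits have even parity. -/
def EvenParity (z : Position k → Fin 2) : Prop := ∑ h, z (.inr (.inr h)) = 0

/-- The cell `ℓ` certifies that the tables follow the pattern `ℓ`. -/
def ValidCell (z : Position k → Fin 2) (ℓ : Fin (3 * k) → Bool) : Prop :=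
  EvenParity z ∧ FollowsPattern ℓ (claimedTable z ℓ) ∧
    ∀ p : Gadget k × Vec k, PassesTest z ℓ p.1 p.2

/-- The separating function: some cell is valid. -/
def Accepts (z : Position k → Fin 2) : Prop := ∃ ℓ, ValidCell z ℓ

lemma claimedTable_eq_table {z : Position k → Fin 2} {ℓ : Fin (3 * k) → Bool}
    (h : ∀ p : Gadget k × Vec k, PassesTest z ℓ p.1 p.2) : claimedTable z ℓ = table z := by
  ext i y β : 3
  simp only [claimedTable, table, andOr]
  by_cases hclaim : z (.inr (.inl (ℓ, (i, y, β), none))) = 1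
  · rw [hclaim, if_pos]
    intro j
    have htest := h ((i, y, β), j)
    simp only [PassesTest, hclaim, if_true] at htest
    exact ⟨_, htest⟩
  · rw [not_imp_comm.mp (Fin.eq_one_of_ne_zero _) hclaim, if_neg]
    intro hrows
    obtain ⟨l, hl⟩ := hrows (pointer z ℓ (i, y, β) none)
    have htest := h ((i, y, β), l)
    simp only [PassesTest, hclaim, if_false] at htest
    exact zero_ne_one (htest.symm.trans hl)

lemma ValidCell.followsPattern_table {z : Position k → Fin 2} {ℓ : Fin (3 * k) → Bool}
    (h : ValidCell z ℓ) : FollowsPattern ℓ (table z) :=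
  claimedTable_eq_table h.2.2 ▸ h.2.1

end Function

section Kernel

variable {k : ℕ}

lemma filteredGammaLe_andOr (g : Gadget k) :
    FilteredGammaLe (neKernel fun z => andOr z g) (2 ^ k) := by
  have h := FilteredGammaLe.neKernel_forall fun j : Vec k =>
    FilteredGammaLe.neKernel_exists (P := fun l (z : Position k → Fin 2) => z (.inl (g, j, l)) = 1)
      fun l => (FilteredGammaLe.neKernel_apply (.inl (g, j, l))).neKernel_of_determined
        fun z z' hz => by rw [hz]
  rw [mul_one, Real.mul_self_sqrt (Nat.cast_nonneg _), card_vec] at h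
  rw [neKernel_congr (h' := fun z : Position k → Fin 2 => ∀ j, ∃ l, z (.inl (g, j, l)) = 1)]
  · exact_mod_cast h
  · intro z z'
    simp only [andOr, eq_iff_iff]
    split_ifs with h1 h2 h2 <;> simp [h1, h2]

lemma filteredGammaLe_table (i : Fin (3 * k)) (y : Vec k) :
    FilteredGammaLe (neKernel fun z => table z i y) (k * 2 ^ k) := by
  have h := FilteredGammaLe.neKernel_pi fun β => filteredGammaLe_andOr (i, y, β)
  rwa [Fintype.card_fin] at h

lemma filteredGammaLe_sampleAmp (i : Fin (3 * k)) :
    FilteredGammaLe (fun z z' : Position k → Fin 2 =>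
      1 - ∑ p, sampleAmp (table z i) p * sampleAmp (table z' i) p) (k * 2 ^ k) := by
  have hsq : √((2 ^ k : ℝ)⁻¹) * √((2 ^ k : ℝ)⁻¹) = (2 ^ k)⁻¹ :=
    Real.mul_self_sqrt (by positivity)
  have h := FilteredGammaLe.sum_mul (D := Unit) (A := 1) (fun y => filteredGammaLe_table i y)
    (by positivity) (a := fun _ _ _ => √((2 ^ k : ℝ)⁻¹)) (b := fun _ _ _ => √((2 ^ k : ℝ)⁻¹))
    (by simp) (by simp)
  rw [one_mul] at h
  convert h using 1
  ext z z'
  have hne : ∀ y, neKernel (fun z => table z i y) z z' =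
      1 - if table z i y = table z' i y then 1 else 0 := by
    intro y
    simp only [neKernel]
    split_ifs <;> simp
  simp only [Finset.univ_unique, Finset.sum_const, Finset.card_singleton, one_smul, hsq,
    sum_sampleAmp_mul_sampleAmp, ← Finset.mul_sum, hne, Finset.sum_sub_distrib, Finset.card_univ,
    card_vec, mul_sub]
  simp

lemma gammaTwoLe_sampleAmp (i : Fin (3 * k)) :
    GammaTwoLe (fun z z' : Position k → Fin 2 =>
      ∑ p, sampleAmp (table z i) p * sampleAmp (table z' i) p) 1 :=
  ⟨_, inferInstance, fun z => sampleAmp (table z i), fun z => sampleAmp (table z i),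
    fun _ _ => rfl, fun _ => (sum_sampleAmp_sq _).le, fun _ => (sum_sampleAmp_sq _).le⟩

lemma filteredGammaLe_jointAmp (J : Type) [Fintype J] [DecidableEq J] :
    FilteredGammaLe (fun z z' : Position k → Fin 2 =>
      1 - ∑ κ : Fin (3 * k) × J → Vec k × Vec k, jointAmp (table z) κ * jointAmp (table z') κ)
      (3 * k * Fintype.card J * (k * 2 ^ k)) := by
  have h := FilteredGammaLe.one_sub_prod (s := (Finset.univ : Finset (Fin (3 * k) × J)))
    (fun e => filteredGammaLe_sampleAmp e.1) (fun e => gammaTwoLe_sampleAmp e.1)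
  simpa only [sum_jointAmp_mul, Finset.card_univ, Fintype.card_prod, Fintype.card_fin,
    Nat.cast_mul, Nat.cast_ofNat] using h

/- The test first reads the claim and the two pointers that may be needed, and then the single
position they designate. -/
lemma filteredGammaLe_passesTest (ℓ : Fin (3 * k) → Bool) (g : Gadget k) (j : Vec k) :
    FilteredGammaLe (neKernel fun z : Position k → Fin 2 => PassesTest z ℓ g j) (2 * k + 2) := by
  have hread := FilteredGammaLe.neKernel_pi (E := Option (Bool × Fin k)) fun q =>
    FilteredGammaLe.neKernel_apply (ι := Position k)
      (.inr (.inl (ℓ, g, q.map fun p => (if p.1 then some j else none, p.2))))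
  have hentry := hread.neKernel_prod (g := fun a z => z (if a none = 1
    then .inl (g, j, fun β => a (some (true, β)))
    else .inl (g, fun β => a (some (false, β)), j)))
    (fun a => FilteredGammaLe.neKernel_apply _) zero_le_one
  refine (hentry.neKernel_of_determined ?_).mono ?_
  · intro z z' hz
    obtain ⟨hreads, hvalue⟩ := Prod.ext_iff.mp hz
    simp only at hreads
    rw [← hreads] at hvalue
    have hclaim := congrFun hreads none
    have hcol : pointer z ℓ g (some j) = pointer z' ℓ g (some j) :=
      funext fun β => congrFun hreads (some (true, β))
    have hrow : pointer z ℓ g none = pointer z' ℓ g none :=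
      funext fun β => congrFun hreads (some (false, β))
    simp only [Option.map_none] at hvalue hclaim
    simp only [PassesTest, ← hclaim, ← hcol, ← hrow]
    split_ifs with h1
    · simp only [h1, if_true, Option.map_some] at hvalue
      exact iff_of_eq (congrArg (· = 1) hvalue)
    · simp only [h1, if_false, Option.map_some] at hvalue
      exact iff_of_eq (congrArg (· = 0) hvalue)
  · simp only [Fintype.card_option, Fintype.card_prod, Fintype.card_bool, Fintype.card_fin]
    push_cast
    linarith

lemma filteredGammaLe_evenParity :
    FilteredGammaLe (neKernel fun z : Position k → Fin 2 => EvenParity z) k := by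
  have h := FilteredGammaLe.neKernel_pi fun h : Fin k =>
    FilteredGammaLe.neKernel_apply (ι := Position k) (.inr (.inr h))
  rw [Fintype.card_fin, mul_one] at h
  refine h.neKernel_of_determined fun z z' hz => ?_
  have hbit : ∀ h, z (.inr (.inr h)) = z' (.inr (.inr h)) := congrFun hz
  simp only [EvenParity, hbit]

lemma filteredGammaLe_followsPattern (ℓ : Fin (3 * k) → Bool) :
    FilteredGammaLe (neKernel fun z : Position k → Fin 2 =>
      FollowsPattern ℓ (claimedTable z ℓ)) (3 * k ^ 2 * 2 ^ k) := by
  have h := FilteredGammaLe.neKernel_pi fun g : Gadget k =>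
    FilteredGammaLe.neKernel_apply (ι := Position k) (.inr (.inl (ℓ, g, none)))
  refine (h.neKernel_of_determined fun z z' hz => ?_).mono (le_of_eq ?_)
  · have hclaim : claimedTable z ℓ = claimedTable z' ℓ := by
      ext i y β : 3
      exact congrFun hz (i, y, β)
    rw [hclaim]
  · simp only [Fintype.card_prod, Fintype.card_fin, card_vec]
    push_cast
    ring

lemma filteredGammaLe_validCell (hk : 1 ≤ k) (ℓ : Fin (3 * k) → Bool) :
    FilteredGammaLe (neKernel fun z : Position k → Fin 2 => ValidCell z ℓ)
      (12 * k ^ 2 * 2 ^ k) := by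
  have : NeZero k := ⟨by lia⟩
  have hk' : (1 : ℝ) ≤ k := by exact_mod_cast hk
  have htests := FilteredGammaLe.neKernel_forall fun p : Gadget k × Vec k =>
    filteredGammaLe_passesTest ℓ p.1 p.2
  have hsqrt : √(Fintype.card (Gadget k × Vec k)) ≤ 2 * k * 2 ^ k := by
    rw [Real.sqrt_le_left (by positivity)]
    simp only [Fintype.card_prod, Fintype.card_fin, card_vec]
    push_cast
    nlinarith [show (0 : ℝ) ≤ k ^ 2 * (2 ^ k) ^ 2 by positivity]
  refine (filteredGammaLe_evenParity.neKernel_and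
    ((filteredGammaLe_followsPattern ℓ).neKernel_and htests)).mono ?_
  have hpow : (1 : ℝ) ≤ 2 ^ k := one_le_pow₀ (by norm_num)
  have hk_sq : (k : ℝ) ≤ k ^ 2 := by nlinarith
  have hk_pow : (k : ℝ) ≤ k ^ 2 * 2 ^ k := by nlinarith
  have hk_mul : (k : ℝ) * 2 ^ k ≤ k ^ 2 * 2 ^ k := by gcongr
  have hsearch : √(Fintype.card (Gadget k × Vec k)) * (2 * k + 2) ≤
      2 * k * 2 ^ k * (2 * k + 2) := by gcongr
  nlinarith

/-- The samples of the algorithm: each table is sampled `3 * k + 10` times, so that Simon's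
algorithm errs with probability at most `3 * k * 2 ^ k / 2 ^ (3 * k + 10)`. -/
abbrev Samples (k : ℕ) := Fin (3 * k) × Fin (3 * k + 10) → Vec k × Vec k

/-- The kernel of the algorithm that samples the tables, infers their pattern and checks the
cell of this pattern. -/
noncomputable def acceptKernel (z z' : Position k → Fin 2) : ℝ :=
  (1 - ∑ κ : Samples k, jointAmp (table z) κ * jointAmp (table z') κ) +
    ∑ κ : Samples k, jointAmp (table z) κ * jointAmp (table z') κ *
      neKernel (fun z => ValidCell z (inferredPattern κ)) z z'

lemma filteredGammaLe_acceptKernel (hk : 1 ≤ k) :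
    FilteredGammaLe (acceptKernel (k := k)) (51 * (k ^ 3 * 2 ^ k)) := by
  have hk' : (1 : ℝ) ≤ k := by exact_mod_cast hk
  have hcheck := FilteredGammaLe.sum_mul (D := Unit) (A := 1)
    (fun κ : Samples k => filteredGammaLe_validCell hk (inferredPattern κ)) (by positivity)
    (a := fun κ z _ => jointAmp (table z) κ) (b := fun κ z _ => jointAmp (table z) κ)
    (by simp [sum_jointAmp_sq]) (by simp [sum_jointAmp_sq])
  simp only [Finset.univ_unique, Finset.sum_singleton] at hcheck
  refine ((filteredGammaLe_jointAmp (Fin (3 * k + 10))).add hcheck).mono ?_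
  have hpow : (k : ℝ) ^ 2 * 2 ^ k ≤ k ^ 3 * 2 ^ k := by gcongr; norm_num
  rw [Fintype.card_fin]
  push_cast
  nlinarith

open Classical in
/-- The amplitude of a wrong inference on an accepted input, rescaled to balance it against
`jointAmp / 10` on the rejected ones. -/
noncomputable def errorAmp (z : Position k → Fin 2) (κ : Samples k) : ℝ :=
  if Accepts z ∧ ¬ ValidCell z (inferredPattern κ) then 10 * jointAmp (table z) κ else 0

lemma acceptKernel_add_errorAmp {z z' : Position k → Fin 2} (hz : ¬ Accepts z)
    (hz' : Accepts z') :
    acceptKernel z z' + ∑ κ, jointAmp (table z) κ / 10 * errorAmp z' κ = 1 := by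
  have hinvalid : ∀ ℓ, ¬ ValidCell z ℓ := not_exists.mp hz
  rw [acceptKernel, add_assoc, ← Finset.sum_add_distrib, sub_add_eq_add_sub, sub_eq_iff_eq_add,
    add_right_inj]
  refine Finset.sum_congr rfl fun κ _ => ?_
  by_cases hvalid : ValidCell z' (inferredPattern κ)
  · simp [neKernel, errorAmp, hinvalid, hvalid]
  · simp only [neKernel, errorAmp, hinvalid, hvalid, hz', not_false_eq_true, and_self, if_true]
    ring

lemma simon_error_le (k : ℕ) :
    100 * (((3 * k : ℕ) : ℝ) * (2 ^ k * (1 / 2) ^ (3 * k + 10))) ≤ 1 / 10 := by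
  have hpow : (2 : ℝ) ^ k * (1 / 2) ^ (3 * k + 10) = (1 / 4 ^ k) / 1024 := by
    rw [pow_add, pow_mul, ← mul_assoc, ← mul_pow]
    rw [show (2 : ℝ) * (1 / 2) ^ 3 = 1 / 4 by norm_num, div_pow, one_pow]
    norm_num
    ring
  have hbernoulli : (3 * k : ℝ) ≤ 4 ^ k := by
    have := one_add_mul_le_pow (a := (3 : ℝ)) (by norm_num) k
    norm_num at this
    linarith
  have hfrac : (3 * k : ℝ) / 4 ^ k ≤ 1 := (div_le_one (by positivity)).mpr hbernoulli
  rw [hpow]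
  push_cast
  rw [show (100 : ℝ) * (3 * k * (1 / 4 ^ k / 1024)) = (3 * k / 4 ^ k) * (100 / 1024) by ring]
  linarith

lemma sum_errorAmp_sq_le (z : Position k → Fin 2) : ∑ κ, errorAmp z κ ^ 2 ≤ 1 / 10 := by
  classical
  by_cases hz : Accepts z
  · obtain ⟨ℓ, hℓ⟩ := hz
    have hsimon := sum_jointAmp_sq_inferredPattern_ne (J := Fin (3 * k + 10))
      hℓ.followsPattern_table
    rw [Fintype.card_fin, Fintype.card_fin] at hsimon
    refine le_trans ?_ ((mul_le_mul_of_nonneg_left hsimon (by norm_num)).trans (simon_error_le k))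
    rw [Finset.mul_sum]
    refine Finset.sum_le_sum fun κ _ => ?_
    by_cases hκ : inferredPattern κ = ℓ
    · simp [errorAmp, hκ, hℓ]
    · rw [if_neg hκ, errorAmp]
      split_ifs
      · rw [mul_pow]
        norm_num
      · rw [zero_pow two_ne_zero]
        positivity
  · simp [errorAmp, hz]

open Classical in
theorem isQuantumComputable_accepts {ι : Type} [Fintype ι] [DecidableEq ι] [Nonempty ι]
    (hk : 1 ≤ k) (e : Position k → ι) {f : PartialFn ι fun _ => 2}
    (hf : ∀ z, f z = some (decide (Accepts (z ∘ e)))) :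
    IsQuantumComputable f (5101 * (k ^ 3 * 2 ^ k)) := by
  have hone : 1 ≤ k ^ 3 * 2 ^ k := one_le_mul (Nat.one_le_pow _ _ hk) Nat.one_le_two_pow
  have hone' : (1 : ℝ) ≤ k ^ 3 * 2 ^ k := by exact_mod_cast hone
  have hceil : ⌈100 * (51 * (k ^ 3 * 2 ^ k : ℝ))⌉₊ + 1 ≤ 5101 * (k ^ 3 * 2 ^ k) := by
    rw [show (100 * (51 * (k ^ 3 * 2 ^ k)) : ℝ) = ((5100 * (k ^ 3 * 2 ^ k) : ℕ) : ℝ) by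
      push_cast; ring, Nat.ceil_natCast]
    lia
  obtain ⟨A, hT, hA⟩ := isQuantumComputable_of_filteredGammaLe (f := f) (by linarith)
    ((filteredGammaLe_acceptKernel hk).comap e)
    (a := fun z κ => jointAmp (table (z ∘ e)) κ / 10) (b := fun z => errorAmp (z ∘ e))
    (fun x y hx hy => by
      rw [hf, Option.some_inj] at hx hy
      exact acceptKernel_add_errorAmp (of_decide_eq_false hx) (of_decide_eq_true hy))
    (fun x => by
      simp only [div_pow, ← Finset.sum_div, sum_jointAmp_sq]
      norm_num)
    (fun y => sum_errorAmp_sq_le _)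
  exact ⟨A, hT.trans hceil, hA⟩

end Kernel

/-! ### Queries of a decision tree -/

section Queries

variable {ι : Type} {α : ι → ℕ} {L : Type}

open Classical in
/-- The positions queried by a decision tree on a given input. -/
noncomputable def DTree.queried : DTree ι α L → Input ι α → Finset ι
  | .leaf _, _ => ∅
  | .node i child, x => insert i (DTree.queried (child (x i)) x)

open Classical in
/-- The number of queries, with multiplicity, that a decision tree makes in the set `D` on a given
input. -/
noncomputable def DTree.costOn (D : Set ι) : DTree ι α L → Input ι α → ℕ
  | .leaf _, _ => 0
  | .node i child, x => DTree.costOn D (child (x i)) x + if i ∈ D then 1 else 0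

lemma DTree.depth_child_lt (i : ι) (child : Fin (α i) → DTree ι α L) (a : Fin (α i)) :
    (child a).depth < (DTree.node i child).depth :=
  Nat.lt_succ_of_le (Finset.le_sup (f := fun a => (child a).depth) (Finset.mem_univ a))

lemma DTree.card_queried_le (T : DTree ι α L) (x : Input ι α) : (T.queried x).card ≤ T.depth := by
  classical
  induction T with
  | leaf => simp [DTree.queried]
  | node i child ih =>
    calc (insert i ((child (x i)).queried x)).card
        ≤ ((child (x i)).queried x).card + 1 := Finset.card_insert_le _ _
      _ ≤ (child (x i)).depth + 1 := Nat.add_le_add_right (ih (x i)) 1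
      _ ≤ (DTree.node i child).depth := DTree.depth_child_lt i child (x i)

lemma DTree.sum_costOn_le {E : Type} [Fintype E] {D : E → Set ι}
    (hD : Pairwise (Function.onFun Disjoint D)) (T : DTree ι α L) (x : Input ι α) :
    ∑ e, T.costOn (D e) x ≤ T.depth := by
  classical
  induction T with
  | leaf => simp [DTree.costOn]
  | node i child ih =>
    simp only [DTree.costOn, Finset.sum_add_distrib]
    suffices hi : ∑ e, (if i ∈ D e then 1 else 0) ≤ 1 from
      (Nat.add_le_add (ih (x i)) hi).trans (DTree.depth_child_lt i child (x i))
    rw [Finset.sum_boole, Nat.cast_id, Finset.card_le_one]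
    intro e he e' he'
    by_contra hne
    exact Set.disjoint_left.mp (hD hne) (Finset.mem_filter.mp he).2 (Finset.mem_filter.mp he').2

lemma DTree.queried_congr {T : DTree ι α L} {x x' : Input ι α} (h : ∀ i ∈ T.queried x, x i = x' i) :
    T.queried x' = T.queried x := by
  induction T with
  | leaf => rfl
  | node i child ih =>
    simp only [DTree.queried, Finset.mem_insert, forall_eq_or_imp] at h
    rw [DTree.queried, DTree.queried, ← h.1, ih (x i) h.2]

lemma DTree.eval_congr {T : DTree ι α L} {x x' : Input ι α} (h : ∀ i ∈ T.queried x, x i = x' i) :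
    T.eval x' = T.eval x := by
  induction T with
  | leaf => rfl
  | node i child ih =>
    simp only [DTree.queried, Finset.mem_insert, forall_eq_or_imp] at h
    rw [DTree.eval, DTree.eval, ← h.1, ih (x i) h.2]

end Queries

/-! ### Searching for the critical position of an And-Or gadget -/

section HardMatrix

variable {V : Type} [DecidableEq V]

/-- The hard And-Or matrix with value `v` and hidden randomness `ω`: row `j` is zero outside of
column `ω.2 j`, where it is `1`, except that the critical row `ω.1` has the entry `v` there. -/
def hardMatrix (v : Fin 2) (ω : V × (V → V)) (j l : V) : Fin 2 :=
  if l = ω.2 j then (if j = ω.1 then v else 1) else 0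

variable [Fintype V]

/-- The hidden randomness with critical row in `A` and column of row `j` in `B j`. -/
def gadgetBox (A : Finset V) (B : V → Finset V) : Finset (V × (V → V)) :=
  A ×ˢ Fintype.piFinset B

/-- The columns still possible after a query has shown that row `j` is zero in column `l`. -/
def missColumns (B : V → Finset V) (j l : V) : V → Finset V :=
  Function.update B j ((B j).filter (· ≠ l))

/-- The columns still possible after a query has shown that row `j` has its entry in column `l`. -/
def hitColumns (B : V → Finset V) (j l : V) : V → Finset V :=
  Function.update B j ((B j).filter (· = l))

lemma filter_gadgetBox_snd (A : Finset V) (B : V → Finset V) (j : V) (P : V → Prop)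
    [DecidablePred P] :
    (gadgetBox A B).filter (fun ω => P (ω.2 j)) =
      gadgetBox A (Function.update B j ((B j).filter P)) := by
  ext ω
  simp only [gadgetBox, Finset.mem_filter, Finset.mem_product, Fintype.mem_piFinset, and_assoc,
    and_congr_right_iff]
  refine fun _ => ⟨fun ⟨hB, hP⟩ i => ?_, fun h => ⟨fun i => ?_, ?_⟩⟩
  · rcases eq_or_ne i j with rfl | hi
    · simp [hB, hP]
    · simpa [hi] using hB i
  · rcases eq_or_ne i j with rfl | hi
    · exact (Finset.mem_filter.mp (by simpa using h i)).1
    · simpa [hi] using h i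
  · exact (Finset.mem_filter.mp (by simpa using h j)).2

lemma filter_gadgetBox_fst (A : Finset V) (B : V → Finset V) (P : V → Prop) [DecidablePred P] :
    (gadgetBox A B).filter (fun ω => P ω.1) = gadgetBox (A.filter P) B := by
  ext ω
  simp only [gadgetBox, Finset.mem_filter, Finset.mem_product]
  tauto

lemma mem_gadgetBox_missColumns {A : Finset V} {B : V → Finset V} {j l : V} {ω : V × (V → V)} :
    ω ∈ gadgetBox A (missColumns B j l) ↔ ω ∈ gadgetBox A B ∧ ω.2 j ≠ l := by
  rw [missColumns, ← filter_gadgetBox_snd A B j (· ≠ l), Finset.mem_filter]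

lemma mem_gadgetBox_hitColumns {A : Finset V} {B : V → Finset V} {j l : V} {ω : V × (V → V)} :
    ω ∈ gadgetBox A (hitColumns B j l) ↔ ω ∈ gadgetBox A B ∧ ω.2 j = l := by
  rw [hitColumns, ← filter_gadgetBox_snd A B j (· = l), Finset.mem_filter]

lemma sum_gadgetBox_split (A : Finset V) (B : V → Finset V) (j l : V) (F : V × (V → V) → ℝ) :
    ∑ ω ∈ gadgetBox A B, F ω = ∑ ω ∈ gadgetBox A (missColumns B j l), F ω +
      (∑ ω ∈ gadgetBox (A.filter (· ≠ j)) (hitColumns B j l), F ω +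
        ∑ ω ∈ gadgetBox (A.filter (· = j)) (hitColumns B j l), F ω) := by
  rw [← filter_gadgetBox_fst A _ (· ≠ j), ← filter_gadgetBox_fst A _ (· = j), missColumns,
    hitColumns, ← filter_gadgetBox_snd A B j (· ≠ l), ← filter_gadgetBox_snd A B j (· = l)]
  have hcol := Finset.sum_filter_add_sum_filter_not (gadgetBox A B) (fun ω => ω.2 j = l) F
  have hrow := Finset.sum_filter_add_sum_filter_not
    ((gadgetBox A B).filter fun ω => ω.2 j = l) (fun ω => ω.1 = j) F
  linarith

lemma card_gadgetBox_update (A : Finset V) (B : V → Finset V) (j : V) (C : Finset V) :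
    ((gadgetBox A (Function.update B j C)).card : ℝ) =
      A.card * C.card * ∏ i ∈ Finset.univ \ {j}, ((B i).card : ℝ) := by
  have hcard : ∀ i, (Function.update B j C i).card =
      Function.update (fun i => (B i).card) j C.card i :=
    Function.apply_update (fun _ (s : Finset V) => s.card) B j C
  rw [gadgetBox, Finset.card_product, Fintype.card_piFinset]
  simp only [hcard, Finset.prod_update_of_mem (Finset.mem_univ j)]
  push_cast
  ring

lemma card_gadgetBox (A : Finset V) (B : V → Finset V) (j : V) :
    ((gadgetBox A B).card : ℝ) =
      A.card * (B j).card * ∏ i ∈ Finset.univ \ {j}, ((B i).card : ℝ) := by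
  rw [← card_gadgetBox_update, Function.update_eq_self]

end HardMatrix

section Potential

variable {V : Type} [Fintype V]

/-- The potential of a box: it bounds, up to the cost of the later queries, the probability that
the critical entry of a hard And-Or matrix with hidden randomness in that box is found. -/
noncomputable def boxPotential (A : Finset V) (B : V → Finset V) : ℝ :=
  2 / Fintype.card V * (Fintype.card V - A.card) +
    16 / Fintype.card V ^ 2 * ∑ j ∈ A, (Fintype.card V - (B j).card : ℝ)

lemma card_sub_card_nonneg (s : Finset V) : (0 : ℝ) ≤ Fintype.card V - s.card :=
  sub_nonneg.mpr (Nat.cast_le.mpr (Finset.card_le_univ s))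

lemma boxPotential_nonneg (A : Finset V) (B : V → Finset V) : 0 ≤ boxPotential A B :=
  add_nonneg (mul_nonneg (by positivity) (card_sub_card_nonneg A))
    (mul_nonneg (by positivity) (Finset.sum_nonneg fun j _ => card_sub_card_nonneg (B j)))

lemma boxPotential_univ : boxPotential (Finset.univ : Finset V) (fun _ => Finset.univ) = 0 := by
  simp [boxPotential]

lemma le_boxPotential {A : Finset V} (B : V → Finset V) {j : V} (hj : j ∈ A) :
    2 / Fintype.card V * (Fintype.card V - A.card : ℝ) +
      16 / Fintype.card V ^ 2 * (Fintype.card V - (B j).card) ≤ boxPotential A B := by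
  rw [boxPotential]
  gcongr
  exact Finset.single_le_sum (f := fun j => (Fintype.card V - (B j).card : ℝ))
    (fun i _ => card_sub_card_nonneg (B i)) hj

/- Here `a` rows and `b` columns of row `j` are possible, and `φ` is the potential. Dividing by
`a * b`, the summands are the probabilities of finding the critical entry, a `1` in another row, and
a `0`, weighted by the new potentials. -/
lemma potential_step {N a b φ : ℝ} (hN : 0 < N) (ha : 0 ≤ a) (hb : b ≤ N)
    (hφ : 2 / N * (N - a) + 16 / N ^ 2 * (N - b) ≤ φ) :
    1 + (a - 1) * (φ + 2 / N - 16 / N ^ 2 * (N - b)) + a * (b - 1) * (φ + 16 / N ^ 2) ≤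
      (24 / N ^ 2 + φ) * (a * b) := by
  obtain ⟨u, rfl⟩ : ∃ u, N = u⁻¹ := ⟨N⁻¹, (inv_inv N).symm⟩
  have hu : 0 < u := inv_pos.mp hN
  have hbu : b * u ≤ 1 := by rwa [← le_div_iff₀ hu, one_div]
  have hrow : 2 / u⁻¹ * (u⁻¹ - a) = 2 * (1 - a * u) := by field_simp
  have hcol : 16 / u⁻¹ ^ 2 * (u⁻¹ - b) = 16 * u * (1 - b * u) := by field_simp
  have hsq : ∀ c : ℝ, c / u⁻¹ ^ 2 = c * u ^ 2 := fun c => by field_simp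
  rw [hrow, hcol] at hφ
  rw [hcol, hsq, hsq, div_inv_eq_mul]
  have hau : 0 ≤ a * u := mul_nonneg ha hu.le
  nlinarith [mul_nonneg hau (sub_nonneg.mpr hbu), mul_nonneg hau hu.le]

variable [DecidableEq V]

lemma boxPotential_missColumns {A : Finset V} {B : V → Finset V} {j l : V} (hj : j ∈ A)
    (hl : l ∈ B j) :
    boxPotential A (missColumns B j l) = boxPotential A B + 16 / Fintype.card V ^ 2 := by
  have hrest : ∑ i ∈ A.erase j, (Fintype.card V - (missColumns B j l i).card : ℝ) =
      ∑ i ∈ A.erase j, (Fintype.card V - (B i).card : ℝ) :=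
    Finset.sum_congr rfl fun i hi => by
      rw [missColumns, Function.update_of_ne (Finset.ne_of_mem_erase hi)]
  rw [boxPotential, boxPotential, ← Finset.add_sum_erase A _ hj, hrest,
    ← Finset.add_sum_erase A _ hj, missColumns, Function.update_self, Finset.filter_ne',
    Finset.card_erase_of_mem hl, Nat.cast_pred (Finset.card_pos.mpr ⟨l, hl⟩)]
  ring

lemma boxPotential_filter_ne_update {A : Finset V} (B : V → Finset V) {j : V} (hj : j ∈ A)
    (C : Finset V) :
    boxPotential (A.filter (· ≠ j)) (Function.update B j C) = boxPotential A B +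
      2 / Fintype.card V - 16 / Fintype.card V ^ 2 * (Fintype.card V - (B j).card) := by
  have hrest : ∑ i ∈ A.erase j, (Fintype.card V - (Function.update B j C i).card : ℝ) =
      ∑ i ∈ A.erase j, (Fintype.card V - (B i).card : ℝ) :=
    Finset.sum_congr rfl fun i hi => by rw [Function.update_of_ne (Finset.ne_of_mem_erase hi)]
  rw [Finset.filter_ne', boxPotential, boxPotential, hrest, ← Finset.add_sum_erase A _ hj,
    Finset.card_erase_of_mem hj, Nat.cast_pred (Finset.card_pos.mpr ⟨j, hj⟩)]
  ring

lemma boxPotential_update_of_notMem {A : Finset V} (B : V → Finset V) {j : V} (hj : j ∉ A)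
    (C : Finset V) : boxPotential A (Function.update B j C) = boxPotential A B := by
  rw [boxPotential, boxPotential]
  congr 2
  exact Finset.sum_congr rfl fun i hi => by rw [Function.update_of_ne (ne_of_mem_of_not_mem hi hj)]

/-- The total potential after a query to the entry `(j, l)` which is charged `c`: the query misses,
finds the `1` of another row, or finds the critical entry. -/
noncomputable def splitPotential (A : Finset V) (B : V → Finset V) (j l : V) (c : ℝ) : ℝ :=
  (gadgetBox A (missColumns B j l)).card * (boxPotential A (missColumns B j l) - c) +
    ((gadgetBox (A.filter (· ≠ j)) (hitColumns B j l)).card *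
        (boxPotential (A.filter (· ≠ j)) (hitColumns B j l) - c) +
      (gadgetBox (A.filter (· = j)) (hitColumns B j l)).card * (1 - c))

lemma splitPotential_le_of_mem {A : Finset V} {B : V → Finset V} {j l : V} (hj : j ∈ A)
    (hl : l ∈ B j) : splitPotential A B j l (24 / Fintype.card V ^ 2) ≤
      (gadgetBox A B).card * boxPotential A B := by
  have hV : (0 : ℝ) < Fintype.card V := Nat.cast_pos.mpr (Fintype.card_pos_iff.mpr ⟨j⟩)
  have hstep := mul_le_mul_of_nonneg_right
    (potential_step hV (Nat.cast_nonneg A.card)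
      (Nat.cast_le.mpr (Finset.card_le_univ (B j))) (le_boxPotential B hj))
    (Finset.prod_nonneg fun i (_ : i ∈ Finset.univ \ {j}) => Nat.cast_nonneg (α := ℝ) (B i).card)
  rw [splitPotential, boxPotential_missColumns hj hl, missColumns, hitColumns,
    boxPotential_filter_ne_update B hj, card_gadgetBox_update, card_gadgetBox_update,
    card_gadgetBox_update, card_gadgetBox A B j]
  simp only [Finset.filter_ne', Finset.filter_eq', hl, hj, if_true, Finset.card_singleton,
    Finset.card_erase_of_mem, Nat.cast_pred (Finset.card_pos.mpr ⟨l, hl⟩),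
    Nat.cast_pred (Finset.card_pos.mpr ⟨j, hj⟩)]
  linarith

lemma splitPotential_le_of_notMem_rows {A : Finset V} (B : V → Finset V) {j : V} (l : V)
    (hj : j ∉ A) {c : ℝ} (hc : 0 ≤ c) :
    splitPotential A B j l c ≤ (gadgetBox A B).card * boxPotential A B := by
  have hcrit : A.filter (· = j) = ∅ := by simp [Finset.filter_eq', hj]
  have hother : A.filter (· ≠ j) = A := by simp [Finset.filter_ne', hj]
  have hcard := sum_gadgetBox_split A B j l fun _ => 1
  simp only [hcrit, hother, Finset.sum_const, nsmul_eq_mul, mul_one, gadgetBox,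
    Finset.empty_product, Finset.card_empty, Nat.cast_zero, add_zero] at hcard
  rw [splitPotential, hcrit, hother, missColumns, hitColumns, boxPotential_update_of_notMem B hj,
    boxPotential_update_of_notMem B hj, ← missColumns, ← hitColumns]
  simp only [gadgetBox, Finset.empty_product, Finset.card_empty, Nat.cast_zero, zero_mul, add_zero]
  rw [hcard, ← add_mul]
  gcongr
  exact sub_le_self _ hc

lemma splitPotential_le_of_notMem_columns (A : Finset V) {B : V → Finset V} {j l : V}
    (hl : l ∉ B j) {c : ℝ} (hc : 0 ≤ c) :
    splitPotential A B j l c ≤ (gadgetBox A B).card * boxPotential A B := by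
  have hmiss : missColumns B j l = B := by simp [missColumns, Finset.filter_ne', hl]
  have hhit : (B j).filter (· = l) = ∅ := by simp [Finset.filter_eq', hl]
  rw [splitPotential, hmiss, hitColumns, hhit, card_gadgetBox_update, card_gadgetBox_update]
  simp only [Finset.card_empty, Nat.cast_zero, zero_mul, mul_zero, add_zero]
  gcongr
  exact sub_le_self _ hc

lemma splitPotential_le (A : Finset V) (B : V → Finset V) (j l : V) :
    splitPotential A B j l (24 / Fintype.card V ^ 2) ≤ (gadgetBox A B).card * boxPotential A B := by
  by_cases hl : l ∈ B j
  · by_cases hj : j ∈ A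
    · exact splitPotential_le_of_mem hj hl
    · exact splitPotential_le_of_notMem_rows B l hj (by positivity)
  · exact splitPotential_le_of_notMem_columns A hl (by positivity)

end Potential

section Search

variable {V ι L : Type} [Fintype V]

open Classical in
/-- The indicator function of the event that a decision tree queries the critical entry of an
embedded hard matrix, minus its number of queries in that matrix with weight `24 / N ^ 2`. -/
noncomputable def searchExcess (ins : V → V → ι) (H : V × (V → V) → ι → Fin 2)
    (T : DTree ι (fun _ => 2) L) (ω : V × (V → V)) : ℝ :=
  (if ins ω.1 (ω.2 ω.1) ∈ T.queried (H ω) then 1 else 0) -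
    24 / Fintype.card V ^ 2 * T.costOn (Set.range (Function.uncurry ins)) (H ω)

lemma searchExcess_node_of_notMem {ins : V → V → ι} (H : V × (V → V) → ι → Fin 2) {i : ι}
    (hi : i ∉ Set.range (Function.uncurry ins)) (child : Fin 2 → DTree ι (fun _ => 2) L)
    (ω : V × (V → V)) :
    searchExcess ins H (.node i child) ω = searchExcess ins H (child (H ω i)) ω := by
  classical
  have hcrit : ins ω.1 (ω.2 ω.1) ≠ i := fun h => hi ⟨(ω.1, ω.2 ω.1), h⟩
  simp only [searchExcess, DTree.queried, DTree.costOn, Finset.mem_insert, hcrit, false_or, hi,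
    if_false, add_zero]

lemma searchExcess_node_of_ne {ins : V → V → ι} (H : V × (V → V) → ι → Fin 2) {j l : V}
    (child : Fin 2 → DTree ι (fun _ => 2) L) {ω : V × (V → V)}
    (hcrit : ins ω.1 (ω.2 ω.1) ≠ ins j l) :
    searchExcess ins H (.node (ins j l) child) ω =
      searchExcess ins H (child (H ω (ins j l))) ω - 24 / Fintype.card V ^ 2 := by
  classical
  have hmem : ins j l ∈ Set.range (Function.uncurry ins) := ⟨(j, l), rfl⟩
  simp only [searchExcess, DTree.queried, DTree.costOn, Finset.mem_insert, hcrit, false_or, hmem,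
    if_true, Nat.cast_add, Nat.cast_one]
  ring

lemma searchExcess_node_le (ins : V → V → ι) (H : V × (V → V) → ι → Fin 2) (j l : V)
    (child : Fin 2 → DTree ι (fun _ => 2) L) (ω : V × (V → V)) :
    searchExcess ins H (.node (ins j l) child) ω ≤ 1 - 24 / Fintype.card V ^ 2 := by
  have hmem : ins j l ∈ Set.range (Function.uncurry ins) := ⟨(j, l), rfl⟩
  simp only [searchExcess, DTree.costOn, hmem, if_true]
  gcongr
  · split_ifs <;> norm_num
  · exact le_mul_of_one_le_right (by positivity) (by simp)

variable [DecidableEq V]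

/-- The inputs `H ω` contain the hard And-Or matrices with value `v`, at the positions `ins j l`,
and do not depend on the hidden randomness `ω` elsewhere. -/
structure EmbedsHardMatrix (v : Fin 2) (ins : V → V → ι) (H : V × (V → V) → ι → Fin 2) :
    Prop where
  injective : Function.Injective2 ins
  apply_ins : ∀ ω j l, H ω (ins j l) = hardMatrix v ω j l
  apply_eq : ∀ i ∉ Set.range (Function.uncurry ins), ∀ ω ω', H ω i = H ω' i

lemma sum_searchExcess_node_le_of_notMem {v : Fin 2} {ins : V → V → ι}
    {H : V × (V → V) → ι → Fin 2} (hH : EmbedsHardMatrix v ins H) {i : ι}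
    (hi : i ∉ Set.range (Function.uncurry ins)) {child : Fin 2 → DTree ι (fun _ => 2) L}
    {A : Finset V} {B : V → Finset V}
    (hchild : ∀ a, ∑ ω ∈ gadgetBox A B, searchExcess ins H (child a) ω ≤
      (gadgetBox A B).card * boxPotential A B) :
    ∑ ω ∈ gadgetBox A B, searchExcess ins H (.node i child) ω ≤
      (gadgetBox A B).card * boxPotential A B := by
  rcases (gadgetBox A B).eq_empty_or_nonempty with hbox | ⟨ω₀, -⟩
  · simp [hbox]
  simp only [searchExcess_node_of_notMem H hi, hH.apply_eq i hi _ ω₀]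
  exact hchild _

lemma sum_searchExcess_node_le_of_apply_eq {ins : V → V → ι} {H : V × (V → V) → ι → Fin 2} {j l : V}
    {child : Fin 2 → DTree ι (fun _ => 2) L} {a : Fin 2} {A : Finset V} {B : V → Finset V}
    (hchild : ∑ ω ∈ gadgetBox A B, searchExcess ins H (child a) ω ≤
      (gadgetBox A B).card * boxPotential A B)
    (hbox : ∀ ω ∈ gadgetBox A B, H ω (ins j l) = a ∧ ins ω.1 (ω.2 ω.1) ≠ ins j l) :
    ∑ ω ∈ gadgetBox A B, searchExcess ins H (.node (ins j l) child) ω ≤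
      (gadgetBox A B).card * (boxPotential A B - 24 / Fintype.card V ^ 2) := by
  have hnode : ∀ ω ∈ gadgetBox A B, searchExcess ins H (.node (ins j l) child) ω =
      searchExcess ins H (child a) ω - 24 / Fintype.card V ^ 2 := fun ω hω => by
    rw [searchExcess_node_of_ne H child (hbox ω hω).2, (hbox ω hω).1]
  rw [Finset.sum_congr rfl hnode, Finset.sum_sub_distrib, Finset.sum_const, nsmul_eq_mul, mul_sub]
  exact sub_le_sub_right hchild _

lemma sum_searchExcess_node_le_of_mem {v : Fin 2} {ins : V → V → ι}
    {H : V × (V → V) → ι → Fin 2} (hH : EmbedsHardMatrix v ins H) (j l : V)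
    {child : Fin 2 → DTree ι (fun _ => 2) L}
    (hchild : ∀ a A B, ∑ ω ∈ gadgetBox A B, searchExcess ins H (child a) ω ≤
      (gadgetBox A B).card * boxPotential A B) (A : Finset V) (B : V → Finset V) :
    ∑ ω ∈ gadgetBox A B, searchExcess ins H (.node (ins j l) child) ω ≤
      (gadgetBox A B).card * boxPotential A B := by
  rw [sum_gadgetBox_split A B j l]
  refine le_trans (add_le_add ?_ (add_le_add ?_ ?_)) (splitPotential_le A B j l)
  · refine sum_searchExcess_node_le_of_apply_eq (hchild 0 _ _) fun ω hω => ?_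
    have hmiss := (mem_gadgetBox_missColumns.mp hω).2
    refine ⟨by rw [hH.apply_ins, hardMatrix, if_neg hmiss.symm], fun hcrit => hmiss ?_⟩
    obtain ⟨hrow, hcol⟩ := hH.injective hcrit
    rwa [hrow] at hcol
  · refine sum_searchExcess_node_le_of_apply_eq (hchild 1 _ _) fun ω hω => ?_
    rw [← filter_gadgetBox_fst A _ (· ≠ j), Finset.mem_filter, mem_gadgetBox_hitColumns] at hω
    obtain ⟨⟨-, hhit⟩, hrow⟩ := hω
    refine ⟨by rw [hH.apply_ins, hardMatrix, if_pos hhit.symm, if_neg hrow.symm], fun hcrit => ?_⟩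
    exact hrow (hH.injective hcrit).1
  · rw [← nsmul_eq_mul]
    exact Finset.sum_le_card_nsmul _ _ _ fun ω _ => searchExcess_node_le ins H j l child ω

lemma sum_searchExcess_le {v : Fin 2} {ins : V → V → ι} {H : V × (V → V) → ι → Fin 2}
    (hH : EmbedsHardMatrix v ins H) (T : DTree ι (fun _ => 2) L) (A : Finset V)
    (B : V → Finset V) :
    ∑ ω ∈ gadgetBox A B, searchExcess ins H T ω ≤ (gadgetBox A B).card * boxPotential A B := by
  induction T generalizing A B with
  | leaf =>
    simp only [searchExcess, DTree.queried, DTree.costOn, Finset.notMem_empty, if_false,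
      Nat.cast_zero, mul_zero, sub_zero, Finset.sum_const_zero]
    exact mul_nonneg (Nat.cast_nonneg _) (boxPotential_nonneg A B)
  | node i child ih =>
    by_cases hi : i ∈ Set.range (Function.uncurry ins)
    · obtain ⟨⟨j, l⟩, rfl⟩ := hi
      exact sum_searchExcess_node_le_of_mem hH j l ih A B
    · exact sum_searchExcess_node_le_of_notMem hH hi fun a => ih a A B

end Search

/-! ### Hard inputs -/

section HardInputs

variable {k : ℕ}

/-- The hidden randomness of all And-Or gadgets. -/
abbrev Hidden (k : ℕ) := Gadget k → Vec k × (Vec k → Vec k)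

/-- The hard input with tables `x` and empty cells. -/
def hardInput (x : Fin (3 * k) → Vec k → Vec k) (ω : Hidden k) : Position k → Fin 2
  | .inl p => hardMatrix (x p.1.1 p.1.2.1 p.1.2.2) (ω p.1) p.2.1 p.2.2
  | .inr _ => 0

/-- The hard input with tables `x`, a correct certificate in the cell `b`, and parity bits `w`. -/
def certifiedInput (x : Fin (3 * k) → Vec k → Vec k) (ω : Hidden k) (b : Fin (3 * k) → Bool)
    (w : Vec k) : Position k → Fin 2
  | .inl p => hardMatrix (x p.1.1 p.1.2.1 p.1.2.2) (ω p.1) p.2.1 p.2.2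
  | .inr (.inl (ℓ, g, o)) => if ℓ = b then
      (match o with
        | none => x g.1 g.2.1 g.2.2
        | some (none, β) => (ω g).1 β
        | some (some j, β) => (ω g).2 j β)
      else 0
  | .inr (.inr h) => w h

lemma table_hardInput (x : Fin (3 * k) → Vec k → Vec k) (ω : Hidden k) :
    table (hardInput x ω) = x := by
  ext i y β : 3
  simp only [table, andOr]
  by_cases hx : x i y β = 1
  · rw [hx, if_pos]
    exact fun j => ⟨(ω (i, y, β)).2 j, by simp [hardInput, hardMatrix, hx]⟩
  · have hx0 : x i y β = 0 := not_imp_comm.mp (Fin.eq_one_of_ne_zero _) hx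
    rw [hx0, if_neg]
    intro hrows
    obtain ⟨l, hl⟩ := hrows (ω (i, y, β)).1
    simp [hardInput, hardMatrix, hx0] at hl

lemma not_accepts_hardInput {x : Fin (3 * k) → Vec k → Vec k} (ω : Hidden k) (hx : x ≠ 0) :
    ¬ Accepts (hardInput x ω) := by
  rintro ⟨ℓ, -, -, htests⟩
  have hclaim : claimedTable (hardInput x ω) ℓ = x :=
    (claimedTable_eq_table htests).trans (table_hardInput x ω)
  exact hx hclaim.symm

lemma pointer_certifiedInput_none (x : Fin (3 * k) → Vec k → Vec k) (ω : Hidden k)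
    (b : Fin (3 * k) → Bool) (w : Vec k) (g : Gadget k) :
    pointer (certifiedInput x ω b w) b g none = (ω g).1 := by
  ext β : 1
  simp [pointer, certifiedInput]

lemma pointer_certifiedInput_some (x : Fin (3 * k) → Vec k → Vec k) (ω : Hidden k)
    (b : Fin (3 * k) → Bool) (w : Vec k) (g : Gadget k) (j : Vec k) :
    pointer (certifiedInput x ω b w) b g (some j) = (ω g).2 j := by
  ext β : 1
  simp [pointer, certifiedInput]

lemma passesTest_certifiedInput (x : Fin (3 * k) → Vec k → Vec k) (ω : Hidden k)
    (b : Fin (3 * k) → Bool) (w : Vec k) (g : Gadget k) (j : Vec k) :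
    PassesTest (certifiedInput x ω b w) b g j := by
  rw [PassesTest, pointer_certifiedInput_none, pointer_certifiedInput_some]
  simp only [certifiedInput, if_true]
  split_ifs with hx
  · simp [hardMatrix, hx]
  · simp [hardMatrix, not_imp_comm.mp (Fin.eq_one_of_ne_zero _) hx]

lemma accepts_certifiedInput_iff {x : Fin (3 * k) → Vec k → Vec k} (ω : Hidden k)
    {b : Fin (3 * k) → Bool} (hx : FollowsPattern b x) (w : Vec k) :
    Accepts (certifiedInput x ω b w) ↔ ∑ h, w h = 0 := by
  refine ⟨fun ⟨_, hparity, _⟩ => hparity, fun hw => ⟨b, hw, ?_, fun p =>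
    passesTest_certifiedInput x ω b w p.1 p.2⟩⟩
  convert hx using 1
  ext i y β : 3
  simp [claimedTable, certifiedInput]

/-- The critical position of the gadget `g`. -/
def criticalPosition (ω : Hidden k) (g : Gadget k) : Position k :=
  .inl (g, (ω g).1, (ω g).2 (ω g).1)

/-- The positions of the matrix of the gadget `g`. -/
def gadgetPositions (g : Gadget k) : Set (Position k) :=
  Set.range (Function.uncurry fun j l => .inl (g, j, l))

lemma pairwise_disjoint_gadgetPositions :
    Pairwise (Function.onFun Disjoint (gadgetPositions (k := k))) := by
  intro g g' hg
  refine Set.disjoint_left.mpr ?_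
  rintro _ ⟨p, rfl⟩ ⟨p', hp'⟩
  exact hg (congrArg Prod.fst (Sum.inl_injective hp')).symm

lemma sum_eq_sum_funSplitAt {G W : Type} [Fintype G] [DecidableEq G] [Fintype W] (g : G)
    (F : (G → W) → ℝ) :
    ∑ ω, F ω = ∑ r : {g' // g' ≠ g} → W, ∑ y, F ((Equiv.funSplitAt g W).symm (y, r)) := by
  rw [← Equiv.sum_comp (Equiv.funSplitAt g _).symm, Fintype.sum_prod_type_right]

lemma embedsHardMatrix_hardInput (x : Fin (3 * k) → Vec k → Vec k) (g : Gadget k)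
    (r : {g' // g' ≠ g} → Vec k × (Vec k → Vec k)) :
    EmbedsHardMatrix (x g.1 g.2.1 g.2.2) (fun j l => (.inl (g, j, l) : Position k))
      fun y => hardInput x ((Equiv.funSplitAt g _).symm (y, r)) where
  injective := by simp [Function.Injective2]
  apply_ins := by simp [hardInput, Equiv.funSplitAt]
  apply_eq := by
    rintro (p | p) hp y y'
    · have hpg : p.1 ≠ g := by
        rintro rfl
        exact hp ⟨p.2, rfl⟩
      simp [hardInput, Equiv.funSplitAt, hpg]
    · rfl

section

variable {L : Type}

open Classical in
/-- The gadgets whose critical position a decision tree queries on the hard input. -/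
noncomputable def foundGadgets (T : DTree (Position k) (fun _ => 2) L) (ω : Hidden k)
    (x : Fin (3 * k) → Vec k → Vec k) : Finset (Gadget k) :=
  Finset.univ.filter fun g => criticalPosition ω g ∈ T.queried (hardInput x ω)

open Classical in
lemma sum_criticalPosition_queried_le (x : Fin (3 * k) → Vec k → Vec k)
    (T : DTree (Position k) (fun _ => 2) L) (g : Gadget k) :
    (∑ ω : Hidden k, if criticalPosition ω g ∈ T.queried (hardInput x ω) then (1 : ℝ) else 0) ≤
      ∑ ω : Hidden k, 24 / (2 ^ k) ^ 2 * (T.costOn (gadgetPositions g) (hardInput x ω) : ℝ) := by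
  rw [← sub_nonpos, ← Finset.sum_sub_distrib, sum_eq_sum_funSplitAt g]
  refine Finset.sum_nonpos fun r _ => ?_
  have hsearch := sum_searchExcess_le (embedsHardMatrix_hardInput x g r) T Finset.univ
    fun _ => Finset.univ
  rw [boxPotential_univ, mul_zero, gadgetBox, Fintype.piFinset_univ,
    Finset.univ_product_univ] at hsearch
  refine le_of_eq_of_le (Finset.sum_congr rfl fun y _ => ?_) hsearch
  have hcrit : criticalPosition ((Equiv.funSplitAt g _).symm (y, r)) g =
      .inl (g, y.1, y.2 y.1) := by
    simp [criticalPosition, Equiv.funSplitAt]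
  rw [searchExcess, card_vec, hcrit, gadgetPositions]
  push_cast
  rfl

lemma sum_card_foundGadgets_le (x : Fin (3 * k) → Vec k → Vec k)
    (T : DTree (Position k) (fun _ => 2) L) :
    (∑ ω : Hidden k, ((foundGadgets T ω x).card : ℝ)) ≤
      24 / (2 ^ k) ^ 2 * T.depth * Fintype.card (Hidden k) := by
  classical
  calc ∑ ω : Hidden k, ((foundGadgets T ω x).card : ℝ)
      = ∑ g : Gadget k, ∑ ω : Hidden k,
          if criticalPosition ω g ∈ T.queried (hardInput x ω) then (1 : ℝ) else 0 := by
        rw [Finset.sum_comm]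
        simp [foundGadgets]
    _ ≤ ∑ g : Gadget k, ∑ ω : Hidden k,
          24 / (2 ^ k) ^ 2 * (T.costOn (gadgetPositions g) (hardInput x ω) : ℝ) :=
        Finset.sum_le_sum fun g _ => sum_criticalPosition_queried_le x T g
    _ = ∑ ω : Hidden k, 24 / (2 ^ k) ^ 2 *
          ((∑ g, T.costOn (gadgetPositions g) (hardInput x ω) : ℕ) : ℝ) := by
        rw [Finset.sum_comm]
        simp_rw [Nat.cast_sum, Finset.mul_sum]
    _ ≤ ∑ ω : Hidden k, 24 / (2 ^ k) ^ 2 * (T.depth : ℝ) := by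
        gcongr with ω
        exact T.sum_costOn_le pairwise_disjoint_gadgetPositions (hardInput x ω)
    _ = 24 / (2 ^ k) ^ 2 * T.depth * Fintype.card (Hidden k) := by
        rw [Finset.sum_const, Finset.card_univ, nsmul_eq_mul]
        ring

end

end HardInputs

/-! ### Folding permutations into periodic tables -/

section Folding

variable {k : ℕ}

/-- The nonzero shifts. -/
abbrev Shift (k : ℕ) := {s : Vec k // s ≠ 0}

namespace Shift

lemma exists_apply_eq_one (s : Shift k) : ∃ h, s.1 h = 1 := by
  by_contra! h
  exact s.2 (funext fun i => not_imp_comm.mp (Fin.eq_one_of_ne_zero _) (h i))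

/-- A coordinate where the shift `s` is `1`. It selects a representative of each pair
`{y, y + s}`. -/
noncomputable def pivot (s : Shift k) : Fin k := s.exists_apply_eq_one.choose

lemma apply_pivot (s : Shift k) : s.1 s.pivot = 1 := s.exists_apply_eq_one.choose_spec

lemma add_apply_pivot (s : Shift k) (y : Vec k) : (y + s.1) s.pivot = 1 ↔ y s.pivot ≠ 1 := by
  rw [Pi.add_apply, s.apply_pivot]
  generalize y s.pivot = b
  revert b
  decide

end Shift

lemma vec_add_add_cancel (y s : Vec k) : y + s + s = y := by
  rw [add_assoc, vec_add_self, add_zero]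

/-- The representative of `{y, y + s}` that is `0` at the pivot of `s`. -/
noncomputable def shiftRep (s : Shift k) (y : Vec k) : Vec k := if y s.pivot = 1 then y + s else y

lemma shiftRep_add (s : Shift k) (y : Vec k) : shiftRep s (y + s) = shiftRep s y := by
  by_cases h : y s.pivot = 1
  · have h' : ¬ (y + s.1) s.pivot = 1 := by rw [s.add_apply_pivot]; simpa using h
    rw [shiftRep, shiftRep, if_pos h, if_neg h']
  · rw [shiftRep, shiftRep, if_neg h, if_pos (s.add_apply_pivot y |>.mpr h), vec_add_add_cancel]

lemma shiftRep_eq_or (s : Shift k) (y : Vec k) : shiftRep s y = y ∨ shiftRep s y = y + s := by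
  rw [shiftRep]
  split_ifs
  · exact Or.inr rfl
  · exact Or.inl rfl

/-- The two elements `y` and `y + s` are swapped when one of them lies in `Y` and is `1` at the
pivot. -/
def Swapped (s : Shift k) (Y : Set (Vec k)) (y : Vec k) : Prop :=
  (y ∈ Y ∧ y s.pivot = 1) ∨ (y + s ∈ Y ∧ (y + s.1) s.pivot = 1)

lemma swapped_add {s : Shift k} {Y : Set (Vec k)} {y : Vec k} :
    Swapped s Y (y + s) ↔ Swapped s Y y := by
  rw [Swapped, Swapped, vec_add_add_cancel, or_comm]

open Classical in
lemma involutive_swap (s : Shift k) (Y : Set (Vec k)) :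
    Function.Involutive fun y => if Swapped s Y y then y + s else y := by
  intro y
  by_cases h : Swapped s Y y
  · simp only [h, if_true, swapped_add, vec_add_add_cancel]
  · simp only [h, if_false]

/-- The involution swapping `y` and `y + s` for the pairs selected by `Y`. -/
noncomputable def swapPerm (s : Shift k) (Y : Set (Vec k)) : Equiv.Perm (Vec k) :=
  (involutive_swap s Y).toPerm

open Classical in
lemma swapPerm_apply (s : Shift k) (Y : Set (Vec k)) (y : Vec k) :
    swapPerm s Y y = if Swapped s Y y then y + s else y := rfl

lemma swapPerm_mul_self (s : Shift k) (Y : Set (Vec k)) : swapPerm s Y * swapPerm s Y = 1 :=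
  Equiv.ext (involutive_swap s Y)

lemma swapPerm_of_mem {s : Shift k} {Y : Set (Vec k)} {y : Vec k} (hy : y ∈ Y)
    (hys : y + s ∉ Y) : swapPerm s Y y = shiftRep s y := by
  have h : Swapped s Y y ↔ y s.pivot = 1 := by simp [Swapped, hy, hys]
  simp only [swapPerm_apply, h, shiftRep]

variable {I : Type}

/-- The tables of the permutations `σ`, made periodic on the pattern `b` with shifts `s`. -/
noncomputable def foldedTable (σ : I → Equiv.Perm (Vec k)) (s : I → Shift k) (b : I → Bool) (i : I)
    (y : Vec k) : Vec k :=
  σ i (if b i then shiftRep (s i) y else y)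

/-- No pair of elements of `Y` is identified by the shifts `s`. -/
def CollisionFree (s : I → Shift k) (Y : Finset (I × Vec k)) : Prop :=
  ∀ i y, (i, y) ∈ Y → (i, y + s i) ∉ Y

/-- The permutations `σ` with the pairs selected by `Y` swapped, on the pattern `b`. On
collision-free `Y`, this exchanges the permutations `σ` with their folded tables. -/
noncomputable def swapTables (s : I → Shift k) (b : I → Bool) (Y : Finset (I × Vec k))
    (σ : I → Equiv.Perm (Vec k)) (i : I) : Equiv.Perm (Vec k) :=
  if b i then σ i * swapPerm (s i) {y | (i, y) ∈ Y} else σ i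

lemma swapTables_swapTables (s : I → Shift k) (b : I → Bool) (Y : Finset (I × Vec k))
    (σ : I → Equiv.Perm (Vec k)) : swapTables s b Y (swapTables s b Y σ) = σ := by
  ext i : 1
  by_cases h : b i
  · simp [swapTables, h, mul_assoc, swapPerm_mul_self]
  · simp [swapTables, h]

lemma swapTables_apply {s : I → Shift k} {Y : Finset (I × Vec k)} (hY : CollisionFree s Y)
    (b : I → Bool) (σ : I → Equiv.Perm (Vec k)) {i : I} {y : Vec k} (h : (i, y) ∈ Y) :
    swapTables s b Y σ i y = foldedTable σ s b i y := by
  by_cases hb : b i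
  · simp [swapTables, foldedTable, hb, swapPerm_of_mem (Y := {y | (i, y) ∈ Y}) h (hY i y h)]
  · simp [swapTables, foldedTable, hb]

lemma foldedTable_swapTables {s : I → Shift k} {Y : Finset (I × Vec k)} (hY : CollisionFree s Y)
    (b : I → Bool) (σ : I → Equiv.Perm (Vec k)) {i : I} {y : Vec k} (h : (i, y) ∈ Y) :
    foldedTable (swapTables s b Y σ) s b i y = σ i y := by
  rw [← swapTables_apply hY b _ h, swapTables_swapTables]

/-- The property `P` of tables `x` is decided by an adaptive procedure that reads the entries
`S x`. -/
def DecidedByReading (S : (I → Vec k → Vec k) → Finset (I × Vec k))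
    (P : (I → Vec k → Vec k) → Prop) : Prop :=
  ∀ x x', (∀ i y, (i, y) ∈ S x → x i y = x' i y) → S x' = S x ∧ (P x' ↔ P x)

lemma DecidedByReading.swapTables {S : (I → Vec k → Vec k) → Finset (I × Vec k)}
    {P : (I → Vec k → Vec k) → Prop} (hS : DecidedByReading S P) {s : I → Shift k} (b : I → Bool)
    {σ : I → Equiv.Perm (Vec k)} (hσ : CollisionFree s (S (foldedTable σ s b))) :
    S (fun i => swapTables s b (S (foldedTable σ s b)) σ i) = S (foldedTable σ s b) ∧
      (P (fun i => swapTables s b (S (foldedTable σ s b)) σ i) ↔ P (foldedTable σ s b)) :=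
  hS _ _ fun _ _ h => (swapTables_apply hσ b σ h).symm

lemma DecidedByReading.foldedTable_swapTables {S : (I → Vec k → Vec k) → Finset (I × Vec k)}
    {P : (I → Vec k → Vec k) → Prop} (hS : DecidedByReading S P) {s : I → Shift k} (b : I → Bool)
    {σ : I → Equiv.Perm (Vec k)} (hσ : CollisionFree s (S fun i => σ i)) :
    S (foldedTable (QC.swapTables s b (S fun i => σ i) σ) s b) = S (fun i => σ i) ∧
      (P (foldedTable (QC.swapTables s b (S fun i => σ i) σ) s b) ↔ P fun i => σ i) :=
  hS _ _ fun _ _ h => (QC.foldedTable_swapTables hσ b σ h).symm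

section Counting

variable [Fintype I] [DecidableEq I]

open Classical in
lemma DecidedByReading.card_collisionFree_foldedTable
    {S : (I → Vec k → Vec k) → Finset (I × Vec k)} {P : (I → Vec k → Vec k) → Prop}
    (hS : DecidedByReading S P) (s : I → Shift k) (b : I → Bool) :
    (Finset.univ.filter fun σ : I → Equiv.Perm (Vec k) =>
      CollisionFree s (S (foldedTable σ s b)) ∧ P (foldedTable σ s b)).card =
    (Finset.univ.filter fun σ : I → Equiv.Perm (Vec k) =>
      CollisionFree s (S fun i => σ i) ∧ P fun i => σ i).card := by
  refine Finset.card_bij' (fun σ _ => QC.swapTables s b (S (foldedTable σ s b)) σ)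
    (fun σ _ => QC.swapTables s b (S fun i => σ i) σ) ?_ ?_ ?_ ?_ <;> intro σ hσ <;>
    simp only [Finset.mem_filter, Finset.mem_univ, true_and] at hσ ⊢
  · obtain ⟨hread, hP⟩ := hS.swapTables b hσ.1
    exact ⟨hread.symm ▸ hσ.1, hP.mpr hσ.2⟩
  · obtain ⟨hread, hP⟩ := hS.foldedTable_swapTables b hσ.1
    exact ⟨hread.symm ▸ hσ.1, hP.mpr hσ.2⟩
  · simp only [(hS.swapTables b hσ.1).1, swapTables_swapTables]
  · simp only [(hS.foldedTable_swapTables b hσ.1).1, swapTables_swapTables]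

open Classical in
lemma DecidedByReading.card_not_collisionFree_foldedTable
    {S : (I → Vec k → Vec k) → Finset (I × Vec k)} {P : (I → Vec k → Vec k) → Prop}
    (hS : DecidedByReading S P) (s : I → Shift k) (b : I → Bool) :
    (Finset.univ.filter fun σ : I → Equiv.Perm (Vec k) =>
      ¬ CollisionFree s (S (foldedTable σ s b))).card =
    (Finset.univ.filter fun σ : I → Equiv.Perm (Vec k) =>
      ¬ CollisionFree s (S fun i => σ i)).card := by
  have htrue : DecidedByReading S fun _ => True := fun x x' h => ⟨(hS x x' h).1, Iff.rfl⟩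
  have hfree := htrue.card_collisionFree_foldedTable s b
  simp only [and_true] at hfree
  have hfold := Finset.card_filter_add_card_filter_not (s := Finset.univ)
    fun σ : I → Equiv.Perm (Vec k) => CollisionFree s (S (foldedTable σ s b))
  have hperm := Finset.card_filter_add_card_filter_not (s := Finset.univ)
    fun σ : I → Equiv.Perm (Vec k) => CollisionFree s (S fun i => σ i)
  omega

open Classical in
lemma DecidedByReading.card_foldedTable_le {S : (I → Vec k → Vec k) → Finset (I × Vec k)}
    {P : (I → Vec k → Vec k) → Prop} (hS : DecidedByReading S P) (s : I → Shift k) (b : I → Bool) :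
    (Finset.univ.filter fun σ : I → Equiv.Perm (Vec k) => P (foldedTable σ s b)).card ≤
      (Finset.univ.filter fun σ : I → Equiv.Perm (Vec k) =>
        ¬ CollisionFree s (S fun i => σ i)).card +
      (Finset.univ.filter fun σ : I → Equiv.Perm (Vec k) => P fun i => σ i).card := by
  calc (Finset.univ.filter fun σ : I → Equiv.Perm (Vec k) => P (foldedTable σ s b)).card
      ≤ (Finset.univ.filter fun σ : I → Equiv.Perm (Vec k) =>
          ¬ CollisionFree s (S (foldedTable σ s b))).card +
        (Finset.univ.filter fun σ : I → Equiv.Perm (Vec k) =>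
          CollisionFree s (S (foldedTable σ s b)) ∧ P (foldedTable σ s b)).card := by
        refine (Finset.card_le_card fun σ hσ => ?_).trans (Finset.card_union_le _ _)
        simp only [Finset.mem_union, Finset.mem_filter, Finset.mem_univ, true_and] at hσ ⊢
        tauto
    _ = (Finset.univ.filter fun σ : I → Equiv.Perm (Vec k) =>
          ¬ CollisionFree s (S fun i => σ i)).card +
        (Finset.univ.filter fun σ : I → Equiv.Perm (Vec k) =>
          CollisionFree s (S fun i => σ i) ∧ P fun i => σ i).card := by
        rw [hS.card_not_collisionFree_foldedTable, hS.card_collisionFree_foldedTable]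
    _ ≤ _ := by
        gcongr
        exact And.right

lemma card_shift (k : ℕ) : (Fintype.card (Shift k) : ℝ) = 2 ^ k - 1 := by
  rw [Fintype.card_subtype_compl, card_vec, Fintype.card_subtype_eq,
    Nat.cast_sub Nat.one_le_two_pow]
  simp

lemma card_filter_apply_eq_mul_card {W : Type} [Fintype W] [DecidableEq W] (i : I) (c : W) :
    (Finset.univ.filter fun s : I → W => s i = c).card * Fintype.card W =
      Fintype.card (I → W) := by
  have h := Fintype.card_filter_piFinset_const (Finset.univ : Finset W) i c
  rw [Fintype.piFinset_univ, if_pos (Finset.mem_univ c)] at h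
  rw [h, Finset.card_univ, Fintype.card_fun, ← pow_succ,
    Nat.sub_add_cancel (Fintype.card_pos_iff.mpr ⟨i⟩)]

open Classical in
lemma card_not_collisionFree_le_sum (Y : Finset (I × Vec k)) :
    (Finset.univ.filter fun s : I → Shift k => ¬ CollisionFree s Y).card ≤
      ∑ p ∈ Y ×ˢ Y, (Finset.univ.filter fun s : I → Shift k =>
        (s p.1.1).1 = p.1.2 + p.2.2).card := by
  refine (Finset.card_le_card fun s hs => ?_).trans Finset.card_biUnion_le
  simp only [CollisionFree, Finset.mem_filter, Finset.mem_univ, true_and, not_forall, not_not,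
    exists_prop] at hs
  obtain ⟨i, y, hy, hys⟩ := hs
  simp only [Finset.mem_biUnion, Finset.mem_filter, Finset.mem_univ, true_and]
  refine ⟨((i, y), (i, y + s i)), Finset.mk_mem_product hy hys, ?_⟩
  rw [← add_assoc, vec_add_self, zero_add]

open Classical in
lemma card_not_collisionFree_mul_le (Y : Finset (I × Vec k)) :
    (Finset.univ.filter fun s : I → Shift k => ¬ CollisionFree s Y).card *
      Fintype.card (Shift k) ≤ Y.card ^ 2 * Fintype.card (I → Shift k) := by
  calc _ ≤ (∑ p ∈ Y ×ˢ Y, (Finset.univ.filter fun s : I → Shift k =>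
        (s p.1.1).1 = p.1.2 + p.2.2).card) * Fintype.card (Shift k) :=
        Nat.mul_le_mul_right _ (card_not_collisionFree_le_sum Y)
    _ ≤ ∑ _p ∈ Y ×ˢ Y, Fintype.card (I → Shift k) := by
        rw [Finset.sum_mul]
        refine Finset.sum_le_sum fun p _ => ?_
        by_cases h : p.1.2 + p.2.2 = 0
        · rw [h, Finset.filter_false_of_mem fun s _ => (s p.1.1).2, Finset.card_empty, zero_mul]
          exact Nat.zero_le _
        · rw [← card_filter_apply_eq_mul_card p.1.1 (⟨p.1.2 + p.2.2, h⟩ : Shift k)]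
          simp only [Subtype.ext_iff, le_refl]
    _ = Y.card ^ 2 * Fintype.card (I → Shift k) := by
        rw [Finset.sum_const, Finset.card_product, smul_eq_mul, sq]

/- The birthday bound is quadratic in `|Y|`, but probabilities are at most `1`, and
`min (t ^ 2) 1 ≤ t`. The linear bound only requires the expectation of `|Y|`. -/
open Classical in
lemma card_not_collisionFree_le (hk : 1 ≤ k) (Y : Finset (I × Vec k)) :
    ((Finset.univ.filter fun s : I → Shift k => ¬ CollisionFree s Y).card : ℝ) ≤
      Y.card / √(2 ^ k - 1) * Fintype.card (I → Shift k) := by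
  have hpow : (2 : ℝ) ≤ 2 ^ k := by simpa using pow_le_pow_right₀ (one_le_two (α := ℝ)) hk
  set r := √((2 : ℝ) ^ k - 1)
  have hr : 0 < r := Real.sqrt_pos.mpr (by linarith)
  have hcard : (Fintype.card (Shift k) : ℝ) = r * r := by
    rw [card_shift, Real.mul_self_sqrt (by linarith)]
  rw [div_mul_eq_mul_div, le_div_iff₀ hr]
  rcases le_total (Y.card : ℝ) r with hY | hY
  · have hbirthday : ((Finset.univ.filter fun s : I → Shift k => ¬ CollisionFree s Y).card : ℝ) *
        (r * r) ≤ Y.card ^ 2 * Fintype.card (I → Shift k) := by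
      rw [← hcard]
      exact_mod_cast card_not_collisionFree_mul_le Y
    refine le_of_mul_le_mul_right ?_ hr
    calc _ ≤ (Y.card : ℝ) ^ 2 * Fintype.card (I → Shift k) := by rwa [mul_assoc]
      _ = Y.card * Fintype.card (I → Shift k) * Y.card := by ring
      _ ≤ Y.card * Fintype.card (I → Shift k) * r := by gcongr
  · rw [mul_comm]
    gcongr
    exact Finset.card_le_univ _

end Counting

end Folding

/-! ### The randomized lower bound -/

namespace DTree

variable {ι ι' L : Type} {a : ℕ}

/-- The decision tree that queries the position `d i` wherever the given tree queries `i`. -/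
def reindex (d : ι → ι') : DTree ι (fun _ => a) L → DTree ι' (fun _ => a) L
  | leaf b => leaf b
  | node i child => node (d i) fun v => reindex d (child v)

lemma eval_reindex (d : ι → ι') (T : DTree ι (fun _ => a) L) (z : ι' → Fin a) :
    (T.reindex d).eval z = T.eval (z ∘ d) := by
  induction T with
  | leaf => rfl
  | node i _ ih => exact ih (z (d i))

lemma depth_reindex (d : ι → ι') (T : DTree ι (fun _ => a) L) :
    (T.reindex d).depth = T.depth := by
  induction T with
  | leaf => rfl
  | node _ _ ih => simp only [reindex, depth, ih]

end DTree

section Averaging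

variable {Ω : Type}

lemma exists_mem_support_le_of_le_tsum (μ : PMF Ω) {f : Ω → ℝ≥0∞} {c : ℝ≥0∞} (hc : c ≠ ∞)
    (h : c ≤ ∑' T, μ T * f T) : ∃ T ∈ μ.support, c ≤ f T := by
  by_contra! hlt
  obtain ⟨T₀, hT₀⟩ := μ.support_nonempty
  have hle : ∀ T, μ T * f T ≤ μ T * c := by
    intro T
    by_cases hT : T ∈ μ.support
    · gcongr
      exact (hlt T hT).le
    · rw [(μ.apply_eq_zero_iff T).mpr hT, zero_mul, zero_mul]
  have hsum : ∑' T, μ T * c = c := by rw [ENNReal.tsum_mul_right, μ.tsum_coe, one_mul]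
  have hfinite : ∑' T, μ T * f T ≠ ∞ :=
    ne_top_of_le_ne_top hc ((ENNReal.tsum_le_tsum hle).trans_eq hsum)
  have hstrict : μ T₀ * f T₀ < μ T₀ * c :=
    ENNReal.mul_lt_mul_right hT₀ (μ.apply_ne_top T₀) (hlt T₀ hT₀)
  exact (h.trans_lt (ENNReal.tsum_lt_tsum hfinite hle hstrict)).ne hsum.symm

open Classical in
lemma sum_toOuterMeasure_eq_tsum {J : Type} [Fintype J] (μ : PMF Ω) (P : Ω → J → Prop) :
    ∑ j, μ.toOuterMeasure {T | P T j} =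
      ∑' T, μ T * ((Finset.univ.filter fun j => P T j).card : ℝ≥0∞) := by
  simp_rw [PMF.toOuterMeasure_apply]
  rw [← Summable.tsum_finsetSum fun _ _ => ENNReal.summable]
  refine tsum_congr fun T => ?_
  simp only [Set.indicator_apply, Set.mem_ofPred_eq]
  rw [← Finset.sum_filter, Finset.sum_const, nsmul_eq_mul, mul_comm]

open Classical in
lemma exists_mem_support_card_le {J : Type} [Fintype J] (μ : PMF Ω) (P : Ω → J → Prop)
    (h : ∀ j, 2 / 3 ≤ μ.toOuterMeasure {T | P T j}) :
    ∃ T ∈ μ.support, 2 * Fintype.card J ≤ 3 * (Finset.univ.filter fun j => P T j).card := by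
  have hsum : (Fintype.card J : ℝ≥0∞) * (2 / 3) ≤
      ∑' T, μ T * ((Finset.univ.filter fun j => P T j).card : ℝ≥0∞) := by
    rw [← sum_toOuterMeasure_eq_tsum, ← nsmul_eq_mul, Fintype.card, ← Finset.sum_const]
    exact Finset.sum_le_sum fun j _ => h j
  obtain ⟨T, hT, hcard⟩ := exists_mem_support_le_of_le_tsum μ (by finiteness) hsum
  refine ⟨T, hT, ?_⟩
  rw [← mul_div_assoc, ENNReal.div_le_iff (by norm_num) (by norm_num)] at hcard
  rw [mul_comm, mul_comm 3]
  exact_mod_cast hcard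

end Averaging

section LowerBound

variable {k : ℕ}

lemma followsPattern_foldedTable {I : Type} (σ : I → Equiv.Perm (Vec k)) (s : I → Shift k)
    (b : I → Bool) : FollowsPattern b (foldedTable σ s b) := by
  intro i
  split_ifs with h
  · exact ⟨(s i).1, (s i).2, fun y => by simp only [foldedTable, if_pos h, shiftRep_add]⟩
  · intro y y' hy
    simpa only [foldedTable, if_neg h, EmbeddingLike.apply_eq_iff_eq] using hy

lemma foldedTable_ne_zero {I : Type} (i : I) (hk : 2 ≤ k) (σ : I → Equiv.Perm (Vec k))
    (s : I → Shift k) (b : I → Bool) : foldedTable σ s b ≠ 0 := by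
  intro hzero
  set y₀ := (σ i).symm 0
  have hpre (y) : (if b i then shiftRep (s i) y else y) = y₀ :=
    (σ i).eq_symm_apply.mpr (congrFun (congrFun hzero i) y)
  have hpair : (Finset.univ : Finset (Vec k)) ⊆ {y₀, y₀ + (s i).1} := by
    intro y _
    rw [Finset.mem_insert, Finset.mem_singleton, ← hpre y]
    split_ifs
    · rcases shiftRep_eq_or (s i) y with h | h <;> rw [h]
      · exact Or.inl rfl
      · exact Or.inr (vec_add_add_cancel y (s i)).symm
    · exact Or.inl rfl
  have hcard := (Finset.card_le_card hpair).trans Finset.card_le_two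
  rw [Finset.card_univ, card_vec] at hcard
  have hfour := Nat.pow_le_pow_right (n := 2) (by norm_num) hk
  omega

variable {L : Type}

open Classical in
/-- The table entries about which the tree `T` learns something: some gadget encoding a bit of the
entry has its critical position queried. -/
noncomputable def seenEntries (T : DTree (Position k) (fun _ => 2) L) (ω : Hidden k)
    (x : Fin (3 * k) → Vec k → Vec k) : Finset (Fin (3 * k) × Vec k) :=
  (foundGadgets T ω x).image fun g => (g.1, g.2.1)

/-- The tree `T` queries the cell `b` of the cheat sheet on the hard input. -/
def QueriesCell (T : DTree (Position k) (fun _ => 2) L) (ω : Hidden k) (b : Fin (3 * k) → Bool)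
    (x : Fin (3 * k) → Vec k → Vec k) : Prop :=
  ∃ q, (.inr (.inl (b, q)) : Position k) ∈ T.queried (hardInput x ω)

lemma mem_seenEntries {T : DTree (Position k) (fun _ => 2) L} {ω : Hidden k}
    {x : Fin (3 * k) → Vec k → Vec k} {g : Gadget k}
    (hg : criticalPosition ω g ∈ T.queried (hardInput x ω)) :
    (g.1, g.2.1) ∈ seenEntries T ω x := by
  classical
  exact Finset.mem_image_of_mem _ (Finset.mem_filter.mpr ⟨Finset.mem_univ g, hg⟩)

lemma queried_hardInput_congr {T : DTree (Position k) (fun _ => 2) L} {ω : Hidden k}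
    {x x' : Fin (3 * k) → Vec k → Vec k}
    (h : ∀ i y, (i, y) ∈ seenEntries T ω x → x i y = x' i y) :
    T.queried (hardInput x' ω) = T.queried (hardInput x ω) := by
  refine DTree.queried_congr ?_
  rintro (⟨g, j, l⟩ | p) hq
  · by_cases hcrit : l = (ω g).2 j ∧ j = (ω g).1
    · obtain ⟨rfl, rfl⟩ := hcrit
      simp only [hardInput, h _ _ (mem_seenEntries hq)]
    · simp only [hardInput, hardMatrix]
      split_ifs with hl hj
      · exact absurd ⟨hl, hj⟩ hcrit
      · rfl
      · rfl
  · rfl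

lemma decidedByReading_queriesCell (T : DTree (Position k) (fun _ => 2) L) (ω : Hidden k)
    (b : Fin (3 * k) → Bool) : DecidedByReading (seenEntries T ω) (QueriesCell T ω b) := by
  intro x x' h
  have hqueried := queried_hardInput_congr h
  exact ⟨by rw [seenEntries, seenEntries, foundGadgets, foundGadgets, hqueried],
    by rw [QueriesCell, QueriesCell, hqueried]⟩

lemma eval_certifiedInput_eq {T : DTree (Position k) (fun _ => 2) L} {ω : Hidden k}
    {b : Fin (3 * k) → Bool} {x : Fin (3 * k) → Vec k → Vec k} (h : ¬ QueriesCell T ω b x) :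
    T.eval (certifiedInput x ω b 0) = T.eval (hardInput x ω) := by
  refine DTree.eval_congr ?_
  rintro (p | ⟨ℓ, g, o⟩ | p) hq
  · rfl
  · have hℓ : ℓ ≠ b := by
      rintro rfl
      exact h ⟨_, hq⟩
    simp only [hardInput, certifiedInput, if_neg hℓ]
  · rfl

open Classical in
lemma card_queriesCell_le (T : DTree (Position k) (fun _ => 2) L) (ω : Hidden k)
    (x : Fin (3 * k) → Vec k → Vec k) :
    (Finset.univ.filter fun b => QueriesCell T ω b x).card ≤ T.depth := by
  have h : (Finset.univ.filter fun b => QueriesCell T ω b x).image some ⊆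
      (T.queried (hardInput x ω)).image fun i : Position k =>
        match i with
        | .inr (.inl (b, _)) => some b
        | _ => none := by
    intro o ho
    simp only [Finset.mem_image, Finset.mem_filter, Finset.mem_univ, true_and] at ho ⊢
    obtain ⟨b, ⟨q, hq⟩, rfl⟩ := ho
    exact ⟨_, hq, rfl⟩
  rw [← Finset.card_image_of_injective _ (Option.some_injective _)]
  exact (Finset.card_le_card h).trans (Finset.card_image_le.trans (T.card_queried_le _))

/-- The parameters of the hard distribution: the hidden positions in the gadgets, the permutations,
the shifts that fold them, and the pattern telling which of them are folded. -/
abbrev Param (k : ℕ) := Hidden k × (Fin (3 * k) → Equiv.Perm (Vec k)) × (Fin (3 * k) → Shift k) ×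
  (Fin (3 * k) → Bool)

/-- The tables obtained by folding the permutations according to the pattern. -/
noncomputable def Param.tables (u : Param k) : Fin (3 * k) → Vec k → Vec k :=
  foldedTable u.2.1 u.2.2.1 u.2.2.2

/-- The tree queries the cell of the cheat sheet that belongs to the pattern of the tables. -/
def FindsCell (T : DTree (Position k) (fun _ => 2) L) (u : Param k) : Prop :=
  QueriesCell T u.1 u.2.2.2 u.tables

noncomputable instance (k : ℕ) : Fintype (Param k) := instFintypeProd _ _

lemma card_pattern (k : ℕ) : (Fintype.card (Fin (3 * k) → Bool) : ℝ) = (2 ^ k) ^ 3 := by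
  rw [Fintype.card_fun, Fintype.card_bool, Fintype.card_fin, ← pow_mul, mul_comm k]
  push_cast
  rfl

lemma card_param (k : ℕ) : (Fintype.card (Param k) : ℝ) = Fintype.card (Hidden k) *
    (Fintype.card (Fin (3 * k) → Equiv.Perm (Vec k)) * (Fintype.card (Fin (3 * k) → Shift k) *
      (2 ^ k) ^ 3)) := by
  rw [Fintype.card_prod, Fintype.card_prod, Fintype.card_prod, ← card_pattern]
  push_cast
  rfl

open Classical in
lemma sum_not_collisionFree_le (hk : 1 ≤ k) (T : DTree (Position k) (fun _ => 2) L)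
    (x : Fin (3 * k) → Vec k → Vec k) :
    (∑ ω : Hidden k, ((Finset.univ.filter fun s : Fin (3 * k) → Shift k =>
      ¬ CollisionFree s (seenEntries T ω x)).card : ℝ)) ≤
      24 / ((2 ^ k) ^ 2 * √(2 ^ k - 1)) * T.depth *
        (Fintype.card (Hidden k) * Fintype.card (Fin (3 * k) → Shift k)) := by
  calc _ ≤ ∑ ω : Hidden k, ((foundGadgets T ω x).card : ℝ) / √(2 ^ k - 1) *
          Fintype.card (Fin (3 * k) → Shift k) := by
        refine Finset.sum_le_sum fun ω _ => (card_not_collisionFree_le hk _).trans ?_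
        gcongr
        exact Finset.card_image_le
    _ = (∑ ω : Hidden k, ((foundGadgets T ω x).card : ℝ)) / √(2 ^ k - 1) *
          Fintype.card (Fin (3 * k) → Shift k) := by
        rw [← Finset.sum_mul, ← Finset.sum_div]
    _ ≤ 24 / (2 ^ k) ^ 2 * T.depth * Fintype.card (Hidden k) / √(2 ^ k - 1) *
          Fintype.card (Fin (3 * k) → Shift k) := by
        gcongr
        exact sum_card_foundGadgets_le x T
    _ = _ := by
        rw [← div_div]
        ring

open Classical in
lemma sum_param_not_collisionFree_le (hk : 1 ≤ k) (T : DTree (Position k) (fun _ => 2) L) :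
    (∑ ω : Hidden k, ∑ s : Fin (3 * k) → Shift k, ∑ _b : Fin (3 * k) → Bool,
      ((Finset.univ.filter fun σ : Fin (3 * k) → Equiv.Perm (Vec k) =>
        ¬ CollisionFree s (seenEntries T ω fun i => σ i)).card : ℝ)) ≤
      24 / ((2 ^ k) ^ 2 * √(2 ^ k - 1)) * T.depth * Fintype.card (Param k) := by
  calc _ = ∑ σ : Fin (3 * k) → Equiv.Perm (Vec k), (2 ^ k) ^ 3 * ∑ ω : Hidden k,
        ((Finset.univ.filter fun s : Fin (3 * k) → Shift k =>
          ¬ CollisionFree s (seenEntries T ω fun i => σ i)).card : ℝ) := by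
        simp_rw [← Finset.sum_boole, Finset.mul_sum]
        rw [Finset.sum_comm (s := (Finset.univ : Finset (Fin (3 * k) → Equiv.Perm (Vec k))))]
        refine Finset.sum_congr rfl fun ω _ => ?_
        simp_rw [Finset.sum_const, Finset.card_univ, nsmul_eq_mul, card_pattern, ← Finset.mul_sum]
        rw [Finset.sum_comm]
    _ ≤ ∑ σ : Fin (3 * k) → Equiv.Perm (Vec k), (2 ^ k) ^ 3 *
        (24 / ((2 ^ k) ^ 2 * √(2 ^ k - 1)) * T.depth *
          (Fintype.card (Hidden k) * Fintype.card (Fin (3 * k) → Shift k))) := by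
        gcongr
        exact sum_not_collisionFree_le hk T _
    _ = _ := by
        rw [Finset.sum_const, Finset.card_univ, nsmul_eq_mul, card_param]
        ring

open Classical in
lemma sum_param_queriesCell_le (T : DTree (Position k) (fun _ => 2) L) :
    (∑ ω : Hidden k, ∑ _s : Fin (3 * k) → Shift k, ∑ b : Fin (3 * k) → Bool,
      ((Finset.univ.filter fun σ : Fin (3 * k) → Equiv.Perm (Vec k) =>
        QueriesCell T ω b fun i => σ i).card : ℝ)) ≤
      1 / (2 ^ k) ^ 3 * T.depth * Fintype.card (Param k) := by
  calc _ ≤ ∑ _ω : Hidden k, ∑ _s : Fin (3 * k) → Shift k,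
        ∑ _σ : Fin (3 * k) → Equiv.Perm (Vec k), (T.depth : ℝ) := by
        gcongr
        simp_rw [← Finset.sum_boole]
        rw [Finset.sum_comm]
        simp_rw [Finset.sum_boole]
        gcongr
        exact card_queriesCell_le T ω _
    _ = _ := by
        simp_rw [Finset.sum_const, Finset.card_univ, nsmul_eq_mul]
        rw [card_param]
        field_simp

open Classical in
lemma card_findsCell_le (hk : 1 ≤ k) (T : DTree (Position k) (fun _ => 2) L) :
    ((Finset.univ.filter fun u : Param k => FindsCell T u).card : ℝ) ≤
    (24 / ((2 ^ k) ^ 2 * √(2 ^ k - 1)) + 1 / (2 ^ k) ^ 3) * T.depth * Fintype.card (Param k) := by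
  calc _ = ∑ ω : Hidden k, ∑ s : Fin (3 * k) → Shift k, ∑ b : Fin (3 * k) → Bool,
        ((Finset.univ.filter fun σ : Fin (3 * k) → Equiv.Perm (Vec k) =>
          QueriesCell T ω b (foldedTable σ s b)).card : ℝ) := by
        simp_rw [← Finset.sum_boole]
        rw [Fintype.sum_prod_type]
        refine Finset.sum_congr rfl fun ω _ => ?_
        rw [Fintype.sum_prod_type, Finset.sum_comm, Fintype.sum_prod_type]
        rfl
    _ ≤ ∑ ω : Hidden k, ∑ s : Fin (3 * k) → Shift k, ∑ b : Fin (3 * k) → Bool,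
        (((Finset.univ.filter fun σ : Fin (3 * k) → Equiv.Perm (Vec k) =>
          ¬ CollisionFree s (seenEntries T ω fun i => σ i)).card : ℝ) +
        (Finset.univ.filter fun σ : Fin (3 * k) → Equiv.Perm (Vec k) =>
          QueriesCell T ω b fun i => σ i).card) := by
        gcongr with ω _ s _ b
        exact_mod_cast (decidedByReading_queriesCell T ω b).card_foldedTable_le s b
    _ ≤ _ := by
        simp_rw [Finset.sum_add_distrib]
        rw [add_mul, add_mul]
        exact add_le_add (sum_param_not_collisionFree_le hk T) (sum_param_queriesCell_le T)

/-- The two inputs with the parameters `u`: a certified one of value `true` and an uncertified one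
of value `false`. -/
noncomputable def hardPair (u : Param k) (c : Bool) : Position k → Fin 2 :=
  if c then certifiedInput u.tables u.1 u.2.2.2 0 else hardInput u.tables u.1

lemma accepts_hardPair_iff (hk : 2 ≤ k) (u : Param k) (c : Bool) :
    Accepts (hardPair u c) ↔ c = true := by
  cases c
  · simpa [hardPair] using not_accepts_hardInput u.1 (x := u.tables)
      (foldedTable_ne_zero (⟨0, by omega⟩ : Fin (3 * k)) hk _ _ _)
  · simpa [hardPair] using accepts_certifiedInput_iff u.1 (x := u.tables)
      (followsPattern_foldedTable _ _ _) 0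

open Classical in
lemma card_param_le_of_card_le (T : DTree (Position k) (fun _ => 2) (Option Bool))
    (hT : 2 * Fintype.card (Param k × Bool) ≤ 3 * (Finset.univ.filter fun j : Param k × Bool =>
      T.eval (hardPair j.1 j.2) = some j.2).card) :
    Fintype.card (Param k) ≤ 3 * (Finset.univ.filter fun u : Param k => FindsCell T u).card := by
  have hcorrect : (Finset.univ.filter fun j : Param k × Bool =>
      T.eval (hardPair j.1 j.2) = some j.2).card ≤
      Fintype.card (Param k) + (Finset.univ.filter fun u : Param k => FindsCell T u).card := by
    rw [Finset.card_filter, Fintype.sum_prod_type, Finset.card_filter, ← Finset.card_univ,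
      Finset.card_eq_sum_ones, ← Finset.sum_add_distrib]
    refine Finset.sum_le_sum fun u _ => ?_
    rw [Fintype.sum_bool]
    by_cases h : FindsCell T u
    · rw [if_pos h]
      split_ifs <;> omega
    · have heval : T.eval (hardPair u true) = T.eval (hardPair u false) := eval_certifiedInput_eq h
      rw [if_neg h]
      dsimp only
      rw [heval]
      generalize T.eval (hardPair u false) = o
      rcases o with _ | _ | _ <;> simp
  rw [Fintype.card_prod, Fintype.card_bool] at hT
  omega

open Classical in
lemma one_le_mul_depth (hk : 1 ≤ k) (T : DTree (Position k) (fun _ => 2) (Option Bool))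
    (hT : 2 * Fintype.card (Param k × Bool) ≤ 3 * (Finset.univ.filter fun j : Param k × Bool =>
      T.eval (hardPair j.1 j.2) = some j.2).card) :
    1 ≤ 3 * (24 / ((2 ^ k) ^ 2 * √(2 ^ k - 1)) + 1 / (2 ^ k) ^ 3) * (T.depth : ℝ) := by
  have hmany : (Fintype.card (Param k) : ℝ) ≤
      3 * ((Finset.univ.filter fun u : Param k => FindsCell T u).card : ℝ) :=
    mod_cast card_param_le_of_card_le T hT
  have hfew := card_findsCell_le hk T
  have hne : Nonempty (Shift k) := ⟨⟨fun _ => 1, fun h => one_ne_zero (congrFun h ⟨0, by omega⟩)⟩⟩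
  have hpos : (0 : ℝ) < Fintype.card (Param k) := by
    rw [card_param]
    positivity
  nlinarith

lemma rpow_five_halves_le_of_one_le_mul {N : ℝ} (hN : 2 ≤ N) {q : ℝ} (hq : 0 ≤ q)
    (h : 1 ≤ 3 * (24 / (N ^ 2 * √(N - 1)) + 1 / N ^ 3) * q) :
    N ^ ((5 : ℝ) / 2) ≤ 147 * q := by
  have hN₀ : 0 < N := by linarith
  have hrpow : N ^ ((5 : ℝ) / 2) = N ^ 2 * √N := by
    rw [Real.sqrt_eq_rpow, ← Real.rpow_natCast, ← Real.rpow_add hN₀]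
    norm_num
  have hsqrt : √N ≤ 2 * √(N - 1) := by
    rw [Real.sqrt_le_left (by positivity), mul_pow, Real.sq_sqrt (by linarith)]
    linarith
  have hpos : 0 < √(N - 1) := Real.sqrt_pos.mpr (by linarith)
  have hself : √N ≤ N := Real.sqrt_le_self_iff.mpr (Or.inr (by linarith))
  rw [hrpow]
  calc N ^ 2 * √N ≤ N ^ 2 * √N * (3 * (24 / (N ^ 2 * √(N - 1)) + 1 / N ^ 3) * q) :=
        le_mul_of_one_le_right (by positivity) h
    _ = (72 * (√N / √(N - 1)) + 3 * (√N / N)) * q := by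
        field_simp
        ring
    _ ≤ (72 * 2 + 3 * 1) * q := by
        gcongr
        · rwa [div_le_iff₀ hpos]
        · rwa [div_le_one hN₀]
    _ = 147 * q := by norm_num

end LowerBound

/-- A randomized algorithm of depth at most `d` computes `f` with error at most `1 / 3`. -/
def IsRandomizedComputable {ι : Type} {α : ι → ℕ} (f : PartialFn ι α) (d : ℕ) : Prop :=
  ∃ μ : PMF (DTree ι α (Option Bool)), (∀ T ∈ μ.support, T.depth ≤ d) ∧
    ∀ x b, f x = some b → 2 / 3 ≤ μ.toOuterMeasure {T | T.eval x = some b}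

open Classical in
theorem rpow_le_of_isRandomizedComputable_accepts {k : ℕ} (hk : 2 ≤ k) {ι : Type}
    {e : Position k → ι} (he : Function.Injective e) {f : PartialFn ι fun _ => 2}
    (hf : ∀ z, f z = some (decide (Accepts (z ∘ e)))) {d : ℕ} (hd : IsRandomizedComputable f d) :
    ((2 : ℝ) ^ k) ^ ((5 : ℝ) / 2) ≤ 147 * d := by
  obtain ⟨μ, hdepth, hμ⟩ := hd
  have : Nonempty (Position k) := ⟨.inr (.inr ⟨0, by omega⟩)⟩
  let e' : ι → Position k := Function.invFun e
  have he' : e' ∘ e = id := Function.invFun_comp he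
  obtain ⟨T, hT, hcard⟩ := exists_mem_support_card_le μ
    (fun T (j : Param k × Bool) => T.eval (hardPair j.1 j.2 ∘ e') = some j.2) fun j => by
      refine hμ _ _ ?_
      rw [hf, Function.comp_assoc, he', Function.comp_id]
      simp only [accepts_hardPair_iff hk, Bool.decide_eq_true]
  simp_rw [← DTree.eval_reindex] at hcard
  have hquery := one_le_mul_depth (by omega) (T.reindex e') hcard
  rw [DTree.depth_reindex] at hquery
  have hN : (2 : ℝ) ≤ 2 ^ k := le_self_pow₀ one_le_two (by omega)
  calc ((2 : ℝ) ^ k) ^ ((5 : ℝ) / 2) ≤ 147 * T.depth :=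
        rpow_five_halves_le_of_one_le_mul hN (Nat.cast_nonneg _) hquery
    _ ≤ 147 * d := by
        gcongr
        exact hdepth T hT

/-! ### Quantum algorithms cannot compute parity with few queries -/

section Parity

variable {k : ℕ}

/-- The space spanned by the functions that depend on at most `t` of the `k` bits, in which the
amplitudes of a `t`-query algorithm lie. -/
def juntaSpan (k t : ℕ) : Submodule ℂ (Vec k → ℂ) :=
  Submodule.span ℂ {F | ∃ S : Finset (Fin k), S.card ≤ t ∧ DependsOn F S}

lemma const_mem_juntaSpan (c : ℂ) (t : ℕ) : (fun _ => c) ∈ juntaSpan k t :=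
  Submodule.subset_span ⟨∅, Nat.zero_le t, fun _ _ _ => rfl⟩

lemma mul_mem_juntaSpan {s t : ℕ} {F G : Vec k → ℂ} (hF : F ∈ juntaSpan k s)
    (hG : G ∈ juntaSpan k t) : F * G ∈ juntaSpan k (s + t) := by
  have hFG := Submodule.mul_mem_mul hF hG
  rw [juntaSpan, juntaSpan, Submodule.span_mul_span] at hFG
  refine Submodule.span_mono ?_ hFG
  rintro _ ⟨F, ⟨S, hS, hF⟩, G, ⟨S', hS', hG⟩, rfl⟩
  refine ⟨S ∪ S', (Finset.card_union_le _ _).trans (Nat.add_le_add hS hS'), fun w w' h => ?_⟩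
  simp only [Finset.mem_coe, Finset.mem_union] at h
  exact congrArg₂ (· * ·) (hF fun i hi => h i (Or.inl hi)) (hG fun i hi => h i (Or.inr hi))

lemma star_mem_juntaSpan {t : ℕ} {F : Vec k → ℂ} (hF : F ∈ juntaSpan k t) :
    star F ∈ juntaSpan k t := by
  induction hF using Submodule.span_induction with
  | mem F hF =>
    obtain ⟨S, hS, hF⟩ := hF
    exact Submodule.subset_span ⟨S, hS, fun w w' h => congrArg star (hF h)⟩
  | zero => simp only [star_zero, Submodule.zero_mem]
  | add F G _ _ hF hG => simpa only [star_add] using Submodule.add_mem _ hF hG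
  | smul c F _ hF => simpa only [star_smul] using Submodule.smul_mem _ (star c) hF

/-- The sign of the parity of the bits. -/
def paritySign (w : Vec k) : ℂ := if ∑ h, w h = 0 then 1 else -1

lemma paritySign_add_single (w : Vec k) (h : Fin k) :
    paritySign (w + Pi.single h 1) = - paritySign w := by
  simp only [paritySign, Pi.add_apply, Finset.sum_add_distrib, Finset.sum_pi_single',
    Finset.mem_univ, if_true]
  generalize ∑ h, w h = b
  fin_cases b <;> simp

lemma sum_paritySign_mul_of_dependsOn {S : Finset (Fin k)} (hS : S.card < k) {F : Vec k → ℂ}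
    (hF : DependsOn F S) : ∑ w, paritySign w * F w = 0 := by
  obtain ⟨h, hh⟩ : ∃ h, h ∉ S := by
    by_contra! hall
    rw [Finset.eq_univ_of_forall hall, Finset.card_univ, Fintype.card_fin] at hS
    exact hS.false
  have hinvariant (w : Vec k) : F (w + Pi.single h 1) = F w := by
    refine hF fun i hi => ?_
    have hne : i ≠ h := ne_of_mem_of_not_mem hi hh
    rw [Pi.add_apply, Pi.single_eq_of_ne hne, add_zero]
  have hneg : ∑ w, paritySign w * F w = -∑ w, paritySign w * F w := by
    conv_lhs => rw [← Equiv.sum_comp (Equiv.addRight (Pi.single h (1 : Fin 2) : Vec k))]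
    simp only [Equiv.coe_addRight, paritySign_add_single, hinvariant, neg_mul,
      Finset.sum_neg_distrib]
  exact self_eq_neg.mp hneg

lemma sum_paritySign_mul_of_mem_juntaSpan {t : ℕ} (ht : t < k) {F : Vec k → ℂ}
    (hF : F ∈ juntaSpan k t) : ∑ w, paritySign w * F w = 0 := by
  induction hF using Submodule.span_induction with
  | mem F hF =>
    obtain ⟨S, hS, hF⟩ := hF
    exact sum_paritySign_mul_of_dependsOn (hS.trans_lt ht) hF
  | zero => simp only [Pi.zero_apply, mul_zero, Finset.sum_const_zero]
  | add F F' _ _ h h' =>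
    simp only [Pi.add_apply, mul_add, Finset.sum_add_distrib, h, h', add_zero]
  | smul c F _ h =>
    simp only [Pi.smul_apply, smul_eq_mul, mul_left_comm _ c, ← Finset.mul_sum, h, mul_zero]

lemma mulVec_apply_mem {τ Y : Type} [Fintype τ] {p : Submodule ℂ (Y → ℂ)} (M : Matrix τ τ ℂ)
    {φ : Y → τ → ℂ} (h : ∀ j, (fun w => φ w j) ∈ p) (j : τ) :
    (fun w => M.mulVec (φ w) j) ∈ p := by
  have heq : (fun w => M.mulVec (φ w) j) = ∑ j', M j j' • fun w => φ w j' := by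
    ext w
    rw [Matrix.mulVec, dotProduct, Finset.sum_apply]
    rfl
  rw [heq]
  exact Submodule.sum_mem _ fun j' _ => Submodule.smul_mem _ _ (h j')

end Parity

section QuantumStates

variable {ι : Type} [Fintype ι] [DecidableEq ι]

lemma oracleMatrix_mulVec {W : ℕ} (x : Input ι fun _ => 2) (v : QIdx ι (fun _ => 2) W → ℂ)
    (j : QIdx ι (fun _ => 2) W) :
    (oracleMatrix W x).mulVec v j = v (⟨j.1.1, j.1.2 + x j.1.1⟩, j.2) := by
  obtain ⟨⟨i, a⟩, c⟩ := j
  have hadd : ∀ a b : Fin 2, a + b + b = a := by decide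
  rw [Matrix.mulVec, dotProduct, Finset.sum_eq_single (⟨i, a + x i⟩, c)]
  · simp [oracleMatrix, hadd]
  · rintro ⟨⟨i', a'⟩, c'⟩ - hne
    simp only [oracleMatrix, Matrix.of_apply]
    rw [if_neg, zero_mul]
    rintro ⟨rfl, hia⟩
    obtain ⟨rfl, ha⟩ := Sigma.mk.inj hia
    rw [heq_iff_eq.mp ha, hadd] at hne
    exact hne rfl
  · exact fun h => absurd (Finset.mem_univ _) h

lemma sum_norm_sq_oracleMatrix_mulVec {W : ℕ} (x : Input ι fun _ => 2)
    (v : QIdx ι (fun _ => 2) W → ℂ) :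
    ∑ j, ‖(oracleMatrix W x).mulVec v j‖ ^ 2 = ∑ j, ‖v j‖ ^ 2 := by
  have hadd : ∀ a b : Fin 2, a + b + b = a := by decide
  let flip : QIdx ι (fun _ => 2) W ≃ QIdx ι (fun _ => 2) W :=
    Function.Involutive.toPerm (fun j => (⟨j.1.1, j.1.2 + x j.1.1⟩, j.2)) fun j => by
      simp only [hadd]
  simp_rw [oracleMatrix_mulVec]
  exact Equiv.sum_comp flip fun j => ‖v j‖ ^ 2

lemma sum_norm_sq_unitary_mulVec {τ : Type} [Fintype τ] [DecidableEq τ] {U : Matrix τ τ ℂ}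
    (hU : U ∈ Matrix.unitaryGroup τ ℂ) (v : τ → ℂ) :
    ∑ j, ‖U.mulVec v j‖ ^ 2 = ∑ j, ‖v j‖ ^ 2 := by
  have hdot (v : τ → ℂ) : ((∑ j, ‖v j‖ ^ 2 : ℝ) : ℂ) = star v ⬝ᵥ v := by
    push_cast
    exact Finset.sum_congr rfl fun j _ => (Complex.conj_mul' _).symm
  rw [← Complex.ofReal_inj, hdot, hdot, Matrix.star_mulVec, Matrix.dotProduct_mulVec,
    Matrix.vecMul_vecMul, ← Matrix.star_eq_conjTranspose, Matrix.mem_unitaryGroup_iff'.mp hU,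
    Matrix.vecMul_one]

lemma sum_norm_sq_qProd_mulVec (A : QAlg ι fun _ => 2) (x : Input ι fun _ => 2) (t : ℕ) :
    ∑ j, ‖(qProd A.U (oracleMatrix A.W x) t).mulVec A.init j‖ ^ 2 = 1 := by
  induction t with
  | zero => rw [qProd, sum_norm_sq_unitary_mulVec (A.unitary 0), A.init_norm]
  | succ t ih =>
    rw [qProd, ← Matrix.mulVec_mulVec, ← Matrix.mulVec_mulVec,
      sum_norm_sq_unitary_mulVec (A.unitary _), sum_norm_sq_oracleMatrix_mulVec, ih]

lemma QAlg.outProb_true_add_outProb_false_le (A : QAlg ι fun _ => 2) (x : Input ι fun _ => 2) :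
    A.outProb x (some true) + A.outProb x (some false) ≤ 1 := by
  rw [← sum_norm_sq_qProd_mulVec A x A.T, QAlg.outProb, QAlg.outProb, ← Finset.sum_add_distrib]
  refine Finset.sum_le_sum fun j _ => ?_
  rcases A.out j with _ | _ | _ <;> simp [QAlg.finalState]

variable {k : ℕ} {X : Vec k → Input ι fun _ => 2}

lemma oracleMatrix_mulVec_mem_juntaSpan (hX : ∀ i, ∃ h, DependsOn (fun w => X w i) {h}) {W t : ℕ}
    {φ : Vec k → QIdx ι (fun _ => 2) W → ℂ} (hφ : ∀ j, (fun w => φ w j) ∈ juntaSpan k t)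
    (j : QIdx ι (fun _ => 2) W) :
    (fun w => (oracleMatrix W (X w)).mulVec (φ w) j) ∈ juntaSpan k (t + 1) := by
  have hbit (c : Fin 2) : (fun w => if X w j.1.1 = c then (1 : ℂ) else 0) ∈ juntaSpan k 1 := by
    obtain ⟨h, hh⟩ := hX j.1.1
    refine Submodule.subset_span ⟨{h}, (Finset.card_singleton h).le, fun w w' hw => ?_⟩
    rw [Finset.coe_singleton] at hw
    exact congrArg (fun a => if a = c then (1 : ℂ) else 0) (hh hw)
  have heq : (fun w => (oracleMatrix W (X w)).mulVec (φ w) j) =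
      ∑ c : Fin 2, (fun w => φ w (⟨j.1.1, j.1.2 + c⟩, j.2)) *
        fun w => if X w j.1.1 = c then (1 : ℂ) else 0 := by
    ext w
    simp [oracleMatrix_mulVec]
  rw [heq]
  exact Submodule.sum_mem _ fun c _ => mul_mem_juntaSpan (hφ _) (hbit c)

lemma qProd_mulVec_mem_juntaSpan (hX : ∀ i, ∃ h, DependsOn (fun w => X w i) {h})
    (A : QAlg ι fun _ => 2) (t : ℕ) (j : QIdx ι (fun _ => 2) A.W) :
    (fun w => (qProd A.U (oracleMatrix A.W (X w)) t).mulVec A.init j) ∈ juntaSpan k t := by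
  induction t generalizing j with
  | zero => exact const_mem_juntaSpan ((A.U 0).mulVec A.init j) _
  | succ t ih =>
    simp only [qProd, ← Matrix.mulVec_mulVec]
    exact mulVec_apply_mem _ (oracleMatrix_mulVec_mem_juntaSpan hX ih) j

lemma outProb_mem_juntaSpan (hX : ∀ i, ∃ h, DependsOn (fun w => X w i) {h})
    (A : QAlg ι fun _ => 2) (v : Option Bool) :
    (fun w => (A.outProb (X w) v : ℂ)) ∈ juntaSpan k (A.T + A.T) := by
  have heq : (fun w => (A.outProb (X w) v : ℂ)) = ∑ j,
      if A.out j = v then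
        star (fun w => A.finalState (X w) j) * fun w => A.finalState (X w) j
      else fun _ => 0 := by
    ext w
    rw [QAlg.outProb, Finset.sum_apply]
    push_cast
    refine Finset.sum_congr rfl fun j _ => ?_
    split_ifs
    · exact_mod_cast (Complex.conj_mul' (A.finalState (X w) j)).symm
    · rfl
  rw [heq]
  refine Submodule.sum_mem _ fun j _ => ?_
  split_ifs
  · have hj := qProd_mulVec_mem_juntaSpan hX A A.T j
    exact mul_mem_juntaSpan (star_mem_juntaSpan hj) hj
  · exact const_mem_juntaSpan _ _

/- Twice the number of queries bounds the degree of the acceptance probability, and parity is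
uncorrelated with every polynomial of degree less than `k`. -/
lemma le_two_mul_of_outProb_parity (hX : ∀ i, ∃ h, DependsOn (fun w => X w i) {h})
    (A : QAlg ι fun _ => 2)
    (hA : ∀ w, 2 / 3 ≤ A.outProb (X w) (some (decide (∑ h, w h = 0)))) : k ≤ 2 * A.T := by
  by_contra! hk
  have hmem : (fun w => (A.outProb (X w) (some true) : ℂ) - 1 / 2) ∈ juntaSpan k (A.T + A.T) :=
    Submodule.sub_mem _ (outProb_mem_juntaSpan hX A _) (const_mem_juntaSpan (1 / 2) _)
  have hzero : ∑ w : Vec k, (if ∑ h, w h = 0 then (1 : ℝ) else -1) *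
      (A.outProb (X w) (some true) - 1 / 2) = 0 := by
    rw [← Complex.ofReal_eq_zero, ← sum_paritySign_mul_of_mem_juntaSpan (by omega) hmem]
    push_cast
    refine Finset.sum_congr rfl fun w _ => ?_
    rw [paritySign]
    split_ifs <;> norm_num
  refine absurd hzero (ne_of_gt (Finset.sum_pos (fun w _ => ?_) Finset.univ_nonempty))
  have hcorrect := hA w
  have htotal := A.outProb_true_add_outProb_false_le (X w)
  by_cases hw : ∑ h, w h = 0
  · simp only [hw, decide_true, if_true] at hcorrect ⊢
    linarith
  · simp only [hw, decide_false, if_false] at hcorrect ⊢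
    linarith

end QuantumStates

open Classical in
theorem le_two_mul_of_isQuantumComputable_accepts {k : ℕ} (hk : 1 ≤ k) {ι : Type} [Fintype ι]
    [DecidableEq ι] {e : Position k → ι} (he : Function.Injective e) {f : PartialFn ι fun _ => 2}
    (hf : ∀ z, f z = some (decide (Accepts (z ∘ e)))) {d : ℕ} (hd : IsQuantumComputable f d) :
    k ≤ 2 * d := by
  obtain ⟨A, hAd, hA⟩ := hd
  have : Nonempty (Position k) := ⟨.inr (.inr ⟨0, by omega⟩)⟩
  let e' : ι → Position k := Function.invFun e
  have he' : e' ∘ e = id := Function.invFun_comp he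
  let b : Fin (3 * k) → Bool := fun _ => false
  let x : Fin (3 * k) → Vec k → Vec k := fun _ => id
  have hx : FollowsPattern b x := fun _ => Function.injective_id
  let ω : Hidden k := fun _ => (0, fun _ => 0)
  refine le_trans ?_ (Nat.mul_le_mul_left 2 hAd)
  refine le_two_mul_of_outProb_parity (X := fun w => certifiedInput x ω b w ∘ e') (fun i => ?_) A
    fun w => hA _ _ ?_
  · rcases hi : e' i with p | p | h
    · exact ⟨⟨0, by omega⟩, fun w w' _ => by simp only [Function.comp_apply, hi, certifiedInput]⟩
    · exact ⟨⟨0, by omega⟩, fun w w' _ => by simp only [Function.comp_apply, hi, certifiedInput]⟩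
    · exact ⟨h, fun w w' hw => by simp only [Function.comp_apply, hi, certifiedInput, hw h rfl]⟩
  · rw [hf, Function.comp_assoc, he', Function.comp_id]
    simp only [accepts_certifiedInput_iff ω hx]

/-! ### The family of functions -/

section Existence

variable {ι : Type}

lemma DTree.exists_eval_eq_of_dependsOn (S : Finset ι) {f : PartialFn ι fun _ => 2}
    (hf : DependsOn f S) :
    ∃ T : DTree ι (fun _ => 2) (Option Bool), ∀ x, T.eval x = f x := by
  classical
  induction S using Finset.induction_on generalizing f with
  | empty => exact ⟨.leaf (f 0), fun x => hf fun i hi => absurd hi (Finset.notMem_empty i)⟩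
  | insert i S _ ih =>
    have hupdate (a : Fin 2) : DependsOn (fun x => f (Function.update x i a)) S := by
      refine fun x y hxy => hf fun j hj => ?_
      by_cases hji : j = i
      · subst hji
        rw [Function.update_self, Function.update_self]
      · rw [Function.update_of_ne hji, Function.update_of_ne hji]
        exact hxy j ((Finset.mem_insert.mp hj).resolve_left hji)
    choose T hT using fun a : Fin 2 => ih (hupdate a)
    exact ⟨.node i T, fun x => by rw [DTree.eval, hT, Function.update_eq_self]⟩

lemma isRandomizedComputable_Rq [Finite ι] (f : PartialFn ι fun _ => 2) :
    IsRandomizedComputable f (Rq f) := by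
  have := Fintype.ofFinite ι
  refine Nat.sInf_mem (s := {d | IsRandomizedComputable f d}) ?_
  obtain ⟨T, hT⟩ := DTree.exists_eval_eq_of_dependsOn Finset.univ (f := f) fun x y hxy =>
    congrArg f (funext fun i => hxy i (Finset.mem_coe.mpr (Finset.mem_univ i)))
  refine ⟨T.depth, PMF.pure T, by simp, fun x b hb => ?_⟩
  rw [PMF.toOuterMeasure_pure_apply, if_pos (show T ∈ {T | T.eval x = some b} from (hT x).trans hb)]
  exact ENNReal.div_le_of_le_mul (by norm_num)

variable [Fintype ι] [DecidableEq ι]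

lemma IsQuantumComputable.Qq {f : PartialFn ι fun _ => 2} {d : ℕ} (hd : IsQuantumComputable f d) :
    IsQuantumComputable f (Qq f) :=
  Nat.sInf_mem (s := {d | IsQuantumComputable f d}) ⟨d, hd⟩

lemma isQuantumComputable_const (i : ι) (b : Bool) :
    IsQuantumComputable (fun _ => some b : PartialFn ι fun _ => 2) 0 := by
  let j : QIdx ι (fun _ => 2) 1 := (⟨i, 0⟩, 0)
  have hj : ∑ i, ‖(Pi.single j 1 : QIdx ι (fun _ => 2) 1 → ℂ) i‖ ^ 2 = 1 := by
    rw [Finset.sum_eq_single j] <;> simp +contextual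
  refine ⟨⟨0, 1, fun _ => 1, fun _ => Submonoid.one_mem _, Pi.single j 1, hj, fun _ => some b⟩,
    le_rfl, ?_⟩
  rintro x b' ⟨⟩
  simp only [QAlg.outProb, QAlg.finalState, qProd, Matrix.one_mulVec, if_true]
  rw [hj]
  norm_num

end Existence

section Family

lemma two_pow_le_card_position {k : ℕ} (hk : 1 ≤ k) : 2 ^ k ≤ Fintype.card (Position k) := by
  rw [← card_vec k]
  let g : Gadget k := (⟨0, by omega⟩, 0, ⟨0, by omega⟩)
  exact Fintype.card_le_of_injective (fun v => (.inl (g, 0, v) : Position k)) fun v v' h => by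
    simpa using h

/-- The largest parameter `k` for which the positions fit into `n` bits. -/
def level (n : ℕ) : ℕ := Nat.findGreatest (fun k => Fintype.card (Position k) ≤ n) n

lemma card_position_level_le {n : ℕ} (h : level n ≠ 0) : Fintype.card (Position (level n)) ≤ n :=
  Nat.findGreatest_of_ne_zero (P := fun k => Fintype.card (Position k) ≤ n) rfl h

lemma le_level {k n : ℕ} (hk : 1 ≤ k) (h : Fintype.card (Position k) ≤ n) : k ≤ level n :=
  Nat.le_findGreatest ((Nat.lt_two_pow_self.le.trans (two_pow_le_card_position hk)).trans h) h

open Classical in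
/-- The separating function on `n` bits: the cheat-sheet function of the largest parameter that
fits, or a constant if that parameter is less than `2`. -/
noncomputable def sepFn (n : ℕ) : PartialFn (Fin n) fun _ => 2 := fun z => some <|
  if h : 2 ≤ level n then
    decide (Accepts
      (z ∘ Fin.castLE (card_position_level_le (by omega)) ∘ Fintype.equivFin (Position (level n))))
  else false

variable {n : ℕ}

open Classical in
lemma exists_injective_sepFn_eq (h : 2 ≤ level n) :
    ∃ e : Position (level n) → Fin n, Function.Injective e ∧
      ∀ z, sepFn n z = some (decide (Accepts (z ∘ e))) :=
  ⟨_, (Fin.castLE_injective _).comp (Fintype.equivFin _).injective, fun z => by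
    rw [sepFn, dif_pos h]⟩

lemma isQuantumComputable_sepFn (h : 2 ≤ level n) :
    IsQuantumComputable (sepFn n) (5101 * (level n ^ 3 * 2 ^ level n)) := by
  obtain ⟨e, -, hf⟩ := exists_injective_sepFn_eq h
  have : Nonempty (Fin n) := ⟨e (.inr (.inr ⟨0, by omega⟩))⟩
  exact isQuantumComputable_accepts (by omega) e hf

lemma Qq_sepFn_le (h : 2 ≤ level n) : Qq (sepFn n) ≤ 5101 * (level n ^ 3 * 2 ^ level n) :=
  Nat.sInf_le (isQuantumComputable_sepFn h)

lemma level_le_two_mul_Qq_sepFn (h : 2 ≤ level n) : level n ≤ 2 * Qq (sepFn n) := by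
  obtain ⟨e, he, hf⟩ := exists_injective_sepFn_eq h
  exact le_two_mul_of_isQuantumComputable_accepts (by omega) he hf (isQuantumComputable_sepFn h).Qq

lemma Qq_sepFn_eq_zero (hn : 0 < n) (h : ¬ 2 ≤ level n) : Qq (sepFn n) = 0 := by
  have hconst : sepFn n = fun _ => some false := funext fun z => by rw [sepFn, dif_neg h]
  rw [hconst]
  exact Nat.le_zero.mp (Nat.sInf_le (isQuantumComputable_const ⟨0, hn⟩ false))

lemma two_pow_level_rpow_le (h : 2 ≤ level n) :
    ((2 : ℝ) ^ level n) ^ ((5 : ℝ) / 2) ≤ 147 * Rq (sepFn n) := by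
  obtain ⟨e, he, hf⟩ := exists_injective_sepFn_eq h
  exact rpow_le_of_isRandomizedComputable_accepts h he hf (isRandomizedComputable_Rq _)

lemma level_le_two_mul_log (h : 1 ≤ level n) : (level n : ℝ) ≤ 2 * Real.log n := by
  have hpow : (2 : ℝ) ^ level n ≤ n :=
    mod_cast (two_pow_le_card_position h).trans (card_position_level_le (by omega))
  have hlog := Real.log_le_log (by positivity) hpow
  rw [Real.log_pow] at hlog
  have htwo := Real.log_two_gt_d9
  nlinarith [(level n).cast_nonneg (α := ℝ)]

lemma level_pow_rpow_le (h : 1 ≤ level n) :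
    ((level n : ℝ) ^ 3) ^ ((5 : ℝ) / 2) ≤ 2 ^ 8 * Real.log n ^ 8 := by
  rw [← Real.rpow_natCast, ← Real.rpow_mul (by positivity)]
  calc (level n : ℝ) ^ (((3 : ℕ) : ℝ) * (5 / 2)) ≤ (level n : ℝ) ^ ((8 : ℕ) : ℝ) :=
        Real.rpow_le_rpow_of_exponent_le (by exact_mod_cast h) (by norm_num)
    _ ≤ (2 * Real.log n) ^ 8 := by
        rw [Real.rpow_natCast]
        exact pow_le_pow_left₀ (by positivity) (level_le_two_mul_log h) 8
    _ = 2 ^ 8 * Real.log n ^ 8 := mul_pow _ _ _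

lemma Qq_sepFn_rpow_le (h : 2 ≤ level n) : (Qq (sepFn n) : ℝ) ^ ((5 : ℝ) / 2) ≤
    5101 ^ ((5 : ℝ) / 2) * 2 ^ 8 * 147 * Real.log n ^ 8 * Rq (sepFn n) := by
  calc (Qq (sepFn n) : ℝ) ^ ((5 : ℝ) / 2)
      ≤ (5101 * ((level n : ℝ) ^ 3 * 2 ^ level n)) ^ ((5 : ℝ) / 2) := by
        gcongr
        exact_mod_cast Qq_sepFn_le h
    _ = 5101 ^ ((5 : ℝ) / 2) * (((level n : ℝ) ^ 3) ^ ((5 : ℝ) / 2) *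
          ((2 : ℝ) ^ level n) ^ ((5 : ℝ) / 2)) := by
        rw [Real.mul_rpow (by positivity) (by positivity),
          Real.mul_rpow (by positivity) (by positivity)]
    _ ≤ 5101 ^ ((5 : ℝ) / 2) * ((2 ^ 8 * Real.log n ^ 8) * (147 * Rq (sepFn n))) := by
        gcongr
        · exact level_pow_rpow_le (by omega)
        · exact two_pow_level_rpow_le h
    _ = _ := by ring

theorem tendsto_Qq_sepFn : Filter.Tendsto (fun n => Qq (sepFn n)) Filter.atTop Filter.atTop := by
  refine Filter.tendsto_atTop.mpr fun m => ?_
  filter_upwards [Filter.eventually_ge_atTop (Fintype.card (Position (2 * m + 2)))] with n hn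
  have hlevel := le_level (by omega) hn
  have hquantum := level_le_two_mul_Qq_sepFn (n := n) (by omega)
  omega

end Family

end QC

/-- There is a family of total Boolean functions with
`R(f) = Ω̃(Q(f)^{2.5})`. -/
theorem randomized_vs_quantum_power_two_point_five :
    ∃ f : ∀ n : ℕ, QC.PartialFn (Fin n) (fun _ => 2),
      (∀ n, QC.TotalFn (f n)) ∧
      Filter.Tendsto (fun n => QC.Qq (f n)) Filter.atTop Filter.atTop ∧
      ∃ (C : ℝ) (e : ℕ), 0 < C ∧ ∀ n : ℕ, 2 ≤ n →
        (QC.Qq (f n) : ℝ) ^ ((5 : ℝ) / 2) ≤ C * (Real.log n) ^ e * (QC.Rq (f n) : ℝ) := by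
  refine ⟨QC.sepFn, fun n x => Option.some_ne_none _, QC.tendsto_Qq_sepFn,
    5101 ^ ((5 : ℝ) / 2) * 2 ^ 8 * 147, 8, by positivity, fun n hn => ?_⟩
  by_cases h : 2 ≤ QC.level n
  · exact QC.Qq_sepFn_rpow_le h
  · have hlog : 0 ≤ Real.log n := Real.log_nonneg (by exact_mod_cast (by omega : 1 ≤ n))
    rw [QC.Qq_sepFn_eq_zero (by omega) h, Nat.cast_zero, Real.zero_rpow (by norm_num)]
    exact mul_nonneg (mul_nonneg (by positivity) (pow_nonneg hlog 8)) (Nat.cast_nonneg _)
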